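/- Let G be a (possibly infinite) graph and let T ⊆ V(G) be such that d(t) ≤ 1 for all but countably many t ∈ T, and such that there is no X ⊆ V(G)∖T for which d_G(X) is an odd natural number. Assume that for each t ∈ T there is a system 𝒫_t of pairwise edge-disjoint T-paths covering δ(t). Then there exists a system 𝒫 of pairwise edge-disjoint T-paths covering ⋃_{t∈T} δ(t). -/

import Mathlib

/-!
Common definitions: multigraphs (parallel edges allowed, no loops), walks,
paths, cuts, waves and related notions used in the statements below.
-/

universe u v

/-- A multigraph with vertex type `V` and edge type `E`: every edge is assigned
an unordered pair of *distinct* end-vertices (parallel edges allowed, no loops). -/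
structure Multigraph (V : Type u) (E : Type v) : Type (max u v) where
  inc : E → Sym2 V
  not_isDiag : ∀ e, ¬ (inc e).IsDiag

namespace Multigraph

variable {V : Type u} {E : Type v}

/-- Walks in a multigraph, recorded together with the edges they traverse. -/
inductive Walk (G : Multigraph V E) : V → V → Type (max u v)
  | nil (v : V) : Walk G v v
  | cons {u v w : V} (e : E) (he : G.inc e = s(u, v)) (p : Walk G v w) : Walk G u w

namespace Walk

variable {G : Multigraph V E}

/-- The list of vertices visited by a walk. -/
def support : ∀ {u w : V}, G.Walk u w → List V
  | _, _, .nil v => [v]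
  | u, _, .cons _ _ p => u :: p.support

/-- The list of edges traversed by a walk. -/
def edges : ∀ {u w : V}, G.Walk u w → List E
  | _, _, .nil _ => []
  | _, _, .cons e _ p => e :: p.edges

end Walk

/-- `δ_G(v)`: the set of edges incident with the vertex `v`. -/
def inci (G : Multigraph V E) (v : V) : Set E := {e | v ∈ G.inc e}

/-- `δ_G(X)`: the set of edges with exactly one end-vertex in `X`. -/
def cut (G : Multigraph V E) (X : Set V) : Set E :=
  {e | ∃ x y, G.inc e = s(x, y) ∧ x ∈ X ∧ y ∉ X}

/-- Connectedness of a multigraph. -/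
def Connected (G : Multigraph V E) : Prop := ∀ u v : V, Nonempty (G.Walk u v)

/-- A `T`-path: a path connecting two distinct vertices of `T`
with no internal vertex in `T`. -/
structure TPath (G : Multigraph V E) (T : Set V) : Type (max u v) where
  first : V
  last : V
  walk : G.Walk first last
  first_mem : first ∈ T
  last_mem : last ∈ T
  ne : first ≠ last
  support_nodup : walk.support.Nodup
  internal : ∀ x ∈ walk.support, x ∈ T → x = first ∨ x = last

/-- A system of pairwise edge-disjoint `T`-paths. -/
def TPathDisjoint (G : Multigraph V E) {T : Set V} (P : Set (G.TPath T)) : Prop :=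
  ∀ p ∈ P, ∀ q ∈ P, p ≠ q → ∀ e, e ∈ p.walk.edges → e ∉ q.walk.edges

/-- An `st`-path: a path from `s` to `t` (no internal vertex is `s` or `t`,
which is automatic as the vertices of a path are distinct). -/
structure STPath (G : Multigraph V E) (s t : V) : Type (max u v) where
  walk : G.Walk s t
  support_nodup : walk.support.Nodup

/-- A system of pairwise edge-disjoint `st`-paths. -/
def STPathDisjoint (G : Multigraph V E) {s t : V} (P : Set (G.STPath s t)) : Prop :=
  ∀ p ∈ P, ∀ q ∈ P, p ≠ q → ∀ e, e ∈ p.walk.edges → e ∉ q.walk.edges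

/-- A nontrivial path starting at `s`. -/
structure SPath (G : Multigraph V E) (s : V) : Type (max u v) where
  last : V
  walk : G.Walk s last
  support_nodup : walk.support.Nodup
  edges_ne_nil : walk.edges ≠ []

/-- A system of pairwise edge-disjoint paths starting at `s`. -/
def SPathDisjoint (G : Multigraph V E) {s : V} (W : Set (G.SPath s)) : Prop :=
  ∀ p ∈ W, ∀ q ∈ W, p ≠ q → ∀ e, e ∈ p.walk.edges → e ∉ q.walk.edges

/-- The set of last edges of a system of paths starting at `s`. -/
def lastEdges (G : Multigraph V E) {s : V} (W : Set (G.SPath s)) : Set E :=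
  {e | ∃ p ∈ W, p.walk.edges.getLast? = some e}

/-- `C` is a cut separating `A` from `B`. -/
def SepCut (G : Multigraph V E) (A B : Set V) (C : Set E) : Prop :=
  ∃ X : Set V, A ⊆ X ∧ (∀ b ∈ B, b ∉ X) ∧ C = G.cut X

/-- `C` is a `⊆`-minimal cut separating `A` from `B`. -/
def IsMinSepCut (G : Multigraph V E) (A B : Set V) (C : Set E) : Prop :=
  G.SepCut A B C ∧ ∀ D : Set E, G.SepCut A B D → D ⊆ C → D = C

/-- An `s`-`B`-wave: a system of pairwise edge-disjoint paths starting at `s`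
whose set of last edges is a `⊆`-minimal cut separating `s` from `B`. -/
def IsWave (G : Multigraph V E) (s : V) (B : Set V) (W : Set (G.SPath s)) : Prop :=
  G.SPathDisjoint W ∧ G.IsMinSepCut {s} B (G.lastEdges W)

/-- An Erdős–Menger `st`-cut: an `st`-cut which is orthogonal to some system of
pairwise edge-disjoint `st`-paths, i.e. it consists of exactly one edge chosen
from each path of the system. -/
def IsEMCut (G : Multigraph V E) (s t : V) (C : Set E) : Prop :=
  (∃ X : Set V, s ∈ X ∧ t ∉ X ∧ C = G.cut X) ∧
  ∃ P : Set (G.STPath s t), G.STPathDisjoint P ∧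
    (∀ p ∈ P, ∃! e, e ∈ C ∧ e ∈ p.walk.edges) ∧
    (∀ e ∈ C, ∃ p ∈ P, e ∈ p.walk.edges)

/-- The order `≼` on `st`-cuts: the `s`-side of `C` is contained in the
`s`-side of `D` (in a connected graph the `s`-side is unique). -/
def CutLE (G : Multigraph V E) (s t : V) (C D : Set E) : Prop :=
  ∃ X Y : Set V, s ∈ X ∧ t ∉ X ∧ C = G.cut X ∧ s ∈ Y ∧ t ∉ Y ∧ D = G.cut Y ∧ X ⊆ Y

/-- A cut of the form `C_W` for some `st`-wave `W`. -/
def IsWaveCut (G : Multigraph V E) (s t : V) (C : Set E) : Prop :=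
  ∃ W : Set (G.SPath s), G.IsWave s {t} W ∧ G.lastEdges W = C

/-- Deletion of a set of edges. -/
def deleteEdges (G : Multigraph V E) (F : Set E) : Multigraph V {e : E // e ∉ F} where
  inc e := G.inc e.1
  not_isDiag e := G.not_isDiag e.1

open Classical in
/-- Contraction of the vertex set `X` to the vertex `s` (edges inside `X` are
deleted, edges leaving `X` are redirected to `s`). -/
noncomputable def contract (G : Multigraph V E) (X : Set V) (s : V) :
    Multigraph V {e : E // ¬ (Sym2.map (fun v => if v ∈ X then s else v) (G.inc e)).IsDiag} where
  inc e := Sym2.map (fun v => if v ∈ X then s else v) (G.inc e.1)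
  not_isDiag e := e.2

/-- Reachability inside a set `S` of vertices. -/
def ReachableIn (G : Multigraph V E) (S : Set V) (x y : V) : Prop :=
  ∃ p : G.Walk x y, ∀ z ∈ p.support, z ∈ S

/-- `Y` is (the vertex set of) a connected component of the subgraph of `G`
induced by `S`. -/
def IsComponentOf (G : Multigraph V E) (Y S : Set V) : Prop :=
  Y.Nonempty ∧ Y ⊆ S ∧ ∀ x ∈ Y, ∀ y ∈ S, (G.ReachableIn S x y ↔ y ∈ Y)

/-- A cycle in a multigraph (a closed walk with distinct edges whose
vertices are distinct except that the first one equals the last one). -/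
structure Cycle (G : Multigraph V E) : Type (max u v) where
  base : V
  walk : G.Walk base base
  edges_ne_nil : walk.edges ≠ []
  edges_nodup : walk.edges.Nodup
  support_tail_nodup : walk.support.tail.Nodup

/-- A graph is Eulerian if its edge set can be partitioned into
edge sets of cycles. -/
def IsEulerian (G : Multigraph V E) : Prop :=
  ∃ C : Set G.Cycle,
    (∀ c ∈ C, ∀ d ∈ C, c ≠ d → ∀ e, e ∈ c.walk.edges → e ∉ d.walk.edges) ∧
    ∀ e : E, ∃ c ∈ C, e ∈ c.walk.edges

/-- A `T`-partition: a family `{A t : t ∈ T}` of pairwise disjoint vertex sets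
with `A t ∩ T = {t}`. -/
def IsTPartition (T : Set V) (A : V → Set V) : Prop :=
  (∀ t ∈ T, A t ∩ T = {t}) ∧
  ∀ t₁ ∈ T, ∀ t₂ ∈ T, t₁ ≠ t₂ → Disjoint (A t₁) (A t₂)

end Multigraph

/-!
Linkedness of the terminals survives the deletion of suitable edge sets of `T`-paths. If `e = tv`
is an edge at a terminal and `v` lies in a tight set `X` around a terminal `s`, meaning that some
linkage of `s` uses the whole cut of `X`, then `e` is continued backwards along that linkage to
`s`; the linkages of the other terminals only need to be rerouted along the linkage of `s` inside
`X`. If `v` lies in no tight set, then `e` and the next edge of a path through `e` can be split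
off at `v`, since an augmenting walk starting at `v` either repairs a linkage or produces a tight
set containing `v`. The parity condition enters when a linkage misses a single edge of the cut of
`X`: were it impossible to cover that edge as well, finitely many edges would form an odd cut.

Iterating this covers countably many edges at terminals. In general, after the contraction of `T`
all cuts are infinite or even, so that the edges decompose into countable sets with the same
property. Grouping countable pieces with the paths of the linkages yields countable subgraphs that
inherit all assumptions and whose path systems can be united.
-/

namespace LovaszCherkassky

variable {V : Type u} {E : Type v}

/-! ### Walks as lists of steps -/

section Walks

/-- Walks from `x` to `y`, given by the list of their steps, each an edge with the vertex it leads
to. Loops are never traversed, so that turning an edge into a loop amounts to deleting it. -/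
def IsWalk (inc : E → Sym2 V) : V → List (E × V) → V → Prop
  | x, [], y => x = y
  | x, (e, z) :: l, y => inc e = s(x, z) ∧ x ≠ z ∧ IsWalk inc z l y

/-- The edges traversed by a list of steps. -/
def edges (l : List (E × V)) : List E := l.map Prod.fst

/-- The vertices entered by a list of steps; the starting vertex does not count. -/
def heads (l : List (E × V)) : List V := l.map Prod.snd

/-- The darts (tail, edge, head) of a list of steps starting at a given vertex. -/
def darts : V → List (E × V) → List (V × E × V)
  | _, [] => []
  | x, (e, z) :: l => (x, e, z) :: darts z l

/-- The reversal of a list of steps starting at a given vertex. -/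
def reverse : V → List (E × V) → List (E × V)
  | _, [] => []
  | x, (e, z) :: l => reverse z l ++ [(e, x)]

/-- The edges with exactly one end-vertex in `X`. -/
def cut (inc : E → Sym2 V) (X : Set V) : Set E :=
  {e | ∃ x y, inc e = s(x, y) ∧ x ∈ X ∧ y ∉ X}

variable {inc inc' : E → Sym2 V} {x y y' c d : V} {e : E} {l m : List (E × V)} {X : Set V}

@[simp] theorem edges_nil : edges ([] : List (E × V)) = [] := rfl

@[simp] theorem edges_cons (a : E × V) (l : List (E × V)) : edges (a :: l) = a.1 :: edges l := rfl

@[simp] theorem edges_append (l m : List (E × V)) : edges (l ++ m) = edges l ++ edges m :=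
  List.map_append

@[simp] theorem heads_nil : heads ([] : List (E × V)) = [] := rfl

@[simp] theorem heads_cons (a : E × V) (l : List (E × V)) : heads (a :: l) = a.2 :: heads l := rfl

@[simp] theorem heads_append (l m : List (E × V)) : heads (l ++ m) = heads l ++ heads m :=
  List.map_append

@[simp] theorem darts_nil (x : V) : darts x ([] : List (E × V)) = [] := rfl

@[simp] theorem darts_cons (x : V) (a : E × V) (l : List (E × V)) :
    darts x (a :: l) = (x, a.1, a.2) :: darts a.2 l := rfl

@[simp] theorem reverse_nil (x : V) : reverse x ([] : List (E × V)) = [] := rfl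

@[simp] theorem reverse_cons (x : V) (a : E × V) (l : List (E × V)) :
    reverse x (a :: l) = reverse a.2 l ++ [(a.1, x)] := rfl

@[simp] theorem isWalk_nil : IsWalk inc x [] y ↔ x = y := Iff.rfl

@[simp] theorem isWalk_cons {a : E × V} :
    IsWalk inc x (a :: l) y ↔ inc a.1 = s(x, a.2) ∧ x ≠ a.2 ∧ IsWalk inc a.2 l y := Iff.rfl

theorem isWalk_append : IsWalk inc x (l ++ m) y ↔ ∃ z, IsWalk inc x l z ∧ IsWalk inc z m y := by
  induction l generalizing x with
  | nil => simp
  | cons a l ih => simp [ih, and_assoc]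

theorem IsWalk.append {z : V} (h : IsWalk inc x l z) (h' : IsWalk inc z m y) :
    IsWalk inc x (l ++ m) y :=
  isWalk_append.2 ⟨z, h, h'⟩

theorem IsWalk.unique (h : IsWalk inc x l y) (h' : IsWalk inc x l y') : y = y' := by
  induction l generalizing x with
  | nil => exact h.symm.trans h'
  | cons a l ih => exact ih h.2.2 h'.2.2

theorem IsWalk.congr (hinc : ∀ g ∈ edges l, inc g = inc' g) (h : IsWalk inc x l y) :
    IsWalk inc' x l y := by
  induction l generalizing x with
  | nil => exact h
  | cons a l ih =>
    exact ⟨hinc a.1 (by simp) ▸ h.1, h.2.1, ih (fun g hg => hinc g (by simp [hg])) h.2.2⟩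

theorem IsWalk.darts_append (h : IsWalk inc x l y) :
    darts x (l ++ m) = darts x l ++ darts y m := by
  induction l generalizing x with
  | nil => cases h; rfl
  | cons a l ih => simp [ih h.2.2]

theorem IsWalk.mem_darts_iff (h : IsWalk inc x l y) :
    (c, e, d) ∈ darts x l ↔
      ∃ l₁ l₂, l = l₁ ++ (e, d) :: l₂ ∧ IsWalk inc x l₁ c ∧ IsWalk inc d l₂ y := by
  constructor
  · intro hm
    induction l generalizing x with
    | nil => simp at hm
    | cons a l ih =>
      rcases List.mem_cons.1 hm with hm | hm
      · cases hm
        exact ⟨[], l, rfl, rfl, h.2.2⟩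
      · obtain ⟨l₁, l₂, rfl, h₁, h₂⟩ := ih h.2.2 hm
        exact ⟨a :: l₁, l₂, rfl, ⟨h.1, h.2.1, h₁⟩, h₂⟩
  · rintro ⟨l₁, l₂, rfl, h₁, -⟩
    simp [h₁.darts_append]

theorem IsWalk.inc_of_mem_darts (h : IsWalk inc x l y) (hm : (c, e, d) ∈ darts x l) :
    inc e = s(c, d) ∧ c ≠ d := by
  obtain ⟨l₁, l₂, rfl, h₁, -⟩ := h.mem_darts_iff.1 hm
  obtain ⟨z, h₁', h₂⟩ := isWalk_append.1 h
  obtain rfl := h₁.unique h₁'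
  exact ⟨h₂.1, h₂.2.1⟩

theorem mem_edges_iff (x : V) : e ∈ edges l ↔ ∃ c d, (c, e, d) ∈ darts x l := by
  induction l generalizing x with
  | nil => simp
  | cons a l ih =>
    simp only [edges_cons, List.mem_cons, darts_cons, Prod.mk.injEq, ih a.2]
    constructor
    · rintro (rfl | ⟨c, d, h⟩)
      · exact ⟨x, a.2, .inl ⟨rfl, rfl, rfl⟩⟩
      · exact ⟨c, d, .inr h⟩
    · rintro ⟨c, d, ⟨-, rfl, -⟩ | h⟩
      · exact .inl rfl
      · exact .inr ⟨c, d, h⟩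

theorem edge_mem_of_mem_darts (h : (c, e, d) ∈ darts x l) : e ∈ edges l :=
  (mem_edges_iff x).2 ⟨c, d, h⟩

theorem mem_heads_iff (x : V) : d ∈ heads l ↔ ∃ c e, (c, e, d) ∈ darts x l := by
  induction l generalizing x with
  | nil => simp
  | cons a l ih =>
    simp only [heads_cons, List.mem_cons, darts_cons, Prod.mk.injEq, ih a.2]
    constructor
    · rintro (rfl | ⟨c, g, h⟩)
      · exact ⟨x, a.1, .inl ⟨rfl, rfl, rfl⟩⟩
      · exact ⟨c, g, .inr h⟩
    · rintro ⟨c, g, ⟨-, -, rfl⟩ | h⟩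
      · exact .inl rfl
      · exact .inr ⟨c, g, h⟩

theorem head_mem_of_mem_darts (h : (c, e, d) ∈ darts x l) : d ∈ heads l :=
  (mem_heads_iff x).2 ⟨c, e, h⟩

theorem tail_mem_of_mem_darts (h : (c, e, d) ∈ darts x l) : c = x ∨ c ∈ heads l := by
  induction l generalizing x with
  | nil => simp at h
  | cons a l ih =>
    rcases List.mem_cons.1 h with h | h
    · cases h
      exact .inl rfl
    · rcases ih h with rfl | h <;> simp [*]

theorem IsWalk.end_mem (h : IsWalk inc x l y) : y = x ∨ y ∈ heads l := by
  induction l generalizing x with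
  | nil => exact .inl h.symm
  | cons a l ih => rcases ih h.2.2 with h | h <;> simp [h]

theorem IsWalk.exists_dart_of_mem_heads (h : IsWalk inc x l y) (hd : d ∈ heads l) :
    d = y ∨ ∃ e z, (d, e, z) ∈ darts x l := by
  obtain ⟨c, e, hm⟩ := (mem_heads_iff x).1 hd
  obtain ⟨l₁, l₂, rfl, h₁, h₂⟩ := h.mem_darts_iff.1 hm
  cases l₂ with
  | nil => exact .inl h₂
  | cons a l₂ => exact .inr ⟨a.1, a.2, by simp [h₁.darts_append]⟩

theorem edges_reverse (x : V) (l : List (E × V)) : edges (reverse x l) = (edges l).reverse := by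
  induction l generalizing x with
  | nil => rfl
  | cons a l ih => simp [ih]

theorem IsWalk.reverse (h : IsWalk inc x l y) : IsWalk inc y (reverse x l) x := by
  induction l generalizing x with
  | nil => exact h.symm
  | cons a l ih => exact (ih h.2.2).append ⟨h.1.trans Sym2.eq_swap, h.2.1.symm, rfl⟩

theorem IsWalk.mem_darts_reverse (h : IsWalk inc x l y) :
    (c, e, d) ∈ darts y (LovaszCherkassky.reverse x l) ↔ (d, e, c) ∈ darts x l := by
  induction l generalizing x with
  | nil => simp
  | cons a l ih =>
    rw [reverse_cons, h.2.2.reverse.darts_append, List.mem_append, ih h.2.2]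
    simp only [darts_cons, darts_nil, List.mem_cons, Prod.mk.injEq]
    tauto

theorem dart_unique (hn : (edges l).Nodup) {c' d' : V} (h : (c, e, d) ∈ darts x l)
    (h' : (c', e, d') ∈ darts x l) : c = c' ∧ d = d' := by
  induction l generalizing x with
  | nil => simp at h
  | cons a l ih =>
    rw [edges_cons, List.nodup_cons] at hn
    have hne : ∀ {z z'}, (z, e, z') ∈ darts a.2 l → e ≠ a.1 :=
      fun hm he => hn.1 (he ▸ edge_mem_of_mem_darts hm)
    simp only [darts_cons, List.mem_cons, Prod.mk.injEq] at h h'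
    rcases h with ⟨rfl, he, rfl⟩ | h <;> rcases h' with ⟨rfl, he', rfl⟩ | h'
    · exact ⟨rfl, rfl⟩
    · exact (hne h' he).elim
    · exact (hne h he').elim
    · exact ih hn.2 h h'

theorem mem_cut_iff (h : inc e = s(x, y)) :
    e ∈ cut inc X ↔ (x ∈ X ∧ y ∉ X) ∨ (y ∈ X ∧ x ∉ X) := by
  constructor
  · rintro ⟨a, b, hab, ha, hb⟩
    rcases Sym2.eq_iff.1 (h.symm.trans hab) with ⟨rfl, rfl⟩ | ⟨rfl, rfl⟩
    exacts [.inl ⟨ha, hb⟩, .inr ⟨ha, hb⟩]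
  · rintro (⟨hx, hy⟩ | ⟨hy, hx⟩)
    exacts [⟨x, y, h, hx, hy⟩, ⟨y, x, h.trans Sym2.eq_swap, hy, hx⟩]

theorem mem_cut_singleton_iff : e ∈ cut inc {x} ↔ ∃ y, inc e = s(x, y) ∧ y ≠ x := by
  constructor
  · rintro ⟨a, b, hab, rfl, hb⟩
    exact ⟨b, hab, hb⟩
  · rintro ⟨y, h, hy⟩
    exact ⟨x, y, h, rfl, hy⟩

theorem mem_cut_congr (h : inc e = inc' e) : e ∈ cut inc X ↔ e ∈ cut inc' X := by
  simp only [cut, Set.mem_ofPred_eq, h]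

theorem IsWalk.exists_path (h : IsWalk inc x l y) :
    ∃ l', IsWalk inc x l' y ∧ (∀ d ∈ darts x l', d ∈ darts x l) ∧ (x :: heads l').Nodup := by
  induction l generalizing x with
  | nil => exact ⟨[], h, by simp, by simp⟩
  | cons a l ih =>
    obtain ⟨l', hW, hsub, hn⟩ := ih h.2.2
    by_cases hx : x ∈ a.2 :: heads l'
    · obtain ⟨c, g, hd⟩ := (mem_heads_iff a.2).1 ((List.mem_cons.1 hx).resolve_left h.2.1)
      obtain ⟨l₁, l₂, rfl, h₁, h₂⟩ := hW.mem_darts_iff.1 hd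
      refine ⟨l₂, h₂, fun d hd => List.mem_cons_of_mem _ (hsub d ?_), ?_⟩
      · simp [h₁.darts_append, hd]
      · rw [heads_append, ← List.cons_append] at hn
        exact hn.of_append_right
    · refine ⟨a :: l', ⟨h.1, h.2.1, hW⟩, fun d hd => ?_, List.nodup_cons.2 ⟨hx, hn⟩⟩
      exact List.mem_cons.2 ((List.mem_cons.1 hd).imp_right (hsub d))

theorem IsWalk.nodup_edges (h : IsWalk inc x l y) (hn : (x :: heads l).Nodup) :
    (edges l).Nodup := by
  induction l generalizing x with
  | nil => simp
  | cons a l ih =>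
    rw [heads_cons, List.nodup_cons] at hn
    refine List.nodup_cons.2 ⟨fun hm => hn.1 ?_, ih h.2.2 hn.2⟩
    obtain ⟨c, d, hd⟩ := (mem_edges_iff a.2).1 hm
    rcases Sym2.eq_iff.1 (h.1.symm.trans (h.2.2.inc_of_mem_darts hd).1) with ⟨rfl, -⟩ | ⟨rfl, -⟩
    · exact List.mem_cons.2 (tail_mem_of_mem_darts hd)
    · exact List.mem_cons_of_mem _ (head_mem_of_mem_darts hd)

theorem IsWalk.exists_trail (h : IsWalk inc x l y) :
    ∃ l', IsWalk inc x l' y ∧ (∀ d ∈ darts x l', d ∈ darts x l) ∧ (edges l').Nodup := by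
  obtain ⟨l', hW, hsub, hn⟩ := h.exists_path
  exact ⟨l', hW, hsub, hW.nodup_edges hn⟩

theorem IsWalk.exists_prefix (h : IsWalk inc x l y) (hy : y ∈ X) :
    ∃ l₁ l₂ z, l = l₁ ++ l₂ ∧ z ∈ X ∧ IsWalk inc x l₁ z ∧
      ∀ c g d, (c, g, d) ∈ darts x l₁ → c ∉ X := by
  induction l generalizing x with
  | nil => exact ⟨[], [], y, rfl, hy, h, by simp⟩
  | cons a l ih =>
    by_cases hx : x ∈ X
    · exact ⟨[], a :: l, x, rfl, hx, rfl, by simp⟩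
    · obtain ⟨l₁, l₂, z, rfl, hz, hW, hd⟩ := ih h.2.2
      refine ⟨a :: l₁, l₂, z, rfl, hz, ⟨h.1, h.2.1, hW⟩, fun c g d hm => ?_⟩
      rcases List.mem_cons.1 hm with hm | hm
      · cases hm; exact hx
      · exact hd c g d hm

theorem notMem_of_no_entry (hx : x ∉ X)
    (h : ∀ c e d, (c, e, d) ∈ darts x l → c ∉ X → d ∉ X) (hm : (c, e, d) ∈ darts x l) :
    c ∉ X ∧ d ∉ X := by
  induction l generalizing x with
  | nil => simp at hm
  | cons a l ih =>
    have ha : a.2 ∉ X := h x a.1 a.2 (by simp) hx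
    rcases List.mem_cons.1 hm with hm | hm
    · cases hm
      exact ⟨hx, ha⟩
    · exact ih ha (fun c e d hd => h c e d (List.mem_cons_of_mem _ hd)) hm

end Walks

/-! ### Fans and augmenting walks -/

section Fans

/-- A fan at `s`: pairwise edge-disjoint trails, one starting with each edge `a` at `s` and ending
in the prescribed set `D a`. The values of `p` at edges not incident with `s` are irrelevant. -/
structure IsFan (inc : E → Sym2 V) (s : V) (D : E → Set V) (p : E → List (E × V)) : Prop where
  exists_cons : ∀ a ∈ cut inc {s}, ∃ z l, p a = (a, z) :: l
  exists_end : ∀ a ∈ cut inc {s}, ∃ b ∈ D a, IsWalk inc s (p a) b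
  nodup : ∀ a ∈ cut inc {s}, (edges (p a)).Nodup
  eq_of_mem : ∀ a ∈ cut inc {s}, ∀ a' ∈ cut inc {s}, ∀ g, g ∈ edges (p a) → g ∈ edges (p a') →
    a = a'

/-- The darts traversed by the members of a fan at `s`. -/
def usedDarts (inc : E → Sym2 V) (s : V) (p : E → List (E × V)) : Set (V × E × V) :=
  {d | ∃ a ∈ cut inc {s}, d ∈ darts s (p a)}

/-- A fan saturates `X` if it uses every edge of the cut of `X`, always in the direction out of
`X`. -/
structure Saturates (inc : E → Sym2 V) (s : V) (p : E → List (E × V)) (X : Set V) : Prop where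
  covers : ∀ g ∈ cut inc X, ∃ a ∈ cut inc {s}, g ∈ edges (p a)
  no_entry : ∀ c g d, (c, g, d) ∈ usedDarts inc s p → c ∉ X → d ∉ X

variable {inc inc' : E → Sym2 V} {s v x y c d c' d' : V} {a g : E} {B X C : Set V}
  {D D' : E → Set V} {p p' : E → List (E × V)} {l m : List (E × V)}

theorem mem_cut_singleton_left (h : inc g = s(x, y)) (hne : x ≠ y) : g ∈ cut inc {x} :=
  mem_cut_singleton_iff.2 ⟨y, h, hne.symm⟩

theorem mem_cut_singleton_right (h : inc g = s(x, y)) (hne : x ≠ y) : g ∈ cut inc {y} :=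
  mem_cut_singleton_iff.2 ⟨x, h.trans Sym2.eq_swap, hne⟩

theorem usedDarts_update_subset [DecidableEq E] {S : Set (V × E × V)}
    (hp : usedDarts inc s p ⊆ S) (hm : ∀ d ∈ darts s m, d ∈ S) :
    usedDarts inc s (Function.update p a m) ⊆ S := by
  rintro d ⟨b, hb, hd⟩
  rcases eq_or_ne b a with rfl | hne
  · rw [Function.update_self] at hd
    exact hm d hd
  · rw [Function.update_of_ne hne] at hd
    exact hp ⟨b, hb, hd⟩

namespace IsFan

theorem mono (h : IsFan inc s D p) (hD : ∀ a ∈ cut inc {s}, D a ⊆ D' a) : IsFan inc s D' p where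
  __ := h
  exists_end a ha := (h.exists_end a ha).imp fun _ hb => ⟨hD a ha hb.1, hb.2⟩

theorem self_mem (h : IsFan inc s D p) (ha : a ∈ cut inc {s}) : a ∈ edges (p a) := by
  obtain ⟨z, l, hp⟩ := h.exists_cons a ha
  simp [hp]

theorem eq_of_mem_cut (h : IsFan inc s D p) (ha : a ∈ cut inc {s}) (hg : g ∈ cut inc {s})
    (hm : g ∈ edges (p a)) : a = g :=
  h.eq_of_mem a ha g hg g hm (h.self_mem hg)

theorem tail_eq (h : IsFan inc s D p) (hm : (c, g, d) ∈ usedDarts inc s p)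
    (hg : g ∈ cut inc {s}) : c = s := by
  obtain ⟨a, ha, hm⟩ := hm
  obtain rfl := h.eq_of_mem_cut ha hg (edge_mem_of_mem_darts hm)
  obtain ⟨z, l, hp⟩ := h.exists_cons a ha
  exact (dart_unique (h.nodup a ha) hm (show (s, a, z) ∈ darts s (p a) by simp [hp])).1

theorem inc_of_mem_usedDarts (h : IsFan inc s D p) (hm : (c, g, d) ∈ usedDarts inc s p) :
    inc g = s(c, d) ∧ c ≠ d := by
  obtain ⟨a, ha, hm⟩ := hm
  obtain ⟨b, -, hW⟩ := h.exists_end a ha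
  exact hW.inc_of_mem_darts hm

theorem usedDarts_unique (h : IsFan inc s D p) (h₁ : (c, g, d) ∈ usedDarts inc s p)
    (h₂ : (c', g, d') ∈ usedDarts inc s p) : c = c' ∧ d = d' := by
  obtain ⟨a, ha, h₁⟩ := h₁
  obtain ⟨a', ha', h₂⟩ := h₂
  obtain rfl := h.eq_of_mem a ha a' ha' g (edge_mem_of_mem_darts h₁) (edge_mem_of_mem_darts h₂)
  exact dart_unique (h.nodup a ha) h₁ h₂

theorem saturates_singleton (h : IsFan inc s D p) : Saturates inc s p {s} where
  covers g hg := ⟨g, hg, h.self_mem hg⟩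
  no_entry c g d hm hc hd := by
    obtain ⟨hg, hne⟩ := h.inc_of_mem_usedDarts hm
    obtain rfl : d = s := hd
    exact hne (h.tail_eq hm (mem_cut_singleton_right hg hne))

theorem replace [DecidableEq E] (h : IsFan inc s D p) (hs : ∀ b ∈ cut inc' {s}, b ≠ a →
      b ∈ cut inc {s} ∧ ∀ g ∈ edges (p b), inc g = inc' g)
    (hm : ∃ z l, m = (a, z) :: l) (hW : ∃ b ∈ C, IsWalk inc' s m b) (hn : (edges m).Nodup)
    (hd : ∀ b ∈ cut inc' {s}, b ≠ a → ∀ g ∈ edges m, g ∉ edges (p b)) :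
    IsFan inc' s (Function.update D a C) (Function.update p a m) where
  exists_cons b hb := by
    rcases eq_or_ne b a with rfl | hne
    · simpa using hm
    · simpa [hne] using h.exists_cons b (hs b hb hne).1
  exists_end b hb := by
    rcases eq_or_ne b a with rfl | hne
    · simpa using hW
    · obtain ⟨c, hc, hW⟩ := h.exists_end b (hs b hb hne).1
      exact ⟨c, by simpa [hne] using hc, by simpa [hne] using hW.congr (hs b hb hne).2⟩
  nodup b hb := by
    rcases eq_or_ne b a with rfl | hne
    · simpa using hn
    · simpa [hne] using h.nodup b (hs b hb hne).1
  eq_of_mem b hb b' hb' g hg hg' := by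
    rcases eq_or_ne b a with rfl | hne <;> rcases eq_or_ne b' b with rfl | hne'
    · rfl
    · simp only [Function.update_self, Function.update_of_ne hne'] at hg hg'
      exact (hd b' hb' hne' g hg hg').elim
    · rfl
    · rw [Function.update_of_ne hne] at hg
      rcases eq_or_ne b' a with rfl | hne''
      · rw [Function.update_self] at hg'
        exact (hd b hb hne g hg' hg).elim
      · rw [Function.update_of_ne hne''] at hg'
        exact h.eq_of_mem b (hs b hb hne).1 b' (hs b' hb' hne'').1 g hg hg'

theorem update [DecidableEq E] (h : IsFan inc s D p) (hm : ∃ z l, m = (a, z) :: l)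
    (hW : ∃ b ∈ C, IsWalk inc s m b) (hn : (edges m).Nodup)
    (hd : ∀ a' ∈ cut inc {s}, a' ≠ a → ∀ g ∈ edges m, g ∉ edges (p a')) :
    IsFan inc s (Function.update D a C) (Function.update p a m) :=
  h.replace (fun _ hb _ => ⟨hb, fun _ _ => rfl⟩) hm hW hn hd

theorem exists_cons_of_append (h : IsFan inc s D p) (ha : a ∈ cut inc {s}) (hs : s ∉ C)
    (hp : p a = l ++ m) (hW : ∃ b ∈ C, IsWalk inc s l b) : ∃ z l', l = (a, z) :: l' := by
  obtain ⟨z, k, hz⟩ := h.exists_cons a ha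
  cases l with
  | nil =>
    obtain ⟨b, hb, rfl⟩ := hW
    exact (hs hb).elim
  | cons q l' =>
    rw [hz, List.cons_append, List.cons.injEq] at hp
    exact ⟨z, l', by rw [← hp.1]⟩

theorem of_prefix (h : IsFan inc s D p) (hs : ∀ a ∈ cut inc {s}, s ∉ D' a)
    (hp : ∀ a ∈ cut inc {s}, p' a <+: p a) (hW : ∀ a ∈ cut inc {s}, ∃ b ∈ D' a,
      IsWalk inc s (p' a) b) : IsFan inc s D' p' := by
  have hsub : ∀ a ∈ cut inc {s}, edges (p' a) <+: edges (p a) := fun a ha => (hp a ha).map _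
  refine ⟨fun a ha => ?_, hW, fun a ha => (h.nodup a ha).sublist (hsub a ha).sublist,
    fun a ha a' ha' g hg hg' => h.eq_of_mem a ha a' ha' g ((hsub a ha).subset hg)
      ((hsub a' ha').subset hg')⟩
  obtain ⟨m, hm⟩ := hp a ha
  exact h.exists_cons_of_append ha (hs a ha) hm.symm (hW a ha)

theorem exists_truncation (h : IsFan inc s (fun _ => B) p) (hs : s ∉ B) :
    ∃ q, IsFan inc s (fun _ => B) q ∧ (∀ a ∈ cut inc {s}, q a <+: p a) ∧
      ∀ {c g d}, (c, g, d) ∈ usedDarts inc s q → c ∉ B := by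
  have key : ∀ a ∈ cut inc {s}, ∃ l, l <+: p a ∧ (∃ b ∈ B, IsWalk inc s l b) ∧
      ∀ c g d, (c, g, d) ∈ darts s l → c ∉ B := by
    intro a ha
    obtain ⟨b, hb, hW⟩ := h.exists_end a ha
    obtain ⟨l₁, l₂, z, hl, hz, hW₁, hd⟩ := hW.exists_prefix hb
    exact ⟨l₁, ⟨l₂, hl.symm⟩, ⟨z, hz, hW₁⟩, hd⟩
  choose! q hq using key
  refine ⟨q, h.of_prefix (fun _ _ => hs) (fun a ha => (hq a ha).1) fun a ha => (hq a ha).2.1,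
    fun a ha => (hq a ha).1, ?_⟩
  rintro c g d ⟨a, ha, hm⟩
  exact (hq a ha).2.2 c g d hm

theorem isWalk_stuck [DecidableEq E] (h : IsFan inc s (Function.update D a {v}) p)
    (ha : a ∈ cut inc {s}) : IsWalk inc s (p a) v := by
  obtain ⟨b, hb, hW⟩ := h.exists_end a ha
  rw [Function.update_self] at hb
  exact (hb : b = v) ▸ hW

theorem extend [DecidableEq E] (h : IsFan inc s (Function.update D a {x}) p)
    (ha : a ∈ cut inc {s}) (hg : inc g = s(x, y)) (hne : x ≠ y)
    (hu : ∀ a' ∈ cut inc {s}, g ∉ edges (p a')) :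
    IsFan inc s (Function.update D a {y}) (Function.update p a (p a ++ [(g, y)])) := by
  have hW := (h.isWalk_stuck ha).append (y := y) (m := [(g, y)]) ⟨hg, hne, rfl⟩
  obtain ⟨z, l, hz⟩ := h.exists_cons a ha
  have := h.update (a := a) (m := p a ++ [(g, y)]) (C := {y}) ⟨z, l ++ [(g, y)], by simp [hz]⟩
    ⟨y, rfl, hW⟩ ?_ ?_
  · simpa using this
  · simpa [List.nodup_append', h.nodup a ha] using hu a ha
  · intro a' ha' hne' e he he'
    rw [edges_append, List.mem_append] at he
    rcases he with he | he
    · exact hne' (h.eq_of_mem a' ha' a ha e he' he)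
    · exact hu a' ha' (by simp_all)

theorem exchange [DecidableEq E] {a' : E} {l₁ l₂ : List (E × V)}
    (h : IsFan inc s (Function.update D a {x}) p) (ha : a ∈ cut inc {s})
    (ha' : a' ∈ cut inc {s}) (hne : a' ≠ a) (hys : y ≠ s) (hp : p a' = l₁ ++ (g, x) :: l₂)
    (hW : IsWalk inc s l₁ y) (hD : ∃ b ∈ D a, IsWalk inc x l₂ b) :
    IsFan inc s (Function.update D a' {y})
      (Function.update (Function.update p a' l₁) a (p a ++ l₂)) := by
  have hsub : ∀ e ∈ edges l₁, e ∈ edges (p a') := fun e he => by simp [hp, he]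
  have hsub' : ∀ e ∈ edges l₂, e ∈ edges (p a') := fun e he => by simp [hp, he]
  have hn := h.nodup a' ha'
  rw [hp, edges_append, edges_cons, List.nodup_append'] at hn
  have h₁ := h.update (m := l₁) (C := {y})
    (h.exists_cons_of_append ha' (C := {y}) (fun hs => hys hs.symm) hp ⟨y, rfl, hW⟩) ⟨y, rfl, hW⟩
    hn.1 (fun b hb hb' e he he' => hb' (h.eq_of_mem b hb a' ha' e he' (hsub e he)))
  obtain ⟨z, l, hz⟩ := h.exists_cons a ha
  obtain ⟨b, hb, hW₂⟩ := hD
  have h₂ := h₁.update (a := a) (m := p a ++ l₂) (C := D a) ⟨z, l ++ l₂, by simp [hz]⟩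
    ⟨b, hb, (h.isWalk_stuck ha).append hW₂⟩ ?_ ?_
  · rwa [Function.update_comm hne.symm, Function.update_idem, Function.update_comm hne,
      Function.update_eq_self] at h₂
  · rw [edges_append, List.nodup_append']
    exact ⟨h.nodup a ha, (List.nodup_cons.1 hn.2.1).2,
      fun e he he' => hne (h.eq_of_mem a' ha' a ha e (hsub' e he') he)⟩
  · intro b hb hba e he he'
    rw [edges_append, List.mem_append] at he
    rcases eq_or_ne b a' with rfl | hba'
    · rw [Function.update_self] at he'
      rcases he with he | he
      · exact hne (h.eq_of_mem b hb a ha e (hsub e he') he)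
      · exact hn.2.2 he' (List.mem_cons_of_mem _ he)
    · rw [Function.update_of_ne hba'] at he'
      rcases he with he | he
      · exact hba (h.eq_of_mem b hb a ha e he' he)
      · exact hba' (h.eq_of_mem b hb a' ha' e he' (hsub' e he))

end IsFan

/-- The fan `q` uses no new darts compared to `p` except those in `S`, and it still uses every
dart of `p` leaving a vertex of `X`. -/
structure IsRerouting (inc : E → Sym2 V) (s : V) (X : Set V) (S : Set (V × E × V))
    (p q : E → List (E × V)) : Prop where
  subset : usedDarts inc s q ⊆ S ∪ usedDarts inc s p
  keeps : ∀ c g d, (c, g, d) ∈ usedDarts inc s p → c ∈ X → (c, g, d) ∈ usedDarts inc s q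

namespace IsRerouting

variable {S S' : Set (V × E × V)} {q r : E → List (E × V)}

theorem trans (h : IsRerouting inc s X S p q) (h' : IsRerouting inc s X S' q r) :
    IsRerouting inc s X (S' ∪ S) p r where
  subset := by
    rw [Set.union_assoc]
    exact h'.subset.trans (Set.union_subset_union_right _ h.subset)
  keeps c g d hd hc := h'.keeps c g d (h.keeps c g d hd hc) hc

theorem no_entry (h : IsRerouting inc s X S p q)
    (hp : ∀ c g d, (c, g, d) ∈ usedDarts inc s p → c ∉ X → d ∉ X)
    (hS : ∀ c g d, (c, g, d) ∈ S → d ∉ X) (c : V) (g : E) (d : V)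
    (hd : (c, g, d) ∈ usedDarts inc s q) (hc : c ∉ X) : d ∉ X :=
  (h.subset hd).elim (hS c g d) fun hd => hp c g d hd hc

theorem saturates (h : IsRerouting inc s X S p q) (hp : IsFan inc s D p)
    (hX : Saturates inc s p X) (hS : ∀ c g d, (c, g, d) ∈ S → d ∉ X) : Saturates inc s q X where
  covers g hg := by
    obtain ⟨a, ha, hga⟩ := hX.covers g hg
    obtain ⟨c, d, hd⟩ := (mem_edges_iff s).1 hga
    have hc : c ∈ X := by
      by_contra hc
      have hcut := (mem_cut_iff (hp.inc_of_mem_usedDarts ⟨a, ha, hd⟩).1).1 hg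
      have := hX.no_entry c g d ⟨a, ha, hd⟩ hc
      tauto
    obtain ⟨b, hb, hd'⟩ := h.keeps c g d ⟨a, ha, hd⟩ hc
    exact ⟨b, hb, edge_mem_of_mem_darts hd'⟩
  no_entry := h.no_entry hX.no_entry hS

end IsRerouting

theorem IsWalk.isRerouting_extend [DecidableEq E] (hW : IsWalk inc s (p a) x)
    (ha : a ∈ cut inc {s}) : IsRerouting inc s X {(x, g, y)} p
      (Function.update p a (p a ++ [(g, y)])) where
  subset := by
    refine usedDarts_update_subset Set.subset_union_right fun d hd => ?_
    rw [hW.darts_append, List.mem_append] at hd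
    exact hd.elim (fun hd => .inr ⟨a, ha, hd⟩) fun hd => .inl (by simpa using hd)
  keeps c e d hd _ := by
    obtain ⟨b, hb, hd⟩ := hd
    rcases eq_or_ne b a with rfl | hba
    · exact ⟨b, hb, by simp [hW.darts_append, hd]⟩
    · exact ⟨b, hb, by simpa [hba] using hd⟩

theorem IsWalk.isRerouting_exchange [DecidableEq E] {a' : E} {l₁ l₂ : List (E × V)}
    {S : Set (V × E × V)} (hW : IsWalk inc s (p a) x) (hW₁ : IsWalk inc s l₁ y)
    (hp : p a' = l₁ ++ (g, x) :: l₂) (ha : a ∈ cut inc {s}) (ha' : a' ∈ cut inc {s})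
    (hne : a' ≠ a) (hy : y ∉ X) :
    IsRerouting inc s X S p (Function.update (Function.update p a' l₁) a (p a ++ l₂)) := by
  have hd : darts s (p a') = darts s l₁ ++ (y, g, x) :: darts x l₂ := by
    rw [hp, hW₁.darts_append, darts_cons]
  constructor
  · refine usedDarts_update_subset (usedDarts_update_subset Set.subset_union_right
      fun d hd' => .inr ⟨a', ha', by simp [hd, hd']⟩) fun d hd' => .inr ?_
    rw [hW.darts_append, List.mem_append] at hd'
    exact hd'.elim (fun hd' => ⟨a, ha, hd'⟩) fun hd' => ⟨a', ha', by simp [hd, hd']⟩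
  · rintro c e d ⟨b, hb, hdb⟩ hc
    rcases eq_or_ne b a with rfl | hba
    · exact ⟨b, hb, by simp [hW.darts_append, hdb]⟩
    rcases eq_or_ne b a' with rfl | hba'
    · rw [hd, List.mem_append, List.mem_cons, Prod.mk.injEq] at hdb
      rcases hdb with hdb | ⟨rfl, -⟩ | hdb
      exacts [⟨b, hb, by simpa [hba] using hdb⟩, (hy hc).elim,
        ⟨a, ha, by simp [hW.darts_append, hdb]⟩]
    · exact ⟨b, hb, by simpa [hba, hba'] using hdb⟩

theorem IsWalk.isRerouting_shorten [DecidableEq E] {l₁ l₂ : List (E × V)} {S : Set (V × E × V)}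
    (hW₁ : IsWalk inc s l₁ y) (hp : p a = l₁ ++ (g, x) :: l₂) (ha : a ∈ cut inc {s}) (hx : x ∉ X)
    (hy : y ∉ X) (hX : ∀ c g d, (c, g, d) ∈ usedDarts inc s p → c ∉ X → d ∉ X) :
    IsRerouting inc s X S p (Function.update p a l₁) := by
  have hd : darts s (p a) = darts s l₁ ++ (y, g, x) :: darts x l₂ := by
    rw [hp, hW₁.darts_append, darts_cons]
  constructor
  · exact usedDarts_update_subset Set.subset_union_right
      fun d hd' => .inr ⟨a, ha, by simp [hd, hd']⟩
  · rintro c e d ⟨b, hb, hdb⟩ hc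
    refine ⟨b, hb, ?_⟩
    rcases eq_or_ne b a with rfl | hba
    · rw [hd, List.mem_append, List.mem_cons, Prod.mk.injEq] at hdb
      rw [Function.update_self]
      rcases hdb with hdb | ⟨rfl, -⟩ | hdb
      · exact hdb
      · exact (hy hc).elim
      · exact ((notMem_of_no_entry hx
          (fun c g d hm => hX c g d ⟨b, ha, by simp [hd, hm]⟩) hdb).1 hc).elim
    · rwa [Function.update_of_ne hba]

namespace IsFan

theorem exists_step [DecidableEq E] (h : IsFan inc s (Function.update (fun _ => B) a {x}) p)
    (ha : a ∈ cut inc {s}) (hs : s ∈ X)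
    (hX : ∀ c g d, (c, g, d) ∈ usedDarts inc s p → c ∉ X → d ∉ X)
    (hg : inc g = s(x, y)) (hne : x ≠ y) (hx : x ∉ X) (hy : y ∉ X)
    (hu : (x, g, y) ∉ usedDarts inc s p) :
    ∃ q, ∃ a' ∈ cut inc {s}, IsFan inc s (Function.update (fun _ => B) a' {y}) q ∧
      IsRerouting inc s X {(x, g, y)} p q := by
  have hys : y ≠ s := fun h => hy (h ▸ hs)
  have hW := h.isWalk_stuck ha
  by_cases hr : ∃ a' ∈ cut inc {s}, (y, g, x) ∈ darts s (p a')
  · obtain ⟨a', ha', hm⟩ := hr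
    obtain ⟨b, hb, hW'⟩ := h.exists_end a' ha'
    obtain ⟨l₁, l₂, hp, hW₁, hW₂⟩ := hW'.mem_darts_iff.1 hm
    rcases eq_or_ne a' a with rfl | hne'
    · refine ⟨_, a', ha, ?_, hW₁.isRerouting_shorten hp ha hx hy hX⟩
      have hsub : ∀ e ∈ edges l₁, e ∈ edges (p a') := fun e he => by simp [hp, he]
      simpa using h.update (C := {y})
        (h.exists_cons_of_append ha (C := {y}) (fun h => hys h.symm) hp ⟨y, rfl, hW₁⟩)
        ⟨y, rfl, hW₁⟩ ((h.nodup a' ha).sublist (hp ▸ (List.sublist_append_left _ _).map _))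
        fun b hb hb' e he he' => hb' (h.eq_of_mem b hb a' ha e he' (hsub e he))
    · exact ⟨_, a', ha', h.exchange ha ha' hne' hys hp hW₁ ⟨b, by simpa [hne'] using hb, hW₂⟩,
        hW.isRerouting_exchange hW₁ hp ha ha' hne' hy⟩
  · refine ⟨_, a, ha, h.extend ha hg hne fun a' ha' he => ?_, hW.isRerouting_extend ha⟩
    obtain ⟨c, d, hm⟩ := (mem_edges_iff s).1 he
    have hi := (h.inc_of_mem_usedDarts ⟨a', ha', hm⟩).1
    rcases Sym2.eq_iff.1 (hg.symm.trans hi) with ⟨rfl, rfl⟩ | ⟨rfl, rfl⟩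
    exacts [hu ⟨a', ha', hm⟩, hr ⟨a', ha', hm⟩]

theorem exists_steps [DecidableEq E] (h : IsFan inc s (Function.update (fun _ => B) a {x}) p)
    (ha : a ∈ cut inc {s}) (hs : s ∈ X)
    (hX : ∀ c g d, (c, g, d) ∈ usedDarts inc s p → c ∉ X → d ∉ X)
    (hl : IsWalk inc x l y) (hn : (edges l).Nodup)
    (hd : ∀ c g d, (c, g, d) ∈ darts x l → c ∉ X ∧ d ∉ X ∧ (c, g, d) ∉ usedDarts inc s p) :
    ∃ q, ∃ a' ∈ cut inc {s}, IsFan inc s (Function.update (fun _ => B) a' {y}) q ∧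
      IsRerouting inc s X {d | d ∈ darts x l} p q := by
  induction l generalizing x p a with
  | nil =>
    cases hl
    exact ⟨p, a, ha, h, Set.subset_union_right, fun _ _ _ hd _ => hd⟩
  | cons b l ih =>
    rw [edges_cons, List.nodup_cons] at hn
    have hb := hd x b.1 b.2 (by simp)
    obtain ⟨q, a', ha', hq, hpq⟩ := h.exists_step ha hs hX hl.1 hl.2.1 hb.1 hb.2.1 hb.2.2
    have hS : ∀ c g d, (c, g, d) ∈ ({(x, b.1, b.2)} : Set (V × E × V)) → d ∉ X := by
      rintro c g d ⟨⟩
      exact hb.2.1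
    obtain ⟨r, a'', ha'', hr, hqr⟩ := ih hq ha' (hpq.no_entry hX hS) hl.2.2 hn.2
      fun c g d hm => by
        obtain ⟨hc, hd', hu⟩ := hd c g d (List.mem_cons_of_mem _ hm)
        refine ⟨hc, hd', fun hm' => (hpq.subset hm').elim (fun he => ?_) hu⟩
        cases he
        exact hn.1 (edge_mem_of_mem_darts hm)
    refine ⟨r, a'', ha'', hr, ?_⟩
    have := hpq.trans hqr
    rwa [Set.union_singleton, show insert (x, b.1, b.2) {d | d ∈ darts b.2 l} =
      {d | d ∈ darts x (b :: l)} by ext; simp] at this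

end IsFan

/-- The vertices that an augmenting walk from `v` avoiding `X` reaches. -/
def augReach (inc : E → Sym2 V) (s : V) (p : E → List (E × V)) (X : Set V) (v : V) : Set V :=
  {y | ∃ l, IsWalk inc v l y ∧
    ∀ c g d, (c, g, d) ∈ darts v l → c ∉ X ∧ d ∉ X ∧ (c, g, d) ∉ usedDarts inc s p}

theorem notMem_of_mem_augReach (hv : v ∉ X) (hy : y ∈ augReach inc s p X v) : y ∉ X := by
  obtain ⟨l, hW, hl⟩ := hy
  rcases hW.end_mem with rfl | hy
  · exact hv
  · obtain ⟨c, g, hm⟩ := (mem_heads_iff v).1 hy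
    exact (hl c g y hm).2.1

theorem mem_augReach_of_inc_eq (hv : v ∉ X) (hx : x ∈ augReach inc s p X v) (hy : y ∉ X)
    (hg : inc g = s(x, y)) (hne : x ≠ y) (hu : (x, g, y) ∉ usedDarts inc s p) :
    y ∈ augReach inc s p X v := by
  have hxX := notMem_of_mem_augReach hv hx
  obtain ⟨l, hW, hl⟩ := hx
  refine ⟨l ++ [(g, y)], hW.append ⟨hg, hne, rfl⟩, fun c e d hm => ?_⟩
  rw [hW.darts_append, List.mem_append] at hm
  rcases hm with hm | hm
  · exact hl c e d hm
  · obtain ⟨rfl, rfl, rfl⟩ : c = x ∧ e = g ∧ d = y := by simpa using hm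
    exact ⟨hxX, hy, hu⟩

namespace IsFan

theorem saturates_union_augReach (h : IsFan inc s D p) (hX : Saturates inc s p X) (hv : v ∉ X) :
    Saturates inc s p (X ∪ augReach inc s p X v) where
  covers := by
    rintro g ⟨x, y, hg, hx, hy⟩
    have hyX : y ∉ X := fun hy' => hy (.inl hy')
    rcases hx with hx | hx
    · exact hX.covers g ⟨x, y, hg, hx, hyX⟩
    · by_contra hu
      refine hy (.inr (mem_augReach_of_inc_eq hv hx hyX hg (fun h => hy (.inr (h ▸ hx))) ?_))
      rintro ⟨b, hb, hm⟩
      exact hu ⟨b, hb, edge_mem_of_mem_darts hm⟩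
  no_entry := by
    rintro c g d hm hc (hd | hd)
    · exact hX.no_entry c g d hm (fun h => hc (.inl h)) hd
    · obtain ⟨hg, hne⟩ := h.inc_of_mem_usedDarts hm
      exact hc (.inr (mem_augReach_of_inc_eq hv hd (fun h => hc (.inl h)) (hg.trans Sym2.eq_swap)
        hne.symm fun hm' => hne (h.usedDarts_unique hm hm').1))

/-- Either some augmenting walk from `v` reaches `B`, or the reachable vertices extend `X`. -/
theorem augment [DecidableEq E] (h : IsFan inc s (Function.update (fun _ => B) a {v}) p)
    (ha : a ∈ cut inc {s}) (hs : s ∈ X) (hv : v ∉ X) (hX : Saturates inc s p X) :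
    (∃ q, IsFan inc s (fun _ => B) q ∧ Saturates inc s q X) ∨
      ∃ Z, X ⊆ Z ∧ v ∈ Z ∧ (∀ b ∈ B, b ∈ Z → b ∈ X) ∧ Saturates inc s p Z := by
  by_cases hB : ∃ b ∈ B, b ∈ augReach inc s p X v
  · obtain ⟨b, hb, l, hW, hl⟩ := hB
    obtain ⟨l', hW', hsub, hn⟩ := hW.exists_trail
    have hl' := fun c g d hm => hl c g d (hsub (c, g, d) hm)
    obtain ⟨q, a', ha', hq, hpq⟩ := h.exists_steps ha hs hX.no_entry hW' hn hl'
    refine .inl ⟨q, hq.mono fun e _ => ?_, hpq.saturates h hX fun c g d hm => (hl' c g d hm).2.1⟩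
    rcases eq_or_ne e a' with rfl | hne <;> simp [*]
  · exact .inr ⟨X ∪ augReach inc s p X v, Set.subset_union_left, .inr ⟨[], rfl, by simp⟩,
      fun b hb hbZ => hbZ.resolve_right fun hbR => hB ⟨b, hb, hbR⟩,
      h.saturates_union_augReach hX hv⟩

end IsFan

end Fans

/-! ### Parity of cuts -/

section Parity

open scoped symmDiff

/-- A set which is infinite or has an even number of elements. -/
def NotOdd {α : Type*} (S : Set α) : Prop := S.Finite → Even S.ncard

/-- No set of vertices avoiding `T` has a cut with an odd number of edges. -/
def HasNoOddCut (inc : E → Sym2 V) (T : Set V) : Prop :=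
  ∀ X : Set V, (∀ t ∈ T, t ∉ X) → NotOdd (cut inc X)

variable {inc : E → Sym2 V} {x y : V} {l : List (E × V)}

theorem even_ncard_symmDiff {α : Type*} {A B : Set α} (hA : A.Finite) (hB : B.Finite) :
    Even (A ∆ B).ncard ↔ (Even A.ncard ↔ Even B.ncard) := by
  have h₁ := Set.ncard_inter_add_ncard_sdiff_eq_ncard A B hA
  have h₂ := Set.ncard_inter_add_ncard_sdiff_eq_ncard B A hB
  rw [Set.inter_comm] at h₂
  rw [Set.symmDiff_def, Set.ncard_union_eq disjoint_sdiff_sdiff hA.sdiff hB.sdiff]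
  grind

theorem NotOdd.of_symmDiff {α : Type*} {A B : Set α} (hA : NotOdd A) (hfin : (A ∆ B).Finite)
    (heven : Even (A ∆ B).ncard) : NotOdd B := fun hB => by
  have hA' : A.Finite := (hfin.symmDiff hB).subset (by rw [symmDiff_symmDiff_cancel_right])
  exact ((even_ncard_symmDiff hA' hB).1 heven).1 (hA hA')

theorem NotOdd.sUnion {α : Type*} {P : Set (Set α)} (hP : ∀ S ∈ P, NotOdd S)
    (hd : P.PairwiseDisjoint id) : NotOdd (⋃₀ P) := by
  intro hfin
  have hPfin : P.Finite := hfin.finite_subsets.subset fun S hS => Set.subset_sUnion_of_mem hS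
  induction P, hPfin using Set.Finite.induction_on with
  | empty => simp
  | @insert S Q hS _ ih =>
    rw [Set.sUnion_insert] at hfin ⊢
    have hSQ : Disjoint S (⋃₀ Q) := Set.disjoint_sUnion_right.2 fun R hR =>
      hd (Set.mem_insert _ _) (Set.mem_insert_of_mem _ hR) fun h => hS (h ▸ hR)
    have hSfin := hfin.subset Set.subset_union_left
    have hQfin := hfin.subset Set.subset_union_right
    rw [Set.ncard_union_eq hSQ hSfin hQfin]
    exact (hP S (Set.mem_insert _ _) hSfin).add
      (ih (fun R hR => hP R (Set.mem_insert_of_mem _ hR)) (hd.subset (Set.subset_insert _ _)) hQfin)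

theorem finite_edges (l : List (E × V)) : {g | g ∈ edges l}.Finite := (edges l).finite_toSet

theorem IsWalk.even_ncard_cut_iff (h : IsWalk inc x l y) (hn : (edges l).Nodup) (K : Set V) :
    Even (cut inc K ∩ {g | g ∈ edges l}).ncard ↔ (x ∈ K ↔ y ∈ K) := by
  induction l generalizing x with
  | nil => cases h; simp
  | cons a l ih =>
    rw [edges_cons, List.nodup_cons] at hn
    have ih := ih h.2.2 hn.2
    have hfin := (finite_edges l).inter_of_right (cut inc K)
    have hins : {g | g ∈ edges (a :: l)} = insert a.1 {g | g ∈ edges l} := by ext; simp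
    have hc := mem_cut_iff (X := K) h.1
    rw [hins]
    by_cases ha : a.1 ∈ cut inc K
    · rw [Set.inter_insert_of_mem ha, Set.ncard_insert_of_notMem (fun h => hn.1 h.2) hfin,
        Nat.even_add_one, ih]
      rw [hc] at ha
      tauto
    · rw [Set.inter_insert_of_notMem ha, ih]
      rw [hc] at ha
      tauto

end Parity

/-! ### Filling a hole in a cut -/

section Holes

/-- A fan at `s ∈ X` whose members leave `X` with their last step and not earlier. -/
structure IsExitFan (inc : E → Sym2 V) (s : V) (X : Set V) (σ : E → List (E × V)) : Prop extends
    IsFan inc s (fun _ => Xᶜ) σ where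
  tail_mem : ∀ c g d, (c, g, d) ∈ usedDarts inc s σ → c ∈ X

/-- The exit fan `σ` covers all edges of the cut of `X` except for the edge `f`, its hole. -/
structure HasHole (inc : E → Sym2 V) (s : V) (X : Set V) (σ : E → List (E × V)) (f : E) : Prop
    extends IsExitFan inc s X σ where
  hole_mem : f ∈ cut inc X
  used_iff : ∀ g ∈ cut inc X, (∃ a ∈ cut inc {s}, g ∈ edges (σ a)) ↔ g ≠ f

variable {inc : E → Sym2 V} {s x y : V} {a f g : E} {T X : Set V} {σ : E → List (E × V)}
  {l : List (E × V)}

theorem IsWalk.mem_of_tails_mem (h : IsWalk inc x l y) (ht : ∀ c g d, (c, g, d) ∈ darts x l → c ∈ X)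
    (hy : y ∈ X) : ∀ c g d, (c, g, d) ∈ darts x l → c ∈ X ∧ d ∈ X := by
  refine fun c g d hm => ⟨ht c g d hm, ?_⟩
  rcases h.exists_dart_of_mem_heads (head_mem_of_mem_darts hm) with rfl | ⟨e, z, hm'⟩
  exacts [hy, ht d e z hm']

theorem IsWalk.edges_notMem_cut (h : IsWalk inc x l y)
    (hd : ∀ c g d, (c, g, d) ∈ darts x l → c ∈ X ∧ d ∈ X) (hg : g ∈ edges l) : g ∉ cut inc X := by
  obtain ⟨c, d, hm⟩ := (mem_edges_iff x).1 hg
  have := hd c g d hm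
  rw [mem_cut_iff (h.inc_of_mem_darts hm).1]
  tauto

namespace IsExitFan

theorem exists_last (h : IsExitFan inc s X σ) (ha : a ∈ cut inc {s}) :
    ∃ n g u w, σ a = n ++ [(g, w)] ∧ IsWalk inc s n u ∧ inc g = s(u, w) ∧ u ∈ X ∧ w ∉ X ∧
      ∀ e ∈ edges n, e ∉ cut inc X := by
  obtain ⟨w, hw, hW⟩ := h.exists_end a ha
  obtain ⟨z, l, hl⟩ := h.exists_cons a ha
  rcases List.eq_nil_or_concat (σ a) with h₀ | ⟨n, ⟨g, w'⟩, hn⟩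
  · simp [h₀] at hl
  rw [List.concat_eq_append] at hn
  rw [hn] at hW
  obtain ⟨u, hn', hg, -, rfl⟩ := isWalk_append.1 hW
  have ht : ∀ c e d, (c, e, d) ∈ darts s (n ++ [(g, w')]) → c ∈ X := fun c e d hm =>
    h.tail_mem c e d ⟨a, ha, hn ▸ hm⟩
  rw [hn'.darts_append] at ht
  have hu : u ∈ X := ht u g w' (by simp)
  exact ⟨n, g, u, w', hn, hn', hg, hu, hw, fun e => hn'.edges_notMem_cut
    (hn'.mem_of_tails_mem (fun c e d hm => ht c e d (by simp [hm])) hu)⟩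

theorem reroute [DecidableEq E] {z : V} {l₁ l₂ k : List (E × V)} (h : IsExitFan inc s X σ)
    (ha : a ∈ cut inc {s}) (hσ : σ a = l₁ ++ l₂) (hl₁ : IsWalk inc s l₁ z) (hk : IsWalk inc z k y)
    (hz : z ∈ X) (hy : y ∉ X) (hn : (edges k).Nodup)
    (ht : ∀ c g d, (c, g, d) ∈ darts z k → c ∈ X)
    (hd : ∀ b ∈ cut inc {s}, ∀ e ∈ edges k, e ∉ edges (σ b)) :
    IsExitFan inc s X (Function.update σ a (l₁ ++ k)) := by
  have hzs : z ≠ s := by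
    rintro rfl
    cases k with
    | nil => exact hy ((show z = y from hk) ▸ hz)
    | cons q k =>
      have hq : q.1 ∈ cut inc {z} := mem_cut_singleton_left hk.1 hk.2.1
      exact hd q.1 hq q.1 (by simp) (h.self_mem hq)
  have hsub : ∀ e ∈ edges l₁, e ∈ edges (σ a) := fun e he => by simp [hσ, he]
  have hn₁ := h.nodup a ha
  rw [hσ, edges_append] at hn₁
  obtain ⟨w, l', hl'⟩ := h.exists_cons_of_append (C := {z}) ha (Ne.symm hzs) hσ ⟨z, rfl, hl₁⟩
  constructor
  · have := h.update (a := a) (m := l₁ ++ k) (C := Xᶜ) ⟨w, l' ++ k, by simp [hl']⟩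
      ⟨y, hy, hl₁.append hk⟩ ?_ ?_
    · simpa using this
    · rw [edges_append, List.nodup_append']
      exact ⟨hn₁.of_append_left, hn, fun e he he' => hd a ha e he' (hsub e he)⟩
    · intro b hb hba e he heb
      rw [edges_append, List.mem_append] at he
      exact he.elim (fun he => hba (h.eq_of_mem b hb a ha e heb (hsub e he)))
        fun he => hd b hb e he heb
  · refine fun c g d hm => usedDarts_update_subset (S := {d | d.1 ∈ X})
      (fun d hd => h.tail_mem _ _ _ hd) (fun d hd => ?_) hm
    rw [hl₁.darts_append, List.mem_append] at hd
    refine hd.elim (fun hd => h.tail_mem d.1 d.2.1 d.2.2 ⟨a, ha, ?_⟩) (ht d.1 d.2.1 d.2.2)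
    rw [hσ, hl₁.darts_append]
    exact List.mem_append_left _ hd

theorem cut_inter_unique (h : IsExitFan inc s X σ) (ha : a ∈ cut inc {s}) (hf : f ∈ cut inc X)
    (hg : g ∈ cut inc X) (hfa : f ∈ edges (σ a)) (hga : g ∈ edges (σ a)) : f = g := by
  obtain ⟨n, e, u, w, hn, -, -, -, -, hcut⟩ := h.exists_last ha
  have key : ∀ {e'}, e' ∈ cut inc X → e' ∈ edges (σ a) → e' = e := by
    intro e' he' hm
    rw [hn, edges_append, List.mem_append] at hm
    exact hm.elim (fun hm => (hcut _ hm he').elim) fun hm => by simpa using hm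
  rw [key hf hfa, key hg hga]

end IsExitFan

/-- The vertices that a walk from `u` inside `X` reaches without using members of `σ` whose index
is in `M`. -/
def freeReach (inc : E → Sym2 V) (s : V) (X : Set V) (σ : E → List (E × V)) (M : Set E) (u : V) :
    Set V :=
  {v | ∃ l, IsWalk inc u l v ∧ ∀ c g d, (c, g, d) ∈ darts u l →
    c ∈ X ∧ d ∈ X ∧ ∀ a ∈ cut inc {s}, a ∈ M → g ∉ edges (σ a)}

variable {u v : V} {f' : E} {M : Set E}

theorem freeReach_subset (hu : u ∈ X) : freeReach inc s X σ M u ⊆ X := by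
  rintro v ⟨l, hW, hl⟩
  rcases hW.end_mem with rfl | hv
  · exact hu
  · obtain ⟨c, g, hm⟩ := (mem_heads_iff u).1 hv
    exact (hl c g v hm).2.1

theorem self_mem_freeReach : u ∈ freeReach inc s X σ M u := ⟨[], rfl, by simp⟩

theorem mem_freeReach_of_inc_eq (hu : u ∈ X) (hx : x ∈ freeReach inc s X σ M u) (hy : y ∈ X)
    (hg : inc g = s(x, y)) (hne : x ≠ y) (hM : ∀ a ∈ cut inc {s}, a ∈ M → g ∉ edges (σ a)) :
    y ∈ freeReach inc s X σ M u := by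
  have hxX := freeReach_subset hu hx
  obtain ⟨l, hW, hl⟩ := hx
  refine ⟨l ++ [(g, y)], hW.append ⟨hg, hne, rfl⟩, fun c e d hm => ?_⟩
  rw [hW.darts_append, List.mem_append] at hm
  rcases hm with hm | hm
  · exact hl c e d hm
  · obtain ⟨rfl, rfl, rfl⟩ : c = x ∧ e = g ∧ d = y := by simpa using hm
    exact ⟨hxX, hy, hM⟩

namespace HasHole

theorem hole_notMem (h : HasHole inc s X σ f) (ha : a ∈ cut inc {s}) : f ∉ edges (σ a) :=
  fun hf => (h.used_iff f h.hole_mem).1 ⟨a, ha, hf⟩ rfl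

theorem hole_notMem_cut_singleton (h : HasHole inc s X σ f) : f ∉ cut inc {s} :=
  fun hf => h.hole_notMem hf (h.self_mem hf)

theorem cut_freeReach_sdiff (h : HasHole inc s X σ f) (hu : u ∈ X)
    (hav : ∀ a ∈ cut inc {s}, a ∉ M → ∀ c g d, (c, g, d) ∈ darts s (σ a) →
      c ∉ freeReach inc s X σ M u) :
    cut inc (freeReach inc s X σ M u) \ {f} =
      ⋃₀ ((fun a => cut inc (freeReach inc s X σ M u) ∩ {g | g ∈ edges (σ a)}) ''
        (M ∩ cut inc {s})) := by
  ext g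
  constructor
  · rintro ⟨⟨c, d, hg, hc, hd⟩, hgf⟩
    suffices ∃ a ∈ cut inc {s}, a ∈ M ∧ g ∈ edges (σ a) by
      obtain ⟨a, ha, haM, hga⟩ := this
      exact ⟨_, ⟨a, ⟨haM, ha⟩, rfl⟩, ⟨c, d, hg, hc, hd⟩, hga⟩
    by_contra! hno
    have hcX := freeReach_subset hu hc
    have hdX : d ∉ X := fun hdX =>
      hd (mem_freeReach_of_inc_eq hu hc hdX hg (fun hcd => hd (hcd ▸ hc)) hno)
    obtain ⟨a, ha, hga⟩ := (h.used_iff g ⟨c, d, hg, hcX, hdX⟩).2 hgf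
    obtain ⟨c', d', hm⟩ := (mem_edges_iff s).1 hga
    have hc' := h.tail_mem c' g d' ⟨a, ha, hm⟩
    rcases Sym2.eq_iff.1 (hg.symm.trans (h.inc_of_mem_usedDarts ⟨a, ha, hm⟩).1) with
      ⟨rfl, -⟩ | ⟨-, rfl⟩
    exacts [hav a ha (fun haM => hno a ha haM hga) c g d' hm hc, hdX hc']
  · rintro ⟨_, ⟨a, ha, rfl⟩, hg, hga⟩
    refine ⟨hg, ?_⟩
    rintro rfl
    exact h.hole_notMem ha.2 hga

/-- If all members meeting the set `K` of freely reachable vertices had their index in `M`, then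
the hole would be the only edge of the cut of `K` outside the closed-up members: a finite odd
cut. -/
theorem mem_freeReach_of_parity (h : HasHole inc s X σ f) (hodd : HasNoOddCut inc T)
    (hT : ∀ t ∈ T, t ∈ X → t = s) (hM : M.Finite) (hf : inc f = s(u, y)) (hu : u ∈ X) (hy : y ∉ X)
    (hav : ∀ a ∈ cut inc {s}, a ∉ M → ∀ c g d, (c, g, d) ∈ darts s (σ a) →
      c ∉ freeReach inc s X σ M u) : s ∈ freeReach inc s X σ M u := by
  have hcut := h.cut_freeReach_sdiff hu hav
  set K := freeReach inc s X σ M u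
  by_contra hsK
  have hKX : K ⊆ X := freeReach_subset hu
  have hrest : NotOdd (cut inc K \ {f}) := by
    rw [hcut]
    refine NotOdd.sUnion ?_ ?_
    · rintro _ ⟨a, ha, rfl⟩ -
      obtain ⟨b, hb, hW⟩ := h.exists_end a ha.2
      exact (hW.even_ncard_cut_iff (h.nodup a ha.2) K).2 (iff_of_false hsK fun hbK => hb (hKX hbK))
    · rintro _ ⟨a, ha, rfl⟩ _ ⟨b, hb, rfl⟩ hne
      refine Set.disjoint_left.2 fun g hga hgb => hne ?_
      obtain rfl := h.eq_of_mem a ha.2 b hb.2 g hga.2 hgb.2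
      rfl
  have hfin : (cut inc K \ {f}).Finite := by
    rw [hcut]
    refine ((hM.inter_of_left _).image _).sUnion ?_
    rintro _ ⟨a, -, rfl⟩
    exact (finite_edges _).inter_of_right _
  have hfK : f ∈ cut inc K := ⟨u, y, hf, self_mem_freeReach, fun hyK => hy (hKX hyK)⟩
  have hall : insert f (cut inc K \ {f}) = cut inc K := Set.insert_sdiff_self_of_mem hfK
  have heven := hodd K (fun t ht htK => hsK (hT t ht (hKX htK) ▸ htK)) (hall ▸ hfin.insert f)
  rw [← hall, Set.ncard_insert_of_notMem (by simp) hfin, Nat.even_add_one] at heven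
  exact heven (hrest hfin)

theorem exists_mem_freeReach (h : HasHole inc s X σ f) (hodd : HasNoOddCut inc T)
    (hT : ∀ t ∈ T, t ∈ X → t = s) (hM : M.Finite) (hf : inc f = s(u, y)) (hu : u ∈ X) (hy : y ∉ X) :
    ∃ a ∈ cut inc {s}, a ∉ M ∧ ∃ c g d, (c, g, d) ∈ darts s (σ a) ∧
      c ∈ freeReach inc s X σ M u := by
  by_contra! hav
  obtain ⟨l, hW, hl⟩ := h.mem_freeReach_of_parity hodd hT hM hf hu hy hav
  have hus : u ≠ s := by
    rintro rfl
    exact h.hole_notMem_cut_singleton (mem_cut_singleton_left hf fun h => hy (h ▸ hu))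
  obtain ⟨c, g, hm⟩ := (mem_heads_iff u).1 (hW.end_mem.resolve_left hus.symm)
  obtain ⟨hg, hne⟩ := hW.inc_of_mem_darts hm
  have hgs := mem_cut_singleton_right hg hne
  have hgM : g ∉ M := fun hgM => (hl c g s hm).2.2 g hgs hgM (h.self_mem hgs)
  obtain ⟨z, l', hp⟩ := h.exists_cons g hgs
  exact hav g hgs hgM s g z (by simp [hp]) ⟨l, hW, hl⟩

theorem exists_connection (h : HasHole inc s X σ f) (hodd : HasNoOddCut inc T)
    (hT : ∀ t ∈ T, t ∈ X → t = s) (hM : M.Finite) (hf : inc f = s(u, y)) (hu : u ∈ X) (hy : y ∉ X) :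
    ∃ a ∈ cut inc {s}, a ∉ M ∧ ∃ c g d l, (c, g, d) ∈ darts s (σ a) ∧ IsWalk inc u l c ∧
      (edges l).Nodup ∧ (∀ c g d, (c, g, d) ∈ darts u l → c ∈ X ∧ d ∈ X) ∧
      ∀ b ∈ cut inc {s}, ∀ e ∈ edges l, e ∉ edges (σ b) := by
  obtain ⟨a, ha, haM, c, g, d, hm, l, hW, hl⟩ := h.exists_mem_freeReach hodd hT hM hf hu hy
  let H : Set V := {c | ∃ a ∈ cut inc {s}, a ∉ M ∧ ∃ g d, (c, g, d) ∈ darts s (σ a)}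
  have hcH : c ∈ H := ⟨a, ha, haM, g, d, hm⟩
  obtain ⟨l₁, l₂, z, rfl, ⟨a', ha', haM', g', d', hz⟩, hW₁, hH⟩ := hW.exists_prefix hcH
  obtain ⟨r, hr, hsub, hn⟩ := hW₁.exists_trail
  have hrl : ∀ c g d, (c, g, d) ∈ darts u r → c ∈ X ∧ d ∈ X ∧
      ∀ a ∈ cut inc {s}, a ∈ M → g ∉ edges (σ a) := fun c g d hm =>
    hl c g d (by simp [hW₁.darts_append, hsub _ hm])
  refine ⟨a', ha', haM', z, g', d', r, hz, hr, hn,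
    fun c g d hm => ⟨(hrl c g d hm).1, (hrl c g d hm).2.1⟩, fun b hb e he heb => ?_⟩
  obtain ⟨c, d, hm⟩ := (mem_edges_iff u).1 he
  obtain ⟨hcX, -, hM'⟩ := hrl c e d hm
  have hbM : b ∉ M := fun hbM => hM' b hb hbM heb
  obtain ⟨i, j, hij⟩ := (mem_edges_iff s).1 heb
  refine hH c e d (hsub _ hm) ⟨b, hb, hbM, ?_⟩
  rcases Sym2.eq_iff.1 ((hr.inc_of_mem_darts hm).1.symm.trans
    (h.inc_of_mem_usedDarts ⟨b, hb, hij⟩).1) with ⟨rfl, -⟩ | ⟨rfl, -⟩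
  · exact ⟨e, j, hij⟩
  · obtain ⟨w, hw, hWb⟩ := h.exists_end b hb
    exact (hWb.exists_dart_of_mem_heads (head_mem_of_mem_darts hij)).resolve_left
      fun hcw => hw (hcw ▸ hcX)

/-- The new hole is the edge with which the rerouted member left `X` so far. -/
theorem update [DecidableEq E] {m : List (E × V)} (h : HasHole inc s X σ f)
    (ha : a ∈ cut inc {s}) (hf'X : f' ∈ cut inc X) (hf'a : f' ∈ edges (σ a))
    (hm : IsExitFan inc s X (Function.update σ a m))
    (hcut : ∀ g ∈ edges m, g ∈ cut inc X ↔ g = f) (hfm : f ∈ edges m) :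
    HasHole inc s X (Function.update σ a m) f' where
  toIsExitFan := hm
  hole_mem := hf'X
  used_iff g hg := by
    constructor
    · rintro ⟨b, hb, hgb⟩ rfl
      rcases eq_or_ne b a with rfl | hne
      · rw [Function.update_self] at hgb
        exact h.hole_notMem ha ((hcut g hgb).1 hg ▸ hf'a)
      · rw [Function.update_of_ne hne] at hgb
        exact hne (h.eq_of_mem b hb a ha g hgb hf'a)
    · intro hgf'
      rcases eq_or_ne g f with rfl | hgf
      · exact ⟨a, ha, by simpa using hfm⟩
      · obtain ⟨b, hb, hgb⟩ := (h.used_iff g hg).2 hgf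
        have hba : b ≠ a := by
          rintro rfl
          exact hgf' (h.cut_inter_unique ha hg hf'X hgb hf'a)
        exact ⟨b, hb, by simpa [hba] using hgb⟩

theorem exists_step [DecidableEq E] (h : HasHole inc s X σ f) (hodd : HasNoOddCut inc T)
    (hT : ∀ t ∈ T, t ∈ X → t = s) (hM : M.Finite) :
    ∃ a ∈ cut inc {s}, a ∉ M ∧ ∃ m f', f ∈ edges m ∧
      HasHole inc s X (Function.update σ a m) f' := by
  obtain ⟨u, y, hf, hu, hy⟩ := h.hole_mem
  obtain ⟨a, ha, haM, z, g, d, r, hz, hr, hrn, hrX, hrσ⟩ :=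
    h.exists_connection hodd hT hM hf hu hy
  obtain ⟨b, -, hW⟩ := h.exists_end a ha
  obtain ⟨l₁, l₂, hσ, hl₁, -⟩ := hW.mem_darts_iff.1 hz
  obtain ⟨n, f', u', w, hn, -, hf', hu', hw, -⟩ := h.exists_last ha
  have hl₁X := hl₁.mem_of_tails_mem (fun c e d hm => h.tail_mem c e d ⟨a, ha, by
    simp [hσ, hl₁.darts_append, hm]⟩) (h.tail_mem z g d ⟨a, ha, hz⟩)
  have huy : u ≠ y := fun huy => hy (huy ▸ hu)
  have hk : IsWalk inc z (reverse u r ++ [(f, y)]) y := hr.reverse.append ⟨hf, huy, rfl⟩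
  have hfr : f ∉ edges r := fun hfr => hr.edges_notMem_cut hrX hfr h.hole_mem
  refine ⟨a, ha, haM, l₁ ++ (reverse u r ++ [(f, y)]), f', by simp,
    h.update ha ⟨u', w, hf', hu', hw⟩ (by simp [hn]) ?_ (fun e he => ?_) (by simp)⟩
  · refine h.reroute ha hσ hl₁ hk (h.tail_mem z g d ⟨a, ha, hz⟩) hy
      (by simpa [edges_reverse, List.nodup_append, hrn] using
        fun e he => ne_of_mem_of_not_mem he hfr)
      (fun c e d hm => ?_) fun b hb e he => ?_
    · rw [hr.reverse.darts_append, List.mem_append, hr.mem_darts_reverse] at hm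
      rcases hm with hm | hm
      · exact (hrX d e c hm).2
      · obtain ⟨rfl, -, -⟩ : c = u ∧ e = f ∧ d = y := by simpa using hm
        exact hu
    · have : e ∈ edges r ∨ e = f := by simpa [edges_reverse] using he
      rcases this with he | rfl
      exacts [hrσ b hb e he, h.hole_notMem hb]
  · refine ⟨fun hX => ?_, fun hef => hef ▸ h.hole_mem⟩
    have : e ∈ edges l₁ ∨ e ∈ edges r ∨ e = f := by simpa [edges_reverse] using he
    exact (this.resolve_left fun he => hl₁.edges_notMem_cut hl₁X he hX).resolve_left
      fun he => hr.edges_notMem_cut hrX he hX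

end HasHole

theorem IsExitFan.of_eventually_eq {ρ : ℕ → E → List (E × V)} (h : ∀ n, IsExitFan inc s X (ρ n))
    (hσ : ∀ a, ∀ᶠ n in Filter.atTop, ρ n a = σ a) : IsExitFan inc s X σ where
  exists_cons a ha := by
    obtain ⟨n, hn⟩ := (hσ a).exists
    exact hn ▸ (h n).exists_cons a ha
  exists_end a ha := by
    obtain ⟨n, hn⟩ := (hσ a).exists
    exact hn ▸ (h n).exists_end a ha
  nodup a ha := by
    obtain ⟨n, hn⟩ := (hσ a).exists
    exact hn ▸ (h n).nodup a ha
  eq_of_mem a ha b hb g hga hgb := by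
    obtain ⟨n, hn, hn'⟩ := ((hσ a).and (hσ b)).exists
    exact (h n).eq_of_mem a ha b hb g (hn ▸ hga) (hn' ▸ hgb)
  tail_mem := by
    rintro c g d ⟨a, ha, hm⟩
    obtain ⟨n, hn⟩ := (hσ a).exists
    exact (h n).tail_mem c g d ⟨a, ha, hn ▸ hm⟩

/-- The hole is moved around infinitely often, but every member is rerouted at most once. -/
theorem HasHole.exists_sequence (h : HasHole inc s X σ f) (hodd : HasNoOddCut inc T)
    (hT : ∀ t ∈ T, t ∈ X → t = s) :
    ∃ (ρ : ℕ → E → List (E × V)) (f : ℕ → E) (b : ℕ → E), b.Injective ∧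
      (∀ n, HasHole inc s X (ρ n) (f n)) ∧ (∀ n, b n ∈ cut inc {s}) ∧
      (∀ n, f n ∈ edges (ρ (n + 1) (b n))) ∧ ∀ n a, a ≠ b n → ρ (n + 1) a = ρ n a := by
  classical
  let State := {S : (E → List (E × V)) × E × Finset E // HasHole inc s X S.1 S.2.1}
  have hstep : ∀ S : State, ∃ (S' : State) (b : E), b ∈ cut inc {s} ∧ b ∉ S.1.2.2 ∧
      S'.1.2.2 = insert b S.1.2.2 ∧ S.1.2.1 ∈ edges (S'.1.1 b) ∧
      ∀ a, a ≠ b → S'.1.1 a = S.1.1 a := by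
    rintro ⟨⟨σ, f, M⟩, h⟩
    obtain ⟨b, hb, hbM, m, f', hm, h'⟩ := h.exists_step hodd hT M.finite_toSet
    exact ⟨⟨⟨Function.update σ b m, f', insert b M⟩, h'⟩, b, hb, hbM, rfl, by simpa using hm,
      fun a ha => Function.update_of_ne ha _ _⟩
  choose next b hb hfresh hset hpath hnext using hstep
  let S : ℕ → State := fun n => next^[n] ⟨⟨σ, f, ∅⟩, h⟩
  have hS : ∀ n, S (n + 1) = next (S n) := fun n => Function.iterate_succ_apply' _ _ _
  have hmono : Monotone fun n => (S n).1.2.2 := monotone_nat_of_le_succ fun n => by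
    simp [hS, hset]
  have hmem : ∀ {m n}, m < n → b (S m) ∈ (S n).1.2.2 := fun {m n} hmn =>
    hmono hmn (by simp [hS, hset])
  refine ⟨fun n => (S n).1.1, fun n => (S n).1.2.1, fun n => b (S n), fun m n hmn => ?_,
    fun n => (S n).2, fun n => hb _, fun n => ?_, fun n a ha => ?_⟩
  · by_contra hne
    rcases lt_or_gt_of_ne hne with hlt | hlt
    · exact hfresh (S n) ((show b (S m) = b (S n) from hmn) ▸ hmem hlt)
    · exact hfresh (S m) ((show b (S m) = b (S n) from hmn) ▸ hmem hlt)
  · simp only [hS, hpath]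
  · simp only [hS, hnext _ a ha]

theorem exists_eventually_eq_of_step {α β : Type*} {ρ : ℕ → α → β} {b : ℕ → α}
    (hb : b.Injective) (hstep : ∀ n a, a ≠ b n → ρ (n + 1) a = ρ n a) :
    ∃ τ : α → β, (∀ a, ∀ᶠ n in Filter.atTop, ρ n a = τ a) ∧ ∀ m, τ (b m) = ρ (m + 1) (b m) := by
  have hconst : ∀ {a m}, (∀ k ≥ m, a ≠ b k) → ∀ n ≥ m, ρ n a = ρ m a := by
    intro a m hm n hn
    induction n, hn using Nat.le_induction with
    | base => rfl
    | succ n hn ih => rw [hstep n a (hm n hn), ih]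
  have hafter : ∀ m, ∀ n ≥ m + 1, ρ n (b m) = ρ (m + 1) (b m) := fun m =>
    hconst fun k hk he => by
      have := hb he
      lia
  have hlim : ∀ a, ∃ l, ∀ᶠ n in Filter.atTop, ρ n a = l := by
    intro a
    by_cases ha : ∃ m, b m = a
    · obtain ⟨m, rfl⟩ := ha
      exact ⟨_, Filter.eventually_atTop.2 ⟨m + 1, hafter m⟩⟩
    · exact ⟨_, Filter.eventually_atTop.2 ⟨0, hconst fun k _ hk => ha ⟨k, hk.symm⟩⟩⟩
  choose τ hτ using hlim
  refine ⟨τ, hτ, fun m => ?_⟩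
  obtain ⟨n, hn, hmn⟩ := ((hτ (b m)).and (Filter.eventually_ge_atTop (m + 1))).exists
  exact hn.symm.trans (hafter m n hmn)

theorem HasHole.exists_covering (h : HasHole inc s X σ f) (hodd : HasNoOddCut inc T)
    (hT : ∀ t ∈ T, t ∈ X → t = s) :
    ∃ τ, IsExitFan inc s X τ ∧ ∀ g ∈ cut inc X, ∃ a ∈ cut inc {s}, g ∈ edges (τ a) := by
  obtain ⟨ρ, f, b, hb, hρ, hbs, hfρ, hstep⟩ := h.exists_sequence hodd hT
  obtain ⟨τ, hτ, hτb⟩ := exists_eventually_eq_of_step hb hstep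
  refine ⟨τ, .of_eventually_eq (fun n => (hρ n).toIsExitFan) hτ, fun g hg => ?_⟩
  by_cases hgf : ∃ m, g = f m
  · obtain ⟨m, rfl⟩ := hgf
    exact ⟨b m, hbs m, by rw [hτb]; exact hfρ m⟩
  · push Not at hgf
    obtain ⟨a, ha, hga⟩ := ((hρ 0).used_iff g hg).2 (hgf 0)
    have hall : ∀ n, g ∈ edges (ρ n a) := by
      intro n
      induction n with
      | zero => exact hga
      | succ n ih =>
        obtain ⟨a', ha', hga'⟩ := ((hρ (n + 1)).used_iff g hg).2 (hgf (n + 1))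
        by_cases hab : a = b n
        · by_cases ha'b : a' = b n
          · rwa [hab, ← ha'b]
          · rw [hstep n a' ha'b] at hga'
            rwa [(hρ n).eq_of_mem a ha a' ha' g ih hga', hstep n a' ha'b]
        · rwa [hstep n a hab]
    obtain ⟨n, hn⟩ := (hτ a).exists
    exact ⟨a, ha, hn ▸ hall n⟩

end Holes

/-! ### Linked terminals and tight sets -/

section Tight

/-- The terminal `s` is linked: the edges at `s` start pairwise edge-disjoint trails to other
terminals. -/
def Linked (inc : E → Sym2 V) (T : Set V) (s : V) : Prop :=
  ∃ p, IsFan inc s (fun _ => T \ {s}) p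

/-- A set `X` whose only terminal is `s` is tight if some linkage of `s` saturates it. -/
structure Tight (inc : E → Sym2 V) (T : Set V) (s : V) (X : Set V) : Prop where
  mem : s ∈ X
  eq_of_mem : ∀ t ∈ T, t ∈ X → t = s
  exists_saturates : ∃ p, IsFan inc s (fun _ => T \ {s}) p ∧ Saturates inc s p X

variable {inc : E → Sym2 V} {s v w : V} {a f g : E} {B T X Z : Set V} {D : E → Set V}
  {p q σ τ r : E → List (E × V)}

/-- The trails `r` run outside `X` and continue the members of `σ` to vertices in `D`. -/
def Continues (inc : E → Sym2 V) (s : V) (X : Set V) (D : E → Set V) (σ r : E → List (E × V)) :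
    Prop :=
  ∀ a ∈ cut inc {s}, ∃ z, ∃ b ∈ D a, IsWalk inc s (σ a) z ∧ IsWalk inc z (r a) b ∧
    ∀ c g d, (c, g, d) ∈ darts z (r a) → c ∉ X ∧ d ∉ X

theorem IsFan.congr (h : IsFan inc s D p) (hpq : ∀ a ∈ cut inc {s}, p a = q a) :
    IsFan inc s D q where
  exists_cons a ha := hpq a ha ▸ h.exists_cons a ha
  exists_end a ha := hpq a ha ▸ h.exists_end a ha
  nodup a ha := hpq a ha ▸ h.nodup a ha
  eq_of_mem a ha a' ha' := hpq a ha ▸ hpq a' ha' ▸ h.eq_of_mem a ha a' ha'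

theorem usedDarts_congr (hpq : ∀ a ∈ cut inc {s}, p a = q a) :
    usedDarts inc s p = usedDarts inc s q :=
  Set.ext fun _ => exists_congr fun a => and_congr_right fun ha => by rw [hpq a ha]

theorem IsFan.exists_exitFan (h : IsFan inc s (fun _ => B) p) (hs : s ∈ X) (hB : ∀ b ∈ B, b ∉ X)
    (hX : ∀ c g d, (c, g, d) ∈ usedDarts inc s p → c ∉ X → d ∉ X) :
    ∃ σ r, IsExitFan inc s X σ ∧ (∀ a ∈ cut inc {s}, p a = σ a ++ r a) ∧
      Continues inc s X (fun _ => B) σ r := by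
  obtain ⟨σ, hσ, hpre, htail⟩ := (h.mono fun _ _ b hb => hB b hb :
    IsFan inc s (fun _ => Xᶜ) p).exists_truncation (Set.notMem_compl_iff.2 hs)
  choose! r hr using hpre
  refine ⟨σ, r, ⟨hσ, fun c g d hm => Set.notMem_compl_iff.1 (htail hm)⟩,
    fun a ha => (hr a ha).symm, fun a ha => ?_⟩
  obtain ⟨z, hz, hW⟩ := hσ.exists_end a ha
  obtain ⟨b, hb, hp⟩ := h.exists_end a ha
  rw [← hr a ha] at hp
  obtain ⟨z', hW', hp⟩ := isWalk_append.1 hp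
  obtain rfl := hW.unique hW'
  refine ⟨z, b, hb, hW, hp, fun c g d hm => notMem_of_no_entry hz (fun c g d hm hc => ?_) hm⟩
  refine hX c g d ⟨a, ha, ?_⟩ hc
  rw [← hr a ha, hW.darts_append]
  exact List.mem_append_right _ hm

theorem Continues.notMem_of_mem_cut (hr : Continues inc s X D σ r) (ha : a ∈ cut inc {s})
    (hg : g ∈ cut inc X) : g ∉ edges (r a) := fun h => by
  obtain ⟨z, b, -, -, hW, hout⟩ := hr a ha
  obtain ⟨c, d, hm⟩ := (mem_edges_iff z).1 h
  rw [mem_cut_iff (hW.inc_of_mem_darts hm).1] at hg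
  exact hg.elim (fun h => (hout c g d hm).1 h.1) fun h => (hout c g d hm).2 h.1

theorem IsExitFan.hasHole (hσ : IsExitFan inc s X σ) (hr : Continues inc s X D σ r)
    (hp : ∀ a ∈ cut inc {s}, p a = σ a ++ r a) (hf : f ∈ cut inc X)
    (hused : ∀ g ∈ cut inc X, (∃ a ∈ cut inc {s}, g ∈ edges (p a)) ↔ g ≠ f) :
    HasHole inc s X σ f :=
  ⟨hσ, hf, fun g hg => by
    rw [← hused g hg]
    refine exists_congr fun a => and_congr_right fun ha => ?_
    rw [hp a ha, edges_append, List.mem_append, or_iff_left (hr.notMem_of_mem_cut ha hg)]⟩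

theorem Continues.isFan_append (hr : Continues inc s X D σ r) (h : IsExitFan inc s X σ)
    (hn : ∀ a ∈ cut inc {s}, (edges (r a)).Nodup)
    (hd : ∀ a ∈ cut inc {s}, ∀ a' ∈ cut inc {s}, ∀ g, g ∈ edges (r a) → g ∈ edges (r a') → a = a') :
    IsFan inc s D (fun a => σ a ++ r a) := by
  have hdisj : ∀ a ∈ cut inc {s}, ∀ a' ∈ cut inc {s}, ∀ g ∈ edges (σ a), g ∉ edges (r a') := by
    intro a ha a' ha' g hg hg'
    obtain ⟨z, b, -, -, hW', hout⟩ := hr a' ha'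
    obtain ⟨c, d, hm⟩ := (mem_edges_iff s).1 hg
    obtain ⟨c', d', hm'⟩ := (mem_edges_iff z).1 hg'
    have hc := h.tail_mem c g d ⟨a, ha, hm⟩
    have hc' := hout c' g d' hm'
    rcases Sym2.eq_iff.1 ((h.inc_of_mem_usedDarts ⟨a, ha, hm⟩).1.symm.trans
      (hW'.inc_of_mem_darts hm').1) with ⟨rfl, -⟩ | ⟨rfl, -⟩
    exacts [hc'.1 hc, hc'.2 hc]
  constructor
  · intro a ha
    obtain ⟨z, l, hl⟩ := h.exists_cons a ha
    exact ⟨z, l ++ r a, by simp [hl]⟩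
  · intro a ha
    obtain ⟨z, b, hb, hW, hW', -⟩ := hr a ha
    exact ⟨b, hb, hW.append hW'⟩
  · intro a ha
    rw [edges_append, List.nodup_append']
    exact ⟨h.nodup a ha, hn a ha, hdisj a ha a ha⟩
  · intro a ha a' ha' g hg hg'
    rw [edges_append, List.mem_append] at hg hg'
    rcases hg with hg | hg <;> rcases hg' with hg' | hg'
    exacts [h.eq_of_mem a ha a' ha' g hg hg', (hdisj a ha a' ha' g hg hg').elim,
      (hdisj a' ha' a ha g hg' hg).elim, hd a ha a' ha' g hg hg']

theorem Continues.mem_usedDarts_iff {c d : V} (hr : Continues inc s X D σ r)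
    (h : IsExitFan inc s X σ) (hc : c ∉ X) : (c, g, d) ∈ usedDarts inc s (fun a => σ a ++ r a) ↔
      ∃ a ∈ cut inc {s}, ∃ z, IsWalk inc s (σ a) z ∧ (c, g, d) ∈ darts z (r a) := by
  constructor
  · rintro ⟨a, ha, hm⟩
    obtain ⟨z, -, -, hW, -⟩ := hr a ha
    rw [hW.darts_append, List.mem_append] at hm
    exact ⟨a, ha, z, hW, hm.resolve_left fun hm => hc (h.tail_mem c g d ⟨a, ha, hm⟩)⟩
  · rintro ⟨a, ha, z, hW, hm⟩
    exact ⟨a, ha, by rw [hW.darts_append]; exact List.mem_append_right _ hm⟩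

theorem IsExitFan.isWalk_of_mem {x y : V} (h : IsExitFan inc s X σ) (ha : a ∈ cut inc {s})
    (hg : g ∈ edges (σ a)) (hxy : inc g = s(x, y)) (hx : x ∈ X) (hy : y ∉ X) :
    IsWalk inc s (σ a) y := by
  obtain ⟨n, e, u, w, hn, hW, he, hu, hw, -⟩ := h.exists_last ha
  obtain rfl : g = e :=
    h.cut_inter_unique ha ⟨x, y, hxy, hx, hy⟩ ⟨u, w, he, hu, hw⟩ hg (by simp [hn])
  rcases Sym2.eq_iff.1 (hxy.symm.trans he) with ⟨rfl, rfl⟩ | ⟨rfl, rfl⟩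
  · exact hn ▸ hW.append ⟨he, fun h => hy (h ▸ hx), rfl⟩
  · exact (hw hx).elim

theorem IsExitFan.exists_mem_cut (h : IsExitFan inc s X σ) (ha : a ∈ cut inc {s}) :
    ∃ g ∈ cut inc X, g ∈ edges (σ a) := by
  obtain ⟨n, g, u, w, hn, -, hg, hu, hw, -⟩ := h.exists_last ha
  exact ⟨g, ⟨u, w, hg, hu, hw⟩, by simp [hn]⟩

/-- `β` matches the members of the exit fan `τ` other than that of `a₀` with the members of the
exit fan `σ`, so that matched members have the same end. -/
structure IsMatching (inc : E → Sym2 V) (s : V) (σ τ : E → List (E × V)) (a₀ : E) (β : E → E) :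
    Prop where
  mem : ∀ a ∈ cut inc {s}, a ≠ a₀ → β a ∈ cut inc {s}
  exists_end : ∀ a ∈ cut inc {s}, a ≠ a₀ → ∃ z, IsWalk inc s (τ a) z ∧ IsWalk inc s (σ (β a)) z
  inj : ∀ a ∈ cut inc {s}, a ≠ a₀ → ∀ a' ∈ cut inc {s}, a' ≠ a₀ → β a = β a' → a = a'
  surj : ∀ b ∈ cut inc {s}, ∃ a ∈ cut inc {s}, a ≠ a₀ ∧ β a = b

theorem HasHole.exists_matching (hσ : HasHole inc s X σ f) (hτ : IsExitFan inc s X τ)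
    (hcov : ∀ g ∈ cut inc X, ∃ a ∈ cut inc {s}, g ∈ edges (τ a)) :
    ∃ a₀ ∈ cut inc {s}, f ∈ edges (τ a₀) ∧ ∃ β, IsMatching inc s σ τ a₀ β := by
  obtain ⟨a₀, ha₀, hf⟩ := hcov f hσ.hole_mem
  have key : ∀ a ∈ cut inc {s}, a ≠ a₀ → ∃ b ∈ cut inc {s}, ∃ g ∈ cut inc X,
      g ∈ edges (τ a) ∧ g ∈ edges (σ b) := by
    intro a ha hne
    obtain ⟨g, hg, hga⟩ := hτ.exists_mem_cut ha
    obtain ⟨b, hb, hgb⟩ := (hσ.used_iff g hg).2 fun hgf =>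
      hne (hτ.eq_of_mem a ha a₀ ha₀ g hga (hgf ▸ hf))
    exact ⟨b, hb, g, hg, hga, hgb⟩
  choose! β hβ g hg hgτ hgσ using key
  refine ⟨a₀, ha₀, hf, β, hβ, fun a ha hne => ?_, fun a ha hne a' ha' hne' he => ?_,
    fun b hb => ?_⟩
  · obtain ⟨x, y, hxy, hx, hy⟩ := hg a ha hne
    exact ⟨y, hτ.isWalk_of_mem ha (hgτ a ha hne) hxy hx hy,
      hσ.isWalk_of_mem (hβ a ha hne) (hgσ a ha hne) hxy hx hy⟩
  · have hgg := hσ.cut_inter_unique (hβ a ha hne) (hg a ha hne) (hg a' ha' hne')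
      (hgσ a ha hne) (he ▸ hgσ a' ha' hne')
    exact hτ.eq_of_mem a ha a' ha' _ (hgτ a ha hne) (hgg ▸ hgτ a' ha' hne')
  · obtain ⟨e, he, heb⟩ := hσ.exists_mem_cut hb
    obtain ⟨a, ha, hea⟩ := hcov e he
    have hne : a ≠ a₀ := by
      rintro rfl
      obtain rfl := hτ.cut_inter_unique ha he hσ.hole_mem hea hf
      exact hσ.hole_notMem hb heb
    obtain rfl := hτ.cut_inter_unique ha he (hg a ha hne) hea (hgτ a ha hne)
    exact ⟨a, ha, hne, hσ.eq_of_mem _ (hβ a ha hne) b hb _ (hgσ a ha hne) heb⟩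

namespace IsMatching

variable [DecidableEq E] {a₀ : E} {β : E → E}

theorem continues (h : IsMatching inc s σ τ a₀ β) (hr : Continues inc s X (fun _ => B) σ r)
    (hw : IsWalk inc s (τ a₀) w) : Continues inc s X (Function.update (fun _ => B) a₀ {w}) τ
      (Function.update (r ∘ β) a₀ []) := by
  intro a ha
  rcases eq_or_ne a a₀ with rfl | hne
  · exact ⟨w, w, by simp, hw, by simp, by simp⟩
  · obtain ⟨z, hz, hz'⟩ := h.exists_end a ha hne
    obtain ⟨z'', b, hb, hz'', hW, hout⟩ := hr (β a) (h.mem a ha hne)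
    obtain rfl := hz'.unique hz''
    exact ⟨z, b, by simpa [hne] using hb, hz, by simpa [hne] using hW, by simpa [hne] using hout⟩

theorem mem_usedDarts_iff {c d : V} (h : IsMatching inc s σ τ a₀ β) (hσ : IsExitFan inc s X σ)
    (hτ : IsExitFan inc s X τ) (hr : Continues inc s X (fun _ => B) σ r)
    (hw : IsWalk inc s (τ a₀) w) (hc : c ∉ X) :
    (c, g, d) ∈ usedDarts inc s (fun a => τ a ++ Function.update (r ∘ β) a₀ [] a) ↔
      (c, g, d) ∈ usedDarts inc s (fun a => σ a ++ r a) := by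
  rw [hr.mem_usedDarts_iff hσ hc, (h.continues hr hw).mem_usedDarts_iff hτ hc]
  constructor
  · rintro ⟨a, ha, z, hz, hm⟩
    rcases eq_or_ne a a₀ with rfl | hne
    · simp at hm
    · obtain ⟨z', hz', hz''⟩ := h.exists_end a ha hne
      obtain rfl := hz.unique hz'
      exact ⟨β a, h.mem a ha hne, z, hz'', by simpa [hne] using hm⟩
  · rintro ⟨b, hb, z, hz, hm⟩
    obtain ⟨a, ha, hne, rfl⟩ := h.surj b hb
    obtain ⟨z', hz', hz''⟩ := h.exists_end a ha hne
    obtain rfl := hz.unique hz''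
    exact ⟨a, ha, z, hz', by simpa [hne] using hm⟩

end IsMatching

theorem HasHole.exists_stuck [DecidableEq E] (hσ : HasHole inc s X σ f)
    (hp : IsFan inc s (fun _ => B) (fun a => σ a ++ r a))
    (hr : Continues inc s X (fun _ => B) σ r) (hτ : IsExitFan inc s X τ)
    (hcov : ∀ g ∈ cut inc X, ∃ a ∈ cut inc {s}, g ∈ edges (τ a)) (hf : inc f = s(v, w))
    (hv : v ∈ X) (hw : w ∉ X) :
    ∃ a₀ ∈ cut inc {s}, ∃ q, IsFan inc s (Function.update (fun _ => B) a₀ {w}) q ∧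
      Saturates inc s q X ∧ ∀ c g d, c ∉ X → ((c, g, d) ∈ usedDarts inc s q ↔
        (c, g, d) ∈ usedDarts inc s (fun a => σ a ++ r a)) := by
  obtain ⟨a₀, ha₀, hfa₀, β, hβ⟩ := hσ.exists_matching hτ hcov
  have hw₀ := hτ.isWalk_of_mem ha₀ hfa₀ hf hv hw
  have hr' := hβ.continues hr hw₀
  have hrp : ∀ b ∈ cut inc {s}, ∀ g ∈ edges (r b), g ∈ edges (σ b ++ r b) := fun b _ g hg => by
    simp [hg]
  have hrn : ∀ b ∈ cut inc {s}, (edges (r b)).Nodup := fun b hb =>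
    (hp.nodup b hb).sublist ((List.sublist_append_right _ _).map _)
  refine ⟨a₀, ha₀, _, hr'.isFan_append hτ (fun a ha => ?_) (fun a ha a' ha' g hg hg' => ?_),
    ⟨fun g hg => ?_, fun c g d hm hc => ?_⟩,
    fun c g d hc => hβ.mem_usedDarts_iff hσ.toIsExitFan hτ hr hw₀ hc⟩
  · rcases eq_or_ne a a₀ with rfl | hne
    · simp
    · simpa [hne] using hrn _ (hβ.mem a ha hne)
  · rcases eq_or_ne a a₀ with rfl | hne
    · simp at hg
    rcases eq_or_ne a' a₀ with rfl | hne'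
    · simp at hg'
    rw [Function.update_of_ne hne] at hg
    rw [Function.update_of_ne hne'] at hg'
    have hb := hβ.mem a ha hne
    have hb' := hβ.mem a' ha' hne'
    exact hβ.inj a ha hne a' ha' hne'
      (hp.eq_of_mem _ hb _ hb' g (hrp _ hb g hg) (hrp _ hb' g hg'))
  · obtain ⟨a, ha, hga⟩ := hcov g hg
    exact ⟨a, ha, by simp [hga]⟩
  · obtain ⟨a, ha, z, hW, hm⟩ := (hr'.mem_usedDarts_iff hτ hc).1 hm
    obtain ⟨z', -, -, hW', -, hout⟩ := hr' a ha
    obtain rfl := hW.unique hW'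
    exact (hout c g d hm).2

/-- Filling the hole leaves a member stuck at the outer end of `f`, to be augmented outside `X`. -/
theorem IsFan.exists_tight (hp : IsFan inc s (fun _ => T \ {s}) p) (hodd : HasNoOddCut inc T)
    (hs : s ∈ X) (hT : ∀ t ∈ T, t ∈ X → t = s)
    (hX : ∀ c g d, (c, g, d) ∈ usedDarts inc s p → c ∉ X → d ∉ X)
    (hf : inc f = s(v, w)) (hv : v ∈ X) (hw : w ∉ X)
    (hused : ∀ g ∈ cut inc X, (∃ a ∈ cut inc {s}, g ∈ edges (p a)) ↔ g ≠ f) :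
    ∃ Z, Tight inc T s Z ∧ v ∈ Z := by
  classical
  have hB : ∀ b ∈ T \ {s}, b ∉ X := fun b hb hbX => hb.2 (hT b hb.1 hbX)
  obtain ⟨σ, r, hσ, hpσ, hr⟩ := hp.exists_exitFan hs hB hX
  have hole := hσ.hasHole hr hpσ ⟨v, w, hf, hv, hw⟩ hused
  obtain ⟨τ, hτ, hcov⟩ := hole.exists_covering hodd hT
  obtain ⟨a₀, ha₀, q, hq, hqX, hqp⟩ := hole.exists_stuck (hp.congr hpσ) hr hτ hcov hf hv hw
  rw [← usedDarts_congr hpσ] at hqp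
  rcases hq.augment ha₀ hs hw hqX with ⟨q', hq', hq'X⟩ | ⟨Z, hXZ, hwZ, hZT, hqZ⟩
  · exact ⟨X, ⟨hs, hT, q', hq', hq'X⟩, hv⟩
  refine ⟨Z, ⟨hXZ hs, fun t ht htZ => ?_, p, hp, fun g hg => ?_, fun c g d hm hc => ?_⟩, hXZ hv⟩
  · by_contra hts
    exact hB t ⟨ht, hts⟩ (hZT t ⟨ht, hts⟩ htZ)
  · by_cases hgX : g ∈ cut inc X
    · refine (hused g hgX).2 fun hgf => ?_
      subst hgf
      rw [mem_cut_iff hf] at hg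
      exact hg.elim (fun h => h.2 hwZ) fun h => h.2 (hXZ hv)
    · obtain ⟨a, ha, hga⟩ := hqZ.covers g hg
      obtain ⟨c, d, hm⟩ := (mem_edges_iff s).1 hga
      have hg' := (hq.inc_of_mem_usedDarts ⟨a, ha, hm⟩).1
      have hcX : c ∉ X := fun hc => by
        rw [mem_cut_iff hg'] at hgX hg
        have hd : d ∈ X := by tauto
        exact hg.elim (fun h => h.2 (hXZ hd)) fun h => h.2 (hXZ hc)
      obtain ⟨a', ha', hm'⟩ := (hqp c g d hcX).1 ⟨a, ha, hm⟩
      exact ⟨a', ha', edge_mem_of_mem_darts hm'⟩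
  · exact hqZ.no_entry c g d ((hqp c g d fun h => hc (hXZ h)).2 hm) hc

end Tight

/-! ### Deleting and splitting off edges -/

section Delete

/-- Deletion of the edges in `F`: they are turned into loops, which no walk and no cut uses. -/
noncomputable def delete [Nonempty V] (inc : E → Sym2 V) (F : Set E) : E → Sym2 V :=
  open Classical in fun e => if e ∈ F then Sym2.diag (Classical.arbitrary V) else inc e

/-- `inc'` arises from `inc` by splitting off the edges `e = tv` and `f = vw` at `v`: the edge `e`
now joins `t` and `w`, and `f` is turned into a loop. -/
structure IsSplit (inc inc' : E → Sym2 V) (e f : E) (t v w : V) : Prop where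
  inc_left : inc e = s(t, v)
  inc_right : inc f = s(v, w)
  inc'_left : inc' e = s(t, w)
  isDiag : (inc' f).IsDiag
  of_ne : ∀ g, g ≠ e → g ≠ f → inc' g = inc g
  edge_ne : e ≠ f
  left_ne_mid : t ≠ v
  mid_ne_right : v ≠ w
  left_ne_right : t ≠ w

variable {inc inc' : E → Sym2 V} {s t v w x y : V} {a e f g : E} {B T X : Set V} {F : Set E}
  {D D' : E → Set V} {p p' : E → List (E × V)} {l m : List (E × V)}

theorem delete_of_mem [Nonempty V] (h : g ∈ F) :
    delete inc F g = Sym2.diag (Classical.arbitrary V) :=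
  if_pos h

theorem isDiag_delete [Nonempty V] (h : g ∈ F) : (delete inc F g).IsDiag :=
  delete_of_mem (inc := inc) h ▸ Sym2.diag_isDiag _

theorem delete_of_notMem [Nonempty V] (h : g ∉ F) : delete inc F g = inc g :=
  if_neg h

theorem notMem_cut_of_isDiag (h : (inc g).IsDiag) : g ∉ cut inc X := by
  rintro ⟨x, y, hg, hx, hy⟩
  rw [hg, Sym2.mk_isDiag_iff] at h
  exact hy (h ▸ hx)

theorem mem_cut_delete_iff [Nonempty V] :
    g ∈ cut (delete inc F) X ↔ g ∈ cut inc X ∧ g ∉ F := by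
  by_cases h : g ∈ F
  · simp [h, notMem_cut_of_isDiag (X := X) (isDiag_delete (inc := inc) h)]
  · simp [h, mem_cut_congr (X := X) (delete_of_notMem (inc := inc) h)]

theorem IsWalk.not_isDiag (h : IsWalk inc x l y) (hg : g ∈ edges l) : ¬ (inc g).IsDiag := by
  obtain ⟨c, d, hm⟩ := (mem_edges_iff x).1 hg
  obtain ⟨hi, hne⟩ := h.inc_of_mem_darts hm
  rwa [hi, Sym2.mk_isDiag_iff]

theorem isWalk_delete_iff [Nonempty V] :
    IsWalk (delete inc F) x l y ↔ IsWalk inc x l y ∧ ∀ g ∈ edges l, g ∉ F := by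
  constructor
  · intro h
    have hF : ∀ g ∈ edges l, g ∉ F := fun g hg hF =>
      h.not_isDiag hg (isDiag_delete hF)
    exact ⟨h.congr fun g hg => delete_of_notMem (hF g hg), hF⟩
  · rintro ⟨h, hF⟩
    exact h.congr fun g hg => (delete_of_notMem (hF g hg)).symm

theorem IsFan.transfer (h : IsFan inc s D p) (hs : cut inc' {s} ⊆ cut inc {s})
    (hinc : ∀ a ∈ cut inc' {s}, ∀ g ∈ edges (p a), inc g = inc' g) : IsFan inc' s D p where
  exists_cons a ha := h.exists_cons a (hs ha)
  exists_end a ha := by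
    obtain ⟨b, hb, hW⟩ := h.exists_end a (hs ha)
    exact ⟨b, hb, hW.congr (hinc a ha)⟩
  nodup a ha := h.nodup a (hs ha)
  eq_of_mem a ha a' ha' := h.eq_of_mem a (hs ha) a' (hs ha')

theorem IsFan.to_delete [Nonempty V] (h : IsFan inc s D p)
    (hF : ∀ a ∈ cut inc {s}, a ∉ F → ∀ g ∈ edges (p a), g ∉ F) : IsFan (delete inc F) s D p :=
  h.transfer (fun _ ha => (mem_cut_delete_iff.1 ha).1) fun a ha g hg => by
    rw [mem_cut_delete_iff] at ha
    exact (delete_of_notMem (hF a ha.1 ha.2 g hg)).symm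

theorem IsFan.notMem_of_delete [Nonempty V] (h : IsFan (delete inc F) s D p) :
    ∀ a ∈ cut (delete inc F) {s}, ∀ g ∈ edges (p a), g ∉ F := fun a ha => by
  obtain ⟨b, -, hW⟩ := h.exists_end a ha
  exact (isWalk_delete_iff.1 hW).2

theorem IsFan.of_delete [Nonempty V] (h : IsFan (delete inc F) s D p)
    (hF : ∀ a ∈ cut inc {s}, a ∉ F) : IsFan inc s D p := by
  have hcut : cut inc {s} ⊆ cut (delete inc F) {s} := fun a ha =>
    mem_cut_delete_iff.2 ⟨ha, hF a ha⟩
  exact h.transfer hcut fun a ha g hg => delete_of_notMem (h.notMem_of_delete a (hcut ha) g hg)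

theorem usedDarts_congr_cut (h : cut inc {s} = cut inc' {s}) :
    usedDarts inc s p = usedDarts inc' s p := by
  simp only [usedDarts, h]

theorem IsFan.shorten [DecidableEq E] (h : IsFan inc s D p) (ha : a ∈ cut inc {s})
    (hp : p a = l ++ m) (hW : IsWalk inc s l x) (hx : x ≠ s) (hD : ∀ a ∈ cut inc {s}, s ∉ D a) :
    IsFan inc s (Function.update D a {x}) (Function.update p a l) := by
  refine h.of_prefix (fun b hb => ?_) (fun b _ => ?_) (fun b hb => ?_) <;>
    rcases eq_or_ne b a with rfl | hne
  · simpa using hx.symm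
  · simpa [hne] using hD b hb
  · simp [hp]
  · simp [hne]
  · exact ⟨x, by simp, by simpa using hW⟩
  · simpa [hne] using h.exists_end b hb

theorem IsFan.notMem_shorten [DecidableEq E] (h : IsFan inc s D p) (ha : a ∈ cut inc {s})
    (hp : p a = l ++ m) (hg : g ∈ edges m) :
    ∀ b ∈ cut inc {s}, g ∉ edges (Function.update p a l b) := by
  intro b hb hgb
  rcases eq_or_ne b a with rfl | hne
  · have := h.nodup b hb
    rw [hp, edges_append, List.nodup_append'] at this
    exact this.2.2 (by simpa using hgb) hg
  · rw [Function.update_of_ne hne] at hgb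
    exact hne (h.eq_of_mem b hb a ha g hgb (by simp [hp, hg]))

theorem IsFan.mem_usedDarts_extend [DecidableEq E] {z : V × E × V}
    (h : IsFan inc s (Function.update D a {x}) p) (ha : a ∈ cut inc {s}) :
    z ∈ usedDarts inc s (Function.update p a (p a ++ [(g, y)])) ↔
      z = (x, g, y) ∨ z ∈ usedDarts inc s p := by
  have hW := h.isWalk_stuck ha
  constructor
  · rintro ⟨b, hb, hm⟩
    rcases eq_or_ne b a with rfl | hne
    · rw [Function.update_self, hW.darts_append, List.mem_append] at hm
      exact hm.elim (fun hm => .inr ⟨b, hb, hm⟩) fun hm => .inl (by simpa using hm)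
    · exact .inr ⟨b, hb, by rwa [Function.update_of_ne hne] at hm⟩
  · rintro (rfl | ⟨b, hb, hm⟩)
    · exact ⟨a, ha, by simp [hW.darts_append]⟩
    · rcases eq_or_ne b a with rfl | hne
      · exact ⟨b, hb, by simp [hW.darts_append, hm]⟩
      · exact ⟨b, hb, by rwa [Function.update_of_ne hne]⟩

theorem exists_mem_edges_extend [DecidableEq E] (ha : a ∈ cut inc {s}) :
    (∃ b ∈ cut inc {s}, e ∈ edges (Function.update p a (p a ++ [(g, y)]) b)) ↔
      e = g ∨ ∃ b ∈ cut inc {s}, e ∈ edges (p b) := by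
  constructor
  · rintro ⟨b, hb, he⟩
    rcases eq_or_ne b a with rfl | hne
    · rw [Function.update_self, edges_append, List.mem_append] at he
      exact he.elim (fun he => .inr ⟨b, hb, he⟩) fun he => .inl (by simpa using he)
    · exact .inr ⟨b, hb, by rwa [Function.update_of_ne hne] at he⟩
  · rintro (rfl | ⟨b, hb, he⟩)
    · exact ⟨a, ha, by simp⟩
    · refine ⟨b, hb, ?_⟩
      rcases eq_or_ne b a with rfl | hne <;> simp_all

theorem IsFan.linked_or_saturates [DecidableEq E]
    (h : IsFan inc s (Function.update (fun _ => T \ {s}) a {v}) p) (ha : a ∈ cut inc {s})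
    (hv : v ≠ s) : Linked inc T s ∨
      ∃ Z, s ∈ Z ∧ v ∈ Z ∧ (∀ t ∈ T, t ∈ Z → t = s) ∧ Saturates inc s p Z := by
  rcases h.augment ha (X := {s}) rfl hv h.saturates_singleton with
    ⟨q, hq, -⟩ | ⟨Z, hsZ, hvZ, hZT, hZ⟩
  · exact .inl ⟨q, hq⟩
  · exact .inr ⟨Z, hsZ rfl, hvZ, fun t ht htZ => by_contra fun h => h (hZT t ⟨ht, h⟩ htZ), hZ⟩

theorem Linked.exists_avoiding (hl : Linked inc T s) (he : inc e = s(t, v)) (ht : t ∈ T)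
    (hts : t ≠ s) (hvs : v ≠ s) :
    (∃ p, IsFan inc s (fun _ => T \ {s}) p ∧ ∀ a ∈ cut inc {s}, e ∉ edges (p a)) ∨
      ∃ Z, Tight inc T s Z ∧ v ∈ Z := by
  classical
  obtain ⟨p, hp⟩ := hl
  by_cases! hu : ∀ a ∈ cut inc {s}, e ∉ edges (p a)
  · exact .inl ⟨p, hp, hu⟩
  obtain ⟨a, ha, hea⟩ := hu
  obtain ⟨c, d, hm⟩ := (mem_edges_iff s).1 hea
  obtain ⟨b, _, hW⟩ := hp.exists_end a ha
  obtain ⟨hi, hne⟩ := hW.inc_of_mem_darts hm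
  obtain ⟨l₁, l₂, hpa, hW₁, -⟩ := hW.mem_darts_iff.1 hm
  have hn := hp.notMem_shorten ha hpa (g := e) (by simp)
  have hsT : ∀ a ∈ cut inc {s}, s ∉ T \ {s} := fun _ _ h => h.2 rfl
  rcases Sym2.eq_iff.1 (he.symm.trans hi) with ⟨rfl, rfl⟩ | ⟨rfl, rfl⟩
  · refine .inl ⟨_, (hp.shorten ha hpa hW₁ hts hsT).mono fun b _ => ?_, hn⟩
    rcases eq_or_ne b a with rfl | hne <;> simp_all
  have h₁ := hp.shorten ha hpa hW₁ hvs hsT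
  have : Nonempty V := ⟨t⟩
  have hes : e ∉ cut inc {s} := fun h => by
    rw [mem_cut_iff hi] at h
    tauto
  have hcut : cut (delete inc {e}) {s} = cut inc {s} := Set.ext fun g =>
    mem_cut_delete_iff.trans (and_iff_left_of_imp fun hg h => hes (h ▸ hg))
  have h₁' : IsFan (delete inc {e}) s _ _ := h₁.to_delete fun b hb _ g hg h => hn b hb (h ▸ hg)
  rcases h₁'.linked_or_saturates (hcut.ge ha) hvs with ⟨q, hq⟩ | ⟨Z, hsZ, hvZ, hZT, hZ⟩
  · exact .inl ⟨q, hq.of_delete fun b hb h => hes (h ▸ hb),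
      fun b hb h => hq.notMem_of_delete b (hcut.ge hb) e h rfl⟩
  have htZ : t ∉ Z := fun h => hts (hZT t ht h)
  refine .inr ⟨Z, ⟨hsZ, hZT, _, (h₁.extend ha hi hne hn).mono fun b _ => ?_, fun g hg => ?_,
    fun c g d hm hc => ?_⟩, hvZ⟩
  · rcases eq_or_ne b a with rfl | hne <;> simp_all
  · rw [exists_mem_edges_extend ha]
    exact or_iff_not_imp_left.2 fun hge =>
      hcut ▸ hZ.covers g (mem_cut_delete_iff.2 ⟨hg, hge⟩)
  · rcases (h₁.mem_usedDarts_extend ha).1 hm with h | hm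
    · cases h
      exact htZ
    · exact hZ.no_entry c g d (usedDarts_congr_cut hcut ▸ hm) hc

namespace IsSplit

theorem cut_singleton (h : IsSplit inc inc' e f t v w) (ht : t ≠ s) (hv : v ≠ s) (hw : w ≠ s) :
    cut inc' {s} = cut inc {s} := by
  ext g
  rcases eq_or_ne g e with rfl | hge
  · rw [mem_cut_iff h.inc_left, mem_cut_iff h.inc'_left]
    simp [ht, hv, hw]
  rcases eq_or_ne g f with rfl | hgf
  · rw [mem_cut_iff h.inc_right]
    simp [notMem_cut_of_isDiag h.isDiag, hv, hw]
  · exact mem_cut_congr (h.of_ne g hge hgf)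

theorem inc_eq (h : IsSplit inc inc' e f t v w) {S : Set E} (he : e ∉ S) (hf : f ∉ S) :
    ∀ g ∈ S, inc g = inc' g := fun g hg =>
  (h.of_ne g (fun hge => he (hge ▸ hg)) fun hgf => hf (hgf ▸ hg)).symm

theorem linked_or_tight_of_stuck [DecidableEq E] (h : IsSplit inc inc' e f t v w)
    (hodd : HasNoOddCut inc T) (ht : t ∈ T) (hts : t ≠ s) (hvs : v ≠ s) (hws : w ≠ s)
    (hp : IsFan inc s (Function.update (fun _ => T \ {s}) a {v}) p) (ha : a ∈ cut inc {s})
    (he : ∀ b ∈ cut inc {s}, e ∉ edges (p b)) (hf : ∀ b ∈ cut inc {s}, f ∉ edges (p b)) :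
    Linked inc' T s ∨ ∃ Z, Tight inc T s Z ∧ v ∈ Z := by
  have hcut := h.cut_singleton hts hvs hws
  have hp' : IsFan inc' s _ _ := hp.transfer hcut.le fun b hb =>
    h.inc_eq (S := {g | g ∈ edges (p b)}) (he b (hcut.le hb)) (hf b (hcut.le hb))
  rcases hp'.linked_or_saturates (hcut.ge ha) hvs with hq | ⟨Z, hsZ, hvZ, hZT, hZ⟩
  · exact .inl hq
  have htZ : t ∉ Z := fun h => hts (hZT t ht h)
  have hwZ : w ∉ Z := fun hwZ => by
    obtain ⟨b, hb, heb⟩ := hZ.covers e ((mem_cut_iff h.inc'_left).2 (.inr ⟨hwZ, htZ⟩))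
    exact he b (hcut.le hb) heb
  refine .inr (((hp.extend ha (h.inc_left.trans Sym2.eq_swap) h.left_ne_mid.symm he).mono
    fun b _ => ?_ : IsFan inc s (fun _ => T \ {s}) _).exists_tight hodd hsZ hZT
      (fun c g d hm hc => ?_) h.inc_right hvZ hwZ fun g hg => ?_)
  · rcases eq_or_ne b a with rfl | hne <;> simp_all
  · rcases (hp.mem_usedDarts_extend ha).1 hm with h | hm
    · cases h
      exact htZ
    · exact hZ.no_entry c g d (usedDarts_congr_cut hcut ▸ hm) hc
  · rw [exists_mem_edges_extend ha]
    refine ⟨?_, fun hgf => or_iff_not_imp_left.2 fun hge => ?_⟩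
    · rintro (rfl | ⟨b, hb, hgb⟩) rfl
      exacts [h.edge_ne rfl, hf b hb hgb]
    · exact hcut ▸ hZ.covers g ((mem_cut_congr (h.of_ne g hge hgf)).2 hg)

theorem linked_or_tight (h : IsSplit inc inc' e f t v w)
    (hodd : HasNoOddCut inc T) (ht : t ∈ T) (hts : t ≠ s) (hvs : v ≠ s) (hws : w ≠ s)
    (hl : Linked inc T s) : Linked inc' T s ∨ ∃ Z, Tight inc T s Z ∧ v ∈ Z := by
  classical
  obtain ⟨p, hp, he⟩ | hZ := hl.exists_avoiding h.inc_left ht hts hvs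
  swap
  · exact .inr hZ
  have hcut := h.cut_singleton hts hvs hws
  by_cases! hu : ∀ a ∈ cut inc {s}, f ∉ edges (p a)
  · exact .inl ⟨p, hp.transfer hcut.le fun b hb => h.inc_eq (S := {g | g ∈ edges (p b)})
      (he b (hcut.le hb)) (hu b (hcut.le hb))⟩
  obtain ⟨a, ha, hfa⟩ := hu
  obtain ⟨c, d, hm⟩ := (mem_edges_iff s).1 hfa
  obtain ⟨b, _, hW⟩ := hp.exists_end a ha
  obtain ⟨hi, hne⟩ := hW.inc_of_mem_darts hm
  obtain ⟨l₁, l₂, hpa, hW₁, -⟩ := hW.mem_darts_iff.1 hm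
  have hf := hp.notMem_shorten ha hpa (g := f) (by simp)
  have he' : ∀ b ∈ cut inc {s}, e ∉ edges (Function.update p a l₁ b) := fun b hb heb => by
    rcases eq_or_ne b a with rfl | hne
    · exact he b hb (by simp_all)
    · exact he b hb (by simpa [hne] using heb)
  have hsT : ∀ a ∈ cut inc {s}, s ∉ T \ {s} := fun _ _ h => h.2 rfl
  rcases Sym2.eq_iff.1 (h.inc_right.symm.trans hi) with ⟨rfl, rfl⟩ | ⟨rfl, rfl⟩
  · exact h.linked_or_tight_of_stuck hodd ht hts hvs hws (hp.shorten ha hpa hW₁ hvs hsT) ha he' hf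
  · have h₁ : IsFan inc' s _ _ := (hp.shorten ha hpa hW₁ hws hsT).transfer hcut.le fun b hb =>
      h.inc_eq (S := {g | g ∈ edges (Function.update p a l₁ b)}) (he' b (hcut.le hb))
        (hf b (hcut.le hb))
    refine .inl ⟨_, (h₁.extend (hcut.ge ha) (h.inc'_left.trans Sym2.eq_swap) h.left_ne_right.symm
      fun b hb => he' b (hcut.le hb)).mono fun b _ => ?_⟩
    rcases eq_or_ne b a with rfl | hne <;> simp_all

end IsSplit

end Delete

/-! ### Removing a single path -/

section Removable

/-- A trail from `t` to `b` with first edge `e`, followed by `l` from `v` on, that meets the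
terminals only in its ends; its edges are to become one path of the system sought. -/
structure IsTTrail (inc : E → Sym2 V) (T : Set V) (t : V) (e : E) (v : V) (l : List (E × V))
    (b : V) : Prop where
  isWalk : IsWalk inc t ((e, v) :: l) b
  left_mem : t ∈ T
  right_mem : b ∈ T
  ne : t ≠ b
  nodup : (edges ((e, v) :: l)).Nodup
  tail_notMem : ∀ c g d, (c, g, d) ∈ darts v l → c ∉ T

/-- Some trail between terminals starts at `t` with the edge `e` and can be deleted without
destroying the linkedness of any terminal. -/
def Removable [Nonempty V] (inc : E → Sym2 V) (T : Set V) (t : V) (e : E) : Prop :=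
  ∃ v l b, IsTTrail inc T t e v l b ∧
    ∀ s ∈ T, Linked (delete inc {g | g ∈ edges ((e, v) :: l)}) T s

/-- Edge-disjoint ways back to `s` inside `X`: the walk `ρ g` leads to `s` from the end in `X` of
the edge `g` of the cut of `X`. -/
structure IsReturn (inc : E → Sym2 V) (s : V) (X : Set V) (ρ : E → List (E × V)) : Prop where
  isWalk : ∀ g y z, inc g = s(y, z) → y ∉ X → z ∈ X → IsWalk inc z (ρ g) s
  nodup : ∀ g ∈ cut inc X, (edges (ρ g)).Nodup
  inside : ∀ g y z, inc g = s(y, z) → y ∉ X → z ∈ X → ∀ c e d, (c, e, d) ∈ darts z (ρ g) →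
    c ∈ X ∧ c ≠ s ∧ d ∈ X
  eq_of_mem : ∀ g ∈ cut inc X, ∀ g' ∈ cut inc X, ∀ e, e ∈ edges (ρ g) → e ∈ edges (ρ g') → g = g'

variable {inc inc' : E → Sym2 V} {s t v w x y b z : V} {a e f g : E} {T X : Set V} {F : Set E}
  {D : E → Set V} {p q r σ ρ : E → List (E × V)} {l m : List (E × V)}

theorem IsExitFan.exists_return (h : IsExitFan inc s X σ) (ha : a ∈ cut inc {s})
    (hga : g ∈ edges (σ a)) (hi : inc g = s(y, z)) (hy : y ∉ X) (hz : z ∈ X) :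
    ∃ n, σ a = n ++ [(g, y)] ∧ IsWalk inc s n z ∧
      ∀ c e d, (c, e, d) ∈ darts s n → c ∈ X ∧ d ∈ X ∧ d ≠ s := by
  obtain ⟨n, g', u, y', hn, hW, hi', hu, hy', -⟩ := h.exists_last ha
  obtain rfl : g = g' := h.cut_inter_unique ha ((mem_cut_iff hi).2 (.inr ⟨hz, hy⟩))
    ((mem_cut_iff hi').2 (.inl ⟨hu, hy'⟩)) hga (by simp [hn])
  obtain ⟨rfl, rfl⟩ : y = y' ∧ z = u := by
    rcases Sym2.eq_iff.1 (hi.symm.trans hi') with ⟨rfl, rfl⟩ | h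
    exacts [(hy hu).elim, h]
  have hsub : ∀ c e d, (c, e, d) ∈ darts s n → (c, e, d) ∈ usedDarts inc s σ :=
    fun c e d hm => ⟨a, ha, by simp [hn, hW.darts_append, hm]⟩
  refine ⟨n, hn, hW, fun c e d hm => ?_⟩
  have hX := hW.mem_of_tails_mem (fun c e d hm => h.tail_mem c e d (hsub c e d hm)) hz c e d hm
  refine ⟨hX.1, hX.2, ?_⟩
  rintro rfl
  obtain ⟨hi, hne⟩ := hW.inc_of_mem_darts hm
  exact hne (h.tail_eq (hsub c e d hm) (mem_cut_singleton_right hi hne))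

theorem IsExitFan.exists_isReturn (h : IsExitFan inc s X σ)
    (hcov : ∀ g ∈ cut inc X, ∃ a ∈ cut inc {s}, g ∈ edges (σ a)) :
    ∃ ρ, IsReturn inc s X ρ ∧ ∀ g ∈ cut inc X, ∀ a ∈ cut inc {s}, g ∈ edges (σ a) →
      ∀ e, e ∈ edges (σ a) ↔ e = g ∨ e ∈ edges (ρ g) := by
  have key : ∀ g ∈ cut inc X, ∃ a ∈ cut inc {s}, ∃ n y z, inc g = s(y, z) ∧ y ∉ X ∧ z ∈ X ∧
      σ a = n ++ [(g, y)] ∧ IsWalk inc s n z ∧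
      ∀ c e d, (c, e, d) ∈ darts s n → c ∈ X ∧ d ∈ X ∧ d ≠ s := by
    rintro g ⟨z, y, hi, hz, hy⟩
    obtain ⟨a, ha, hga⟩ := hcov g ⟨z, y, hi, hz, hy⟩
    obtain ⟨n, hn⟩ := h.exists_return ha hga (hi.trans Sym2.eq_swap) hy hz
    exact ⟨a, ha, n, y, z, hi.trans Sym2.eq_swap, hy, hz, hn⟩
  have : Nonempty V := ⟨s⟩
  choose! α hα n y z hi hy _ hσ hW hin using key
  have hend : ∀ g y' z', inc g = s(y', z') → y' ∉ X → z' ∈ X → g ∈ cut inc X ∧ z g = z' := by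
    intro g y' z' hg hy' hz'
    have hgX : g ∈ cut inc X := (mem_cut_iff hg).2 (.inr ⟨hz', hy'⟩)
    refine ⟨hgX, ?_⟩
    rcases Sym2.eq_iff.1 ((hi g hgX).symm.trans hg) with ⟨-, h⟩ | ⟨h, -⟩
    exacts [h, (hy g hgX (h ▸ hz')).elim]
  refine ⟨fun g => reverse s (n g), ⟨fun g y' z' hg hy' hz' => ?_, fun g hg => ?_,
    fun g y' z' hg hy' hz' c e d hm => ?_, fun g hg g' hg' e he he' => ?_⟩,
    fun g hg a ha hga e => ?_⟩
  · obtain ⟨hgX, rfl⟩ := hend g y' z' hg hy' hz'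
    exact (hW g hgX).reverse
  · have := h.nodup _ (hα g hg)
    rw [hσ g hg, edges_append, List.nodup_append'] at this
    simpa [edges_reverse] using this.1
  · obtain ⟨hgX, rfl⟩ := hend g y' z' hg hy' hz'
    obtain ⟨hd, hc, hcs⟩ := hin g hgX d e c ((hW g hgX).mem_darts_reverse.1 hm)
    exact ⟨hc, hcs, hd⟩
  · simp only [edges_reverse, List.mem_reverse] at he he'
    have hα' : α g = α g' := h.eq_of_mem _ (hα g hg) _ (hα g' hg') e (by simp [hσ g hg, he])
      (by simp [hσ g' hg', he'])
    exact h.cut_inter_unique (hα g hg) hg hg' (by simp [hσ g hg]) (by simp [hα', hσ g' hg'])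
  · obtain rfl := h.eq_of_mem a ha _ (hα g hg) g hga (by simp [hσ g hg])
    simp [hσ g hg, edges_reverse, or_comm]

theorem IsReturn.mem_of_mem (h : IsReturn inc s X ρ) (hg : g ∈ cut inc X) (he : e ∈ edges (ρ g)) :
    ∀ x ∈ inc e, x ∈ X := by
  obtain ⟨z, y, hi, hz, hy⟩ := hg
  rw [Sym2.eq_swap] at hi
  obtain ⟨c, d, hm⟩ := (mem_edges_iff z).1 he
  obtain ⟨hc, -, hd⟩ := h.inside g y z hi hy hz c e d hm
  rw [((h.isWalk g y z hi hy hz).inc_of_mem_darts hm).1]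
  simp [hc, hd]

theorem IsReturn.exists_linkage (h : IsReturn inc s X ρ) (hX : ∀ t ∈ T, t ∈ X → t = s)
    (hs : s ∈ T) (ht : t ∈ T) (hts : t ≠ s) (hl : Linked inc T t) :
    ∃ q r : E → List (E × V), IsFan inc t (fun _ => T \ {t}) (fun a => q a ++ r a) ∧
      (∀ c g d, (c, g, d) ∈ usedDarts inc t q → c ∉ X ∧ (c ∈ T → c = t)) ∧
      ∀ a ∈ cut inc {t}, r a = [] ∨ ∃ g ∈ cut inc X, g ∈ edges (q a) ∧ r a = ρ g := by
  have htX : t ∉ X := fun h => hts (hX t ht h)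
  let Y : Set V := (X ∪ T \ {t})ᶜ
  have hY : ∀ {c}, c ∈ Y ↔ c ∉ X ∧ (c ∈ T → c = t) := by simp [Y]
  obtain ⟨p, hp⟩ := hl
  obtain ⟨q, hq, -, hqt⟩ := (hp.mono fun _ _ _ hb => Set.notMem_compl_iff.2 (.inr hb) :
    IsFan inc t (fun _ => Yᶜ) p).exists_truncation (Set.notMem_compl_iff.2 (hY.2 ⟨htX, by simp⟩))
  have hqY : IsExitFan inc t Y q := ⟨hq, fun c g d hm => Set.notMem_compl_iff.1 (hqt hm)⟩
  have key : ∀ a ∈ cut inc {t}, ∃ m, (m = [] ∨ ∃ g ∈ cut inc X, g ∈ edges (q a) ∧ m = ρ g) ∧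
      ∃ z, ∃ b ∈ T \ {t}, IsWalk inc t (q a) z ∧ IsWalk inc z m b ∧
        ∀ c g d, (c, g, d) ∈ darts z m → c ∉ Y ∧ d ∉ Y := by
    intro a ha
    obtain ⟨n, g, u, w, hn, -, hi, hu, hw, -⟩ := hqY.exists_last ha
    have hga : g ∈ edges (q a) := by simp [hn]
    have hW := hqY.isWalk_of_mem ha hga hi hu hw
    by_cases hwX : w ∈ X
    · have huX := (hY.1 hu).1
      refine ⟨ρ g, .inr ⟨g, (mem_cut_iff hi).2 (.inr ⟨hwX, huX⟩), hga, rfl⟩, w, s,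
        ⟨hs, hts.symm⟩, hW, h.isWalk g u w hi huX hwX, fun c e d hm => ?_⟩
      obtain ⟨hc, -, hd⟩ := h.inside g u w hi huX hwX c e d hm
      exact ⟨fun h => (hY.1 h).1 hc, fun h => (hY.1 h).1 hd⟩
    · exact ⟨[], .inl rfl, w, w, (Set.notMem_compl_iff.1 hw).resolve_left hwX, hW, by simp⟩
  choose! r hr hr' using key
  refine ⟨q, r, Continues.isFan_append (X := Y) hr' hqY (fun a ha => ?_)
    (fun a ha a' ha' e he he' => ?_), fun c g d hm => hY.1 (hqY.tail_mem c g d hm), hr⟩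
  · rcases hr a ha with h₀ | ⟨g, hg, -, h₀⟩ <;> rw [h₀]
    exacts [List.nodup_nil, h.nodup g hg]
  · rcases hr a ha with h₀ | ⟨g, hg, hga, h₀⟩ <;> rw [h₀] at he
    · simp at he
    rcases hr a' ha' with h₀' | ⟨g', hg', hga', h₀'⟩ <;> rw [h₀'] at he'
    · simp at he'
    exact hq.eq_of_mem a ha a' ha' g hga (h.eq_of_mem g hg g' hg' e he he' ▸ hga')

theorem IsReturn.linked_delete [Nonempty V] (h : IsReturn inc s X ρ)
    (hX : ∀ t ∈ T, t ∈ X → t = s) (hs : s ∈ T) (hw : w ∈ T) (hws : w ≠ s) (hl : Linked inc T w)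
    (he : inc e = s(t, v)) (ht : t ∈ T) (htX : t ∉ X) (hv : v ∈ X) :
    Linked (delete inc {g | g ∈ edges ((e, v) :: ρ e)}) T w := by
  obtain ⟨q, r, hqr, hq, hr⟩ := h.exists_linkage hX hs hw hws hl
  have heX : e ∈ cut inc X := (mem_cut_iff he).2 (.inr ⟨hv, htX⟩)
  have hqin : ∀ a ∈ cut inc {w}, ∀ g ∈ edges (q a), ∃ c d, (c, g, d) ∈ usedDarts inc w q ∧
      inc g = s(c, d) ∧ c ≠ d := fun a ha g hg => by
    obtain ⟨c, d, hm⟩ := (mem_edges_iff w).1 hg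
    obtain ⟨b, -, hW⟩ := hqr.exists_end a ha
    obtain ⟨z, hW, -⟩ := isWalk_append.1 hW
    exact ⟨c, d, ⟨a, ha, hm⟩, hW.inc_of_mem_darts hm⟩
  have heq : ∀ a ∈ cut inc {w}, e ∈ edges (q a) → a = e := fun a ha hea => by
    obtain ⟨c, d, hm, hi, hne⟩ := hqin a ha e hea
    obtain ⟨hc, hcT⟩ := hq c e d hm
    rcases Sym2.eq_iff.1 (he.symm.trans hi) with ⟨rfl, rfl⟩ | ⟨rfl, rfl⟩
    · obtain rfl := hcT ht
      exact hqr.eq_of_mem_cut ha (mem_cut_singleton_left hi hne) (by simp [hea])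
    · exact (hc hv).elim
  refine ⟨_, hqr.to_delete fun a ha haP g hg hgP => ?_⟩
  have haP' : a ≠ e := fun h => haP (by simp [h])
  simp only [edges_append, List.mem_append, edges_cons, List.mem_cons, Set.mem_ofPred_eq]
    at hg hgP
  rcases hgP with rfl | hgP <;> rcases hg with hg | hg
  · exact haP' (heq a ha hg)
  · obtain h₀ | ⟨g', hg', -, h₀⟩ := hr a ha <;> rw [h₀] at hg
    · simp at hg
    · exact htX (h.mem_of_mem hg' hg t (by simp [he]))
  · obtain ⟨c, d, hm, hi, -⟩ := hqin a ha g hg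
    exact (hq c g d hm).1 (h.mem_of_mem heX hgP c (by simp [hi]))
  · obtain h₀ | ⟨g', hg', hga, h₀⟩ := hr a ha <;> rw [h₀] at hg
    · simp at hg
    · obtain rfl := h.eq_of_mem e heX g' hg' g hgP hg
      exact haP' (heq a ha hga)

/-- The edge `e` continues along the linkage of `s` that saturates `X`, traversed backwards. -/
theorem Tight.removable [Nonempty V] (hX : Tight inc T s X) (hs : s ∈ T)
    (hl : ∀ s ∈ T, Linked inc T s) (he : inc e = s(t, v)) (ht : t ∈ T) (hts : t ≠ s) (hv : v ∈ X) :
    Removable inc T t e := by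
  obtain ⟨p, hp, hpX⟩ := hX.exists_saturates
  have htX : t ∉ X := fun h => hts (hX.eq_of_mem t ht h)
  have heX : e ∈ cut inc X := (mem_cut_iff he).2 (.inr ⟨hv, htX⟩)
  obtain ⟨σ, r, hσ, hpσ, hr⟩ := hp.exists_exitFan hX.mem
    (fun b hb hbX => hb.2 (hX.eq_of_mem b hb.1 hbX)) hpX.no_entry
  have hcov : ∀ g ∈ cut inc X, ∃ a ∈ cut inc {s}, g ∈ edges (σ a) := fun g hg => by
    obtain ⟨a, ha, hga⟩ := hpX.covers g hg
    rw [hpσ a ha, edges_append, List.mem_append] at hga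
    exact ⟨a, ha, hga.resolve_right (hr.notMem_of_mem_cut ha hg)⟩
  obtain ⟨ρ, hρ, hσρ⟩ := hσ.exists_isReturn hcov
  obtain ⟨a₀, ha₀, hea₀⟩ := hcov e heX
  have hP : ∀ g, g ∈ edges ((e, v) :: ρ e) ↔ g ∈ edges (σ a₀) := fun g => by
    simp [hσρ e heX a₀ ha₀ hea₀]
  have hin := hρ.inside e t v he htX hv
  refine ⟨v, ρ e, s, ⟨⟨he, fun h => htX (h ▸ hv), hρ.isWalk e t v he htX hv⟩, ht, hs, hts,
    List.nodup_cons.2 ⟨fun h => htX (hρ.mem_of_mem heX h t (by simp [he])), hρ.nodup e heX⟩,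
    fun c g d hm hc => (hin c g d hm).2.1 (hX.eq_of_mem c hc (hin c g d hm).1)⟩, fun w hw => ?_⟩
  rcases eq_or_ne w s with rfl | hws
  · refine ⟨p, hp.to_delete fun a ha haP g hg hgP => haP ?_⟩
    have hga₀ : g ∈ edges (p a₀) := by simp [hpσ a₀ ha₀, (hP g).1 hgP]
    obtain rfl := hp.eq_of_mem a ha a₀ ha₀ g hg hga₀
    exact (hP a).2 (hσ.self_mem ha)
  · exact hρ.linked_delete hX.eq_of_mem hs hw hws (hl w hw) he ht htX hv

end Removable

/-! ### Removing a path through every edge at a terminal -/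

section Splitting

open scoped symmDiff

variable {inc inc' : E → Sym2 V} {s t v w : V} {a e f : E} {B T : Set V}
  {D : E → Set V} {p q : E → List (E × V)} {k l m : List (E × V)}

theorem Linked.congr_isDiag (h : Linked inc T s)
    (hinc : ∀ g, inc g = inc' g ∨ (inc g).IsDiag ∧ (inc' g).IsDiag) : Linked inc' T s := by
  obtain ⟨p, hp⟩ := h
  have hcut : cut inc' {s} ⊆ cut inc {s} := fun g hg => by
    rcases hinc g with h | h
    · exact (mem_cut_congr h).2 hg
    · exact (notMem_cut_of_isDiag h.2 hg).elim
  refine ⟨p, hp.transfer hcut fun a ha g hg => ?_⟩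
  obtain ⟨b, -, hW⟩ := hp.exists_end a (hcut ha)
  exact (hinc g).resolve_right fun h => hW.not_isDiag hg h.1

/-- A truncated linkage uses an edge between two terminals only as a member of its own. -/
theorem Linked.delete_edge [Nonempty V] (hl : Linked inc T s) (he : inc e = s(t, v)) (ht : t ∈ T)
    (hv : v ∈ T) : Linked (delete inc {e}) T s := by
  obtain ⟨p, hp⟩ := hl
  obtain ⟨q, hq, -, hqT⟩ := hp.exists_truncation fun h => h.2 rfl
  refine ⟨q, hq.to_delete ?_⟩
  rintro a ha hae g hg rfl
  obtain ⟨c, d, hm⟩ := (mem_edges_iff s).1 hg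
  obtain ⟨hi, hne⟩ := hq.inc_of_mem_usedDarts ⟨a, ha, hm⟩
  have hc : c ∈ T := by
    rcases Sym2.eq_iff.1 (he.symm.trans hi) with ⟨rfl, -⟩ | ⟨-, rfl⟩ <;> assumption
  obtain rfl : c = s := by_contra fun hcs => hqT ⟨a, ha, hm⟩ ⟨hc, hcs⟩
  exact hae (hq.eq_of_mem_cut ha (mem_cut_singleton_left hi hne) hg)

theorem removable_of_mem [Nonempty V] (hl : ∀ s ∈ T, Linked inc T s) (he : inc e = s(t, v))
    (ht : t ∈ T) (hv : v ∈ T) (htv : t ≠ v) : Removable inc T t e := by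
  refine ⟨v, [], v, ⟨⟨he, htv, rfl⟩, ht, hv, htv, by simp, by simp⟩, fun s hs => ?_⟩
  simpa using (hl s hs).delete_edge he ht hv

theorem exists_isSplit (he : inc e = s(t, v)) (hf : inc f = s(v, w)) (htv : t ≠ v) (hvw : v ≠ w)
    (htw : t ≠ w) : ∃ inc', IsSplit inc inc' e f t v w := by
  classical
  have hef : e ≠ f := by
    rintro rfl
    rcases Sym2.eq_iff.1 (he.symm.trans hf) with ⟨h, -⟩ | ⟨h, -⟩
    exacts [htv h, htw h]
  exact ⟨Function.update (Function.update inc f (Sym2.diag v)) e s(t, w), he, hf, by simp,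
    by simp [hef.symm], fun g hge hgf => by simp [hge, hgf], hef, htv, hvw, htw⟩

theorem IsFan.delete_member [Nonempty V] (h : IsFan inc s D p) (hf : f ∈ cut inc {s}) :
    IsFan (delete inc {f}) s D p := by
  refine h.to_delete ?_
  rintro a ha haf g hg rfl
  exact haf (h.eq_of_mem a ha g hf g hg (h.self_mem hf))

theorem IsFan.switch [Nonempty V] [DecidableEq E] (h : IsFan inc s (fun _ => B) p)
    (ha : a ∈ cut inc {s}) (hf : f ∈ cut inc {s}) (haf : a ≠ f) (hpa : p a = l ++ m)
    (hl : IsWalk inc s l v) (hpf : p f = (f, v) :: k) :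
    IsFan (delete inc {f}) s (fun _ => B) (Function.update p a (l ++ k)) := by
  obtain ⟨b, hb, hWf⟩ := h.exists_end f hf
  rw [hpf] at hWf
  obtain ⟨-, hsv, hWk⟩ := hWf
  obtain ⟨z, l₁, hl₁⟩ := h.exists_cons_of_append (C := {v}) ha hsv hpa ⟨v, rfl, hl⟩
  have hdisj : ∀ g ∈ edges (p a), g ∉ edges (p f) := fun g hg hgf =>
    haf (h.eq_of_mem a ha f hf g hg hgf)
  have hna := h.nodup a ha
  have hnf := h.nodup f hf
  have hl_sub : ∀ g ∈ edges l, g ∈ edges (p a) := by simp +contextual [hpa]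
  have hk_sub : ∀ g ∈ edges k, g ∈ edges (p f) := by simp +contextual [hpf]
  rw [hpa, edges_append, List.nodup_append'] at hna
  rw [hpf, edges_cons, List.nodup_cons] at hnf
  have hlk : ∀ g ∈ edges (l ++ k), g ∉ ({f} : Set E) := by
    rintro g hg rfl
    rw [edges_append, List.mem_append] at hg
    exact hg.elim (fun hg => hdisj g (hl_sub g hg) (h.self_mem hf)) hnf.1
  refine ((h.delete_member hf).update (a := a) (m := l ++ k) (C := B) ⟨z, l₁ ++ k, by rw [hl₁]; rfl⟩
    ⟨b, hb, isWalk_delete_iff.2 ⟨hl.append hWk, hlk⟩⟩ ?_ fun b hb hba g hg hgb => ?_).mono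
      fun b _ => by simp [Function.update_apply]
  · rw [edges_append, List.nodup_append']
    exact ⟨hna.1, hnf.2, fun g hg hgk => hdisj g (hl_sub g hg) (hk_sub g hgk)⟩
  · obtain ⟨hb, hbf⟩ := mem_cut_delete_iff.1 hb
    rw [edges_append, List.mem_append] at hg
    rcases hg with hg | hg
    · exact hba (h.eq_of_mem b hb a ha g hgb (hl_sub g hg))
    · exact hbf (h.eq_of_mem b hb f hf g hgb (hk_sub g hg))

namespace IsSplit

theorem hasNoOddCut (h : IsSplit inc inc' e f t v w) (ht : t ∈ T) (hodd : HasNoOddCut inc T) :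
    HasNoOddCut inc' T := by
  intro Y hY
  have htY := hY t ht
  have hsymm : cut inc Y ∆ cut inc' Y = {g | (g = e ∨ g = f) ∧ ¬(v ∈ Y ↔ w ∈ Y)} := by
    ext g
    rcases eq_or_ne g e with rfl | hge
    · simp [Set.mem_symmDiff, mem_cut_iff h.inc_left, mem_cut_iff h.inc'_left, htY]
      tauto
    rcases eq_or_ne g f with rfl | hgf
    · simp [Set.mem_symmDiff, mem_cut_iff h.inc_right, notMem_cut_of_isDiag h.isDiag]
      tauto
    · simp [Set.mem_symmDiff, mem_cut_congr (h.of_ne g hge hgf), hge, hgf]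
  have hpair : cut inc Y ∆ cut inc' Y = ∅ ∨ cut inc Y ∆ cut inc' Y = {e, f} := by
    rw [hsymm]
    by_cases hvw : v ∈ Y ↔ w ∈ Y
    · simp [hvw]
    · exact .inr (by ext; simp [hvw])
  refine (hodd Y hY).of_symmDiff ?_ ?_ <;> rcases hpair with h₀ | h₀ <;> rw [h₀]
  · simp
  · simp
  · simp
  · simp [Set.ncard_pair h.edge_ne]

theorem removable [Nonempty V] (h : IsSplit inc inc' e f t v w) (hv : v ∉ T)
    (hr : Removable inc' T t e) : Removable inc T t e := by
  obtain ⟨w', k, b, hk, hl⟩ := hr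
  obtain ⟨hi, -, hW⟩ := isWalk_cons.1 hk.isWalk
  obtain rfl : w = w' := Sym2.congr_right.1 (h.inc'_left.symm.trans hi)
  have hf : f ∉ edges k := fun hf => hW.not_isDiag hf h.isDiag
  obtain ⟨he, hn⟩ := List.nodup_cons.1 hk.nodup
  have hWk : IsWalk inc w k b := hW.congr fun g hg =>
    (h.inc_eq (S := {g | g ∈ edges k}) he hf g hg).symm
  refine ⟨v, (f, w) :: k, b, ⟨⟨h.inc_left, h.left_ne_mid, h.inc_right, h.mid_ne_right, hWk⟩,
    hk.left_mem, hk.right_mem, hk.ne, ?_, ?_⟩, fun s hs => (hl s hs).congr_isDiag fun g => ?_⟩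
  · exact List.nodup_cons.2 ⟨by simpa [h.edge_ne] using he, List.nodup_cons.2 ⟨hf, hn⟩⟩
  · rintro c g d (_ | ⟨_, hm⟩)
    exacts [hv, hk.tail_notMem c g d hm]
  · by_cases hg : g ∈ edges ((e, w) :: k)
    · exact .inr ⟨isDiag_delete hg, isDiag_delete (by simp at hg ⊢; tauto)⟩
    rw [delete_of_notMem (F := {g | g ∈ edges ((e, w) :: k)}) hg]
    by_cases hgf : g = f
    · exact .inr ⟨hgf ▸ h.isDiag, isDiag_delete (by simp [hgf])⟩
    · rw [delete_of_notMem (by simp at hg ⊢; tauto), h.of_ne g (by simp at hg; tauto) hgf]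
      exact .inl rfl

theorem isFan_left [DecidableEq E] (h : IsSplit inc inc' e f t v w) (hq : IsFan inc t D q)
    (hqe : q e = (e, v) :: (f, w) :: k) :
    IsFan inc' t D (Function.update q e ((e, w) :: k)) := by
  have hee : e ∈ cut inc {t} := mem_cut_singleton_left h.inc_left h.left_ne_mid
  have hrest : ∀ b ∈ cut inc' {t}, b ≠ e → b ∈ cut inc {t} := fun b hb hbe =>
    (mem_cut_congr (h.of_ne b hbe fun hbf => notMem_cut_of_isDiag h.isDiag (hbf ▸ hb))).1 hb
  have hdisj : ∀ b ∈ cut inc' {t}, b ≠ e → ∀ g ∈ edges (q e), g ∉ edges (q b) :=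
    fun b hb hbe g hg hgb => hbe (hq.eq_of_mem b (hrest b hb hbe) e hee g hgb hg)
  obtain ⟨b, hb, hW⟩ := hq.exists_end e hee
  have hn := hq.nodup e hee
  rw [hqe] at hdisj hn hW
  obtain ⟨-, -, -, -, hW⟩ := hW
  simp only [edges_cons, List.nodup_cons, List.mem_cons, not_or] at hn
  rw [← Function.update_eq_self e D]
  refine hq.replace (fun b hb hbe => ⟨hrest b hb hbe, ?_⟩) ⟨w, k, rfl⟩
    ⟨b, hb, h.inc'_left, h.left_ne_right, hW.congr (h.inc_eq (S := {g | g ∈ edges k}) ?_ ?_)⟩ ?_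
    fun b hb hbe g hg => hdisj b hb hbe g ?_
  · exact h.inc_eq (S := {g | g ∈ edges (q b)}) (hdisj b hb hbe e (by simp))
      (hdisj b hb hbe f (by simp))
  · exact hn.1.2
  · exact hn.2.1
  · exact List.nodup_cons.2 ⟨hn.1.2, hn.2.2⟩
  · simp only [edges_cons, List.mem_cons] at hg ⊢
    tauto

/-- In a linkage of `w`, a member using `e` ends there, and may be continued along the member
starting with `f` instead. -/
theorem exists_isFan_avoiding [Nonempty V] (h : IsSplit inc inc' e f t v w) (ht : t ∈ T)
    (hl : Linked inc T w) : ∃ p, IsFan (delete inc {f}) w (fun _ => T \ {w}) p ∧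
      ∀ a ∈ cut (delete inc {f}) {w}, e ∉ edges (p a) := by
  classical
  obtain ⟨p, hp⟩ := hl
  obtain ⟨p, hp, -, hpT⟩ := hp.exists_truncation fun h => h.2 rfl
  have hf : f ∈ cut inc {w} := mem_cut_singleton_right h.inc_right h.mid_ne_right
  by_cases! he : ∀ a ∈ cut (delete inc {f}) {w}, e ∉ edges (p a)
  · exact ⟨p, hp.delete_member hf, he⟩
  obtain ⟨a, ha, hea⟩ := he
  obtain ⟨ha, haf⟩ := mem_cut_delete_iff.1 ha
  obtain ⟨c, d, hm⟩ := (mem_edges_iff w).1 hea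
  obtain ⟨hi, hne⟩ := hp.inc_of_mem_usedDarts ⟨a, ha, hm⟩
  obtain ⟨rfl, rfl⟩ : v = c ∧ t = d := by
    rcases Sym2.eq_iff.1 (h.inc_left.symm.trans hi) with ⟨rfl, rfl⟩ | ⟨rfl, rfl⟩
    · exact (hpT ⟨a, ha, hm⟩ ⟨ht, h.left_ne_right⟩).elim
    · exact ⟨rfl, rfl⟩
  obtain ⟨b, -, hW⟩ := hp.exists_end a ha
  obtain ⟨l, l', hpa, hl, -⟩ := hW.mem_darts_iff.1 hm
  obtain ⟨k, hk⟩ : ∃ k, p f = (f, v) :: k := by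
    obtain ⟨z, k, hk⟩ := hp.exists_cons f hf
    obtain ⟨b, -, hW⟩ := hp.exists_end f hf
    rw [hk] at hW
    exact ⟨k, by rw [hk, Sym2.congr_left.1 (h.inc_right.symm.trans (hW.1.trans Sym2.eq_swap))]⟩
  refine ⟨_, hp.switch ha hf haf hpa hl hk, fun b hb heb => ?_⟩
  obtain ⟨hb, -⟩ := mem_cut_delete_iff.1 hb
  rcases eq_or_ne b a with rfl | hba
  · simp only [Function.update_self, edges_append, List.mem_append] at heb
    have hn := hp.nodup b hb
    simp only [hpa, edges_append, List.nodup_append'] at hn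
    exact heb.elim (fun heb => hn.2.2 heb (by simp)) fun heb =>
      haf (hp.eq_of_mem b hb f hf e hea (by simp [hk, heb]))
  · rw [Function.update_of_ne hba] at heb
    exact hba (hp.eq_of_mem b hb a ha e heb hea)

theorem linked_right [Nonempty V] (h : IsSplit inc inc' e f t v w) (ht : t ∈ T)
    (hl : Linked inc T w) : Linked inc' T w := by
  classical
  obtain ⟨p, hp, he⟩ := h.exists_isFan_avoiding ht hl
  have hrest : ∀ b ∈ cut inc' {w}, b ≠ e → b ∈ cut (delete inc {f}) {w} := fun b hb hbe => by
    have hbf : b ≠ f := fun hbf => notMem_cut_of_isDiag h.isDiag (hbf ▸ hb)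
    exact mem_cut_delete_iff.2 ⟨(mem_cut_congr (h.of_ne b hbe hbf)).1 hb, hbf⟩
  have hp' := hp.replace (inc' := inc') (a := e) (m := [(e, t)]) (C := T \ {w})
    (fun b hb hbe => ⟨hrest b hb hbe, fun g hg => ?_⟩) ⟨t, [], rfl⟩
    ⟨t, ⟨ht, h.left_ne_right⟩, h.inc'_left.trans Sym2.eq_swap, h.left_ne_right.symm, rfl⟩ (by simp)
    fun b hb hbe => by simpa using he b (hrest b hb hbe)
  · exact ⟨_, hp'.mono fun b _ => by simp [Function.update_apply]⟩
  · have hgf := hp.notMem_of_delete b (hrest b hb hbe) g hg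
    rw [delete_of_notMem hgf, h.of_ne g (fun hge => he b (hrest b hb hbe) (hge ▸ hg)) hgf]

end IsSplit

theorem IsFan.removable [Nonempty V] (hq : IsFan inc t (fun _ => T \ {t}) q)
    (hodd : HasNoOddCut inc T) (hl : ∀ s ∈ T, Linked inc T s) (ht : t ∈ T)
    (he : e ∈ cut inc {t}) (hqe : q e = (e, v) :: l) : Removable inc T t e := by
  classical
  induction l generalizing inc q v with
  | nil =>
    obtain ⟨b, hb, hW⟩ := hq.exists_end e he
    rw [hqe] at hW
    obtain ⟨hi, hne, rfl⟩ := hW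
    exact removable_of_mem hl hi ht hb.1 hne
  | cons x k ih =>
    obtain ⟨f, w⟩ := x
    obtain ⟨b, hb, hW⟩ := hq.exists_end e he
    rw [hqe] at hW
    obtain ⟨hie, htv, hif, hvw, -⟩ := hW
    by_cases hv : v ∈ T
    · exact removable_of_mem hl hie ht hv htv
    by_cases! hZ : ∃ s ∈ T, s ≠ t ∧ ∃ X, Tight inc T s X ∧ v ∈ X
    · obtain ⟨s, hs, hst, X, hX, hvX⟩ := hZ
      exact hX.removable hs hl hie ht hst.symm hvX
    have htw : t ≠ w := by
      rintro rfl
      exact htv (hq.tail_eq (g := f) (c := v) (d := t) ⟨e, he, by simp [hqe]⟩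
        (mem_cut_singleton_right hif hvw)).symm
    obtain ⟨inc', h⟩ := exists_isSplit hie hif htv hvw htw
    have hq' := h.isFan_left hq hqe
    refine h.removable hv (ih hq' (h.hasNoOddCut ht hodd) (fun s hs => ?_)
      (mem_cut_singleton_left h.inc'_left htw) (by simp; rfl))
    rcases eq_or_ne s t with rfl | hst
    · exact ⟨_, hq'⟩
    rcases eq_or_ne s w with rfl | hsw
    · exact h.linked_right ht (hl s hs)
    · refine (h.linked_or_tight hodd ht hst.symm (fun hvs => hv (hvs ▸ hs)) hsw.symm
        (hl s hs)).resolve_right ?_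
      rintro ⟨Z, hZt, hvZ⟩
      exact hZ s hs hst Z hZt hvZ

theorem Linked.removable [Nonempty V] (hodd : HasNoOddCut inc T) (hl : ∀ s ∈ T, Linked inc T s)
    (ht : t ∈ T) (he : e ∈ cut inc {t}) : Removable inc T t e := by
  obtain ⟨q, hq⟩ := hl t ht
  obtain ⟨v, l, hqe⟩ := hq.exists_cons e he
  exact hq.removable hodd hl ht he hqe

end Splitting

/-! ### Countably many edges at the terminals -/

section Countable

open scoped symmDiff

/-- A set of pairwise disjoint edge sets of trails between terminals. -/
structure IsTTrailSystem (inc : E → Sym2 V) (T : Set V) (Q : Set (Set E)) : Prop where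
  isTTrail : ∀ F ∈ Q, ∃ t e v l b, IsTTrail inc T t e v l b ∧ F = {g | g ∈ edges ((e, v) :: l)}
  pairwiseDisjoint : Q.PairwiseDisjoint id

/-- Some edge-disjoint trails between terminals cover all edges at the terminals. -/
def IsCoverable (inc : E → Sym2 V) (T : Set V) : Prop :=
  ∃ Q, IsTTrailSystem inc T Q ∧ ∀ t ∈ T, cut inc {t} ⊆ ⋃₀ Q

/-- A system of trails whose removal preserves the assumptions of the theorem. -/
structure IsStage [Nonempty V] (inc : E → Sym2 V) (T : Set V) (Q : Set (Set E)) : Prop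
    extends IsTTrailSystem inc T Q where
  hasNoOddCut : HasNoOddCut (delete inc (⋃₀ Q)) T
  linked : ∀ s ∈ T, Linked (delete inc (⋃₀ Q)) T s

variable {inc : E → Sym2 V} {t v x y b : V} {e : E} {T : Set V} {F G : Set E} {Q : Set (Set E)}
  {l : List (E × V)}

theorem delete_empty [Nonempty V] : delete inc ∅ = inc :=
  funext fun _ => delete_of_notMem (Set.notMem_empty _)

theorem delete_delete [Nonempty V] : delete (delete inc F) G = delete inc (G ∪ F) := by
  ext1 g
  by_cases hG : g ∈ G <;> by_cases hF : g ∈ F <;> simp [delete, hG, hF]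

theorem HasNoOddCut.delete_trail [Nonempty V] (hodd : HasNoOddCut inc T) (hx : x ∈ T) (hy : y ∈ T)
    (hl : IsWalk inc x l y) (hn : (edges l).Nodup) :
    HasNoOddCut (delete inc {g | g ∈ edges l}) T := by
  intro X hX
  have hsymm :
      cut inc X ∆ cut (delete inc {g | g ∈ edges l}) X = cut inc X ∩ {g | g ∈ edges l} := by
    ext g
    simp only [Set.mem_symmDiff, mem_cut_delete_iff, Set.mem_inter_iff]
    tauto
  refine (hodd X hX).of_symmDiff ?_ ?_ <;> rw [hsymm]
  · exact (finite_edges l).inter_of_right _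
  · exact (hl.even_ncard_cut_iff hn X).2 (iff_of_false (hX x hx) (hX y hy))

theorem IsTTrail.of_delete [Nonempty V] (h : IsTTrail (delete inc F) T t e v l b) :
    IsTTrail inc T t e v l b :=
  { h with isWalk := (isWalk_delete_iff.1 h.isWalk).1 }

theorem IsTTrailSystem.insert [Nonempty V] (h : IsTTrailSystem inc T Q)
    (hl : IsTTrail (delete inc (⋃₀ Q)) T t e v l b) :
    IsTTrailSystem inc T (insert {g | g ∈ edges ((e, v) :: l)} Q) where
  isTTrail := Set.forall_mem_insert.2 ⟨⟨t, e, v, l, b, hl.of_delete, rfl⟩, h.isTTrail⟩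
  pairwiseDisjoint := h.pairwiseDisjoint.insert fun F hF _ => Set.disjoint_left.2 fun g hg hgF =>
    (isWalk_delete_iff.1 hl.isWalk).2 g hg ⟨F, hF, hgF⟩

theorem IsStage.exists_superset [Nonempty V] (h : IsStage inc T Q) (e : E) :
    ∃ Q', IsStage inc T Q' ∧ Q ⊆ Q' ∧ ∀ t ∈ T, e ∈ cut inc {t} → e ∈ ⋃₀ Q' := by
  by_cases! he : ∀ t ∈ T, e ∈ cut inc {t} → e ∈ ⋃₀ Q
  · exact ⟨Q, h, subset_rfl, he⟩
  obtain ⟨t, ht, het, heQ⟩ := he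
  obtain ⟨v, l, b, hl, hlink⟩ :=
    Linked.removable h.hasNoOddCut h.linked ht (mem_cut_delete_iff.2 ⟨het, heQ⟩)
  refine ⟨_, ⟨h.insert hl, ?_, ?_⟩, Set.subset_insert {g | g ∈ edges ((e, v) :: l)} Q,
    fun _ _ _ => ⟨_, Set.mem_insert _ _, by simp⟩⟩ <;> rw [Set.sUnion_insert, ← delete_delete]
  · exact h.hasNoOddCut.delete_trail ht hl.right_mem hl.isWalk hl.nodup
  · exact hlink

theorem IsTTrailSystem.iUnion {S : ℕ → Set (Set E)} (hS : Monotone S)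
    (h : ∀ n, IsTTrailSystem inc T (S n)) : IsTTrailSystem inc T (⋃ n, S n) where
  isTTrail F hF := by
    obtain ⟨n, hn⟩ := Set.mem_iUnion.1 hF
    exact (h n).isTTrail F hn
  pairwiseDisjoint := (Set.pairwiseDisjoint_iUnion hS.directed_le).2 fun n => (h n).pairwiseDisjoint

theorem isCoverable_of_countable (hodd : HasNoOddCut inc T) (hl : ∀ s ∈ T, Linked inc T s)
    (hC : {e | ∃ t ∈ T, e ∈ cut inc {t}}.Countable) : IsCoverable inc T := by
  rcases Set.eq_empty_or_nonempty {e | ∃ t ∈ T, e ∈ cut inc {t}} with hne | hne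
  · exact ⟨∅, ⟨by simp, by simp⟩, fun t ht e he => (hne.subset ⟨t, ht, he⟩).elim⟩
  obtain ⟨f, hf⟩ := hC.exists_eq_range hne
  have : Nonempty V := hne.elim fun e he => he.nonempty
  have h₀ : IsStage inc T ∅ :=
    ⟨⟨by simp, by simp⟩, by simpa [delete_empty], by simpa [delete_empty]⟩
  choose next hnext hsub hcov using fun (Q : {Q // IsStage inc T Q}) => Q.2.exists_superset
  let S : ℕ → {Q // IsStage inc T Q} :=
    Nat.rec ⟨∅, h₀⟩ fun n Q => ⟨next Q (f n), hnext Q (f n)⟩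
  have hS : Monotone fun n => (S n).1 := monotone_nat_of_le_succ fun n => hsub (S n) (f n)
  refine ⟨⋃ n, (S n).1, .iUnion hS fun n => (S n).2.toIsTTrailSystem, fun t ht e he => ?_⟩
  obtain ⟨n, rfl⟩ := hf.subset ⟨t, ht, he⟩
  exact Set.sUnion_mono (Set.subset_iUnion _ (n + 1)) (hcov (S n) (f n) t ht he)

end Countable

/-! ### Even cuts and infinitely connected vertices -/

section Connectivity

variable {inc : E → Sym2 V} {M N : Set E} {A X : Set V} {x y : V}

/-- `x` and `y` lie in the same component of the graph with edge set `N`. -/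
def ConnIn (inc : E → Sym2 V) (N : Set E) : V → V → Prop :=
  Relation.ReflTransGen fun x y => ∃ e ∈ N, inc e = s(x, y)

/-- `x` and `y` are infinitely edge-connected in the graph with edge set `N`. -/
def InfConnIn (inc : E → Sym2 V) (N : Set E) (x y : V) : Prop :=
  ∀ F : Set E, F.Finite → ConnIn inc (N \ F) x y

/-- The set of end-vertices of the edges in `N`. -/
def ends (inc : E → Sym2 V) (N : Set E) : Set V := {x | ∃ e ∈ N, x ∈ inc e}

/-- The union of the components of the graph with edge set `N` that meet `A`. -/
def component (inc : E → Sym2 V) (N : Set E) (A : Set V) : Set V := {y | ∃ x ∈ A, ConnIn inc N x y}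

/-- The graph with edge set `N` has no odd cut. -/
def EvenCuts (inc : E → Sym2 V) (N : Set E) : Prop := ∀ X : Set V, NotOdd (cut inc X ∩ N)

theorem ends_mono (h : M ⊆ N) : ends inc M ⊆ ends inc N := fun _ ⟨e, he, hx⟩ => ⟨e, h he, hx⟩

theorem ConnIn.mono (h : M ⊆ N) (hxy : ConnIn inc M x y) : ConnIn inc N x y :=
  Relation.ReflTransGen.mono (fun _ _ ⟨e, he, hi⟩ => ⟨e, h he, hi⟩) _ _ hxy

theorem ConnIn.exists_finite (h : ConnIn inc N x y) :
    ∃ F : Set E, F.Finite ∧ F ⊆ N ∧ ConnIn inc F x y := by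
  induction h with
  | refl => exact ⟨∅, Set.finite_empty, Set.empty_subset _, .refl⟩
  | tail _ h ih =>
    obtain ⟨e, he, h⟩ := h
    obtain ⟨F, hF, hFN, hc⟩ := ih
    exact ⟨insert e F, hF.insert _, Set.insert_subset he hFN,
      (hc.mono (Set.subset_insert _ _)).tail ⟨e, Set.mem_insert _ _, h⟩⟩

theorem ConnIn.mem_of_disjoint_cut (h : ConnIn inc N x y) (hX : Disjoint (cut inc X) N)
    (hx : x ∈ X) : y ∈ X := by
  induction h with
  | refl => exact hx
  | tail _ h ih =>
    obtain ⟨e, he, h⟩ := h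
    by_contra hy
    exact Set.disjoint_left.1 hX ((mem_cut_iff h).2 (Or.inl ⟨ih, hy⟩)) he

theorem InfConnIn.mem_of_finite_cut (h : InfConnIn inc N x y) (hX : (cut inc X ∩ N).Finite)
    (hx : x ∈ X) : y ∈ X :=
  (h _ hX).mem_of_disjoint_cut (Set.disjoint_left.2 fun _ he he' => he'.2 ⟨he, he'.1⟩) hx

theorem subset_component : A ⊆ component inc N A := fun x hx => ⟨x, hx, .refl⟩

theorem disjoint_cut_component : Disjoint (cut inc (component inc N A)) N := by
  refine Set.disjoint_left.2 ?_
  rintro e ⟨a, b, h, ⟨x, hx, hxa⟩, hb⟩ he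
  exact hb ⟨x, hx, hxa.tail ⟨e, he, h⟩⟩

open scoped symmDiff in
/-- Flipping the side of every component of `N \ M` that meets both `X` and `M` keeps the cut in
`N \ M` and moves all ends of `M` to one side. -/
theorem EvenCuts.sdiff (hN : EvenCuts inc N)
    (h : ∀ x ∈ ends inc M, ∀ y ∈ ends inc M, ConnIn inc (N \ M) x y → InfConnIn inc (N \ M) x y) :
    EvenCuts inc (N \ M) := by
  intro X hfin
  set A := component inc (N \ M) (ends inc M ∩ X)
  have hends : ∀ z ∈ ends inc M, z ∉ X ∆ A := fun z hz hzX => by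
    rcases hzX with ⟨hzX, hzA⟩ | ⟨⟨x, hx, hxz⟩, hzX⟩
    · exact hzA (subset_component ⟨hz, hzX⟩)
    · exact hzX ((h x hx.1 z hz hxz).mem_of_finite_cut hfin hx.2)
  have hcut : cut inc (X ∆ A) ∩ N = cut inc X ∩ (N \ M) := by
    ext e
    obtain ⟨a, b, he⟩ := Sym2.exists.1 ⟨inc e, rfl⟩
    by_cases heM : e ∈ M
    · have ha := hends a ⟨e, heM, by simp [he]⟩
      have hb := hends b ⟨e, heM, by simp [he]⟩
      simp only [Set.mem_inter_iff, Set.mem_sdiff, heM, mem_cut_iff he]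
      tauto
    · have hcomp : e ∈ N → e ∉ cut inc A := fun heN =>
        Set.disjoint_right.1 disjoint_cut_component ⟨heN, heM⟩
      simp only [Set.mem_inter_iff, Set.mem_sdiff, heM, mem_cut_iff he, Set.mem_symmDiff]
        at hcomp ⊢
      tauto
  exact hcut ▸ hN (X ∆ A) (hcut ▸ hfin)

theorem EvenCuts.of_subset (hN : EvenCuts inc N) (hM : M ⊆ N)
    (h : ∀ x ∈ ends inc M, ∀ y ∈ ends inc M, ConnIn inc (N \ M) x y → InfConnIn inc M x y) :
    EvenCuts inc M := by
  intro X hfin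
  set A := component inc (N \ M) (ends inc M ∩ X)
  have hends : ∀ z ∈ ends inc M, z ∈ A ↔ z ∈ X := fun z hz =>
    ⟨fun ⟨x, hx, hxz⟩ => (h x hx.1 z hz hxz).mem_of_finite_cut hfin hx.2,
      fun hzX => subset_component ⟨hz, hzX⟩⟩
  have hcut : cut inc A ∩ N = cut inc X ∩ M := by
    ext e
    by_cases heM : e ∈ M
    · obtain ⟨a, b, he⟩ := Sym2.exists.1 ⟨inc e, rfl⟩
      simp only [Set.mem_inter_iff, heM, hM heM, mem_cut_iff he,
        hends a ⟨e, heM, by simp [he]⟩, hends b ⟨e, heM, by simp [he]⟩]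
    · exact iff_of_false (fun h' => Set.disjoint_left.1 disjoint_cut_component h'.1 ⟨h'.2, heM⟩)
        fun h' => heM h'.2
  exact hcut ▸ hN A (hcut ▸ hfin)

theorem exists_infConnIn_of_forall_finite (h : ∀ F : Set E, F.Finite → ConnIn inc (N \ F) x y) :
    ∃ A ⊆ N, A.Countable ∧ InfConnIn inc A x y := by
  choose H hHfin hHN hH using fun F : {F : Set E // F.Finite} => (h F.1 F.2).exists_finite
  let U : ℕ → {F : Set E // F.Finite} := fun n =>
    Nat.rec ⟨∅, Set.finite_empty⟩ (fun _ F => ⟨F.1 ∪ H F, F.2.union (hHfin F)⟩) n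
  have hmono : Monotone fun n => (U n).1 :=
    monotone_nat_of_le_succ fun n => Set.subset_union_left (s := (U n).1) (t := H (U n))
  have hdisj : Pairwise (Function.onFun Disjoint fun n => H (U n)) := by
    refine (pairwise_disjoint_on _).2 fun m n hmn => ?_
    have hsub : H (U m) ⊆ (U n).1 :=
      Set.subset_union_right.trans (hmono (Nat.succ_le_of_lt hmn))
    exact Set.disjoint_left.2 fun e he he' => (hHN (U n) he').2 (hsub he)
  refine ⟨⋃ n, H (U n), Set.iUnion_subset fun n => (hHN _).trans Set.sdiff_subset,
    Set.countable_iUnion fun n => (hHfin _).countable, fun F hF => ?_⟩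
  obtain ⟨n, hn⟩ : ∃ n, Disjoint (H (U n)) F := by
    by_contra! hcon
    choose f hfH hfF using fun n => Set.not_disjoint_iff.1 (hcon n)
    refine Set.infinite_of_injective_forall_mem (fun m n hmn => ?_) hfF hF
    by_contra hne
    exact Set.disjoint_left.1 (hdisj hne) (hfH m) (hmn ▸ hfH n)
  exact (hH (U n)).mono fun e he =>
    ⟨Set.mem_iUnion.2 ⟨n, he⟩, fun heF => Set.disjoint_left.1 hn he heF⟩

theorem exists_countable_separator_or_infConnIn (inc : E → Sym2 V) (N : Set E) (x y : V) :
    ∃ A ⊆ N, A.Countable ∧ (ConnIn inc (N \ A) x y → InfConnIn inc A x y) := by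
  by_cases hF : ∃ F : Set E, F.Finite ∧ ¬ ConnIn inc (N \ F) x y
  · obtain ⟨F, hF, hs⟩ := hF
    refine ⟨N ∩ F, Set.inter_subset_left, (hF.inter_of_right N).countable, fun h => absurd h ?_⟩
    rwa [Set.sdiff_self_inter]
  · push Not at hF
    obtain ⟨A, hAN, hA, hxy⟩ := exists_infConnIn_of_forall_finite hF
    exact ⟨A, hAN, hA, fun _ => hxy⟩

end Connectivity

/-! ### Decomposition into countable pieces -/

section Decomposition

open Cardinal Ordinal

variable {inc : E → Sym2 V} {M N K S : Set E} {x y : V} {f : E → Ordinal.{v}} {μ : Cardinal.{v}}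
  {α β : Ordinal.{v}} {Φ : Ordinal.{v} → Set E} {s : V → V → Ordinal.{v} → Set E}

/-- An increasing continuous enumeration of a set of edges, of least cardinality if there is one,
that separates `x` from `y` in the graph with edge set `N`. -/
structure IsSeparatorFiltration (inc : E → Sym2 V) (N : Set E) (x y : V)
    (s : Ordinal.{v} → Set E) : Prop where
  subset : ∀ o, s o ⊆ N
  card_le : ∀ o, #(s o) ≤ o.card
  exists_lt : ∀ o, ∀ g ∈ s o, ∃ a < o, ∀ b, a < b → g ∈ s b
  not_connIn : ∀ F, ¬ ConnIn inc (N \ F) x y → ∀ o, (#F).ord ≤ o → ¬ ConnIn inc (N \ s o) x y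

/-- `K` is a superset of `M` closed under the operations that make both `K \ M` and `N \ K` have
even cuts; here `f` enumerates `N` and `s x y` a smallest separator of `x` and `y`. -/
structure IsHull (inc : E → Sym2 V) (N : Set E) (f : E → Ordinal.{v})
    (s : V → V → Ordinal.{v} → Set E) (β : Ordinal.{v}) (M K : Set E) : Prop where
  superset : M ⊆ K
  mem_of_eq : ∀ e ∈ N, f e = β → e ∈ K
  separator_subset : ∀ x ∈ ends inc K, ∀ y ∈ ends inc K, s x y (ω + β + 1) ⊆ K
  infConnIn : ∀ x ∈ ends inc K, ∀ y ∈ ends inc K,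
    ConnIn inc (N \ K) x y → InfConnIn inc (K \ M) x y

theorem exists_injOn_ordinal (S : Set E) :
    ∃ f : E → Ordinal.{v}, Set.InjOn f S ∧ ∀ e ∈ S, f e < (#S).ord := by
  classical
  obtain ⟨r, _, hr⟩ := exists_ord_eq S
  refine ⟨fun e => if h : e ∈ S then typein r ⟨e, h⟩ else 0, fun a ha b hb hab => ?_,
    fun e he => ?_⟩
  · simp only [ha, hb, dif_pos, typein_inj, Subtype.mk.injEq] at hab
    exact hab
  · simp only [he, dif_pos, hr, typein_lt_type]

theorem mk_sep_lt_le_card (hf : Set.InjOn f S) (o : Ordinal.{v}) :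
    #{g | g ∈ S ∧ f g < o} ≤ o.card := by
  rw [← Cardinal.lift_le.{v + 1}, ← Cardinal.mk_Iio_ordinal,
    ← mk_image_eq_of_injOn_lift f _ (hf.mono (Set.sep_subset _ _)), Cardinal.lift_id'.{v, v + 1}]
  exact mk_le_mk_of_subset (Set.image_subset_iff.2 fun g hg => hg.2)

theorem aleph0_le_card_omega0_add (o : Ordinal.{v}) : ℵ₀ ≤ (ω + o).card := by
  rw [aleph0_le_card]
  exact le_self_add

theorem mk_iUnion_le_of_le {ι : Type*} {A : ι → Set E} (hμ : ℵ₀ ≤ μ)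
    (hι : Cardinal.lift.{v} #ι ≤ Cardinal.lift μ) (hA : ∀ i, #(A i) ≤ μ) : #(⋃ i, A i) ≤ μ := by
  rw [← Cardinal.lift_le]
  exact (mk_iUnion_le_lift A).trans (mul_le_of_le (aleph0_le_lift.2 hμ) hι
    (ciSup_le' fun i => Cardinal.lift_le.2 (hA i)))

theorem mk_iUnion_lt_le_card
    (h : ∀ γ < β, #(Φ γ) ≤ (ω + γ).card) : #(⋃ γ < β, Φ γ : Set E) ≤ (ω + β).card :=
  mk_biUnion_le_of_le (card_le_card le_add_self) (aleph0_le_card_omega0_add β) Φ fun γ hγ =>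
    (h γ hγ).trans (card_le_card (by gcongr))

theorem exists_isSeparatorFiltration (inc : E → Sym2 V) (N : Set E) (x y : V) :
    ∃ s : Ordinal.{v} → Set E, IsSeparatorFiltration inc N x y s := by
  by_cases h : ∃ F, ¬ ConnIn inc (N \ F) x y
  · obtain ⟨S, hS, hmin⟩ := exists_minimalFor_of_wellFoundedLT
      (fun F : Set E => ¬ ConnIn inc (N \ F) x y) (fun F => #F) h
    obtain ⟨f, hf, hlt⟩ := exists_injOn_ordinal (N ∩ S)
    refine ⟨fun o => {g | g ∈ N ∩ S ∧ f g < o}, fun o g hg => hg.1.1, mk_sep_lt_le_card hf,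
      fun o g hg => ⟨f g, hg.2, fun b hb => ⟨hg.1, hb⟩⟩, fun F hF o ho => ?_⟩
    have hSF : #(N ∩ S : Set E) ≤ #F := (mk_le_mk_of_subset Set.inter_subset_right).trans
      ((le_total #S #F).elim id (hmin hF))
    have hSo : {g | g ∈ N ∩ S ∧ f g < o} = N ∩ S :=
      Set.sep_eq_self_iff_mem_true.2 fun g hg => (hlt g hg).trans_le ((ord_le_ord.2 hSF).trans ho)
    rwa [hSo, Set.sdiff_self_inter]
  · exact ⟨fun _ => ∅, fun _ => Set.empty_subset _, by simp, fun _ _ hg => hg.elim,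
      fun F hF => absurd ⟨F, hF⟩ h⟩

theorem exists_superset_closed (hμ : ℵ₀ ≤ μ) {c : E → E → Set E} (hc : ∀ g h, #(c g h) ≤ μ)
    (hcN : ∀ g h, c g h ⊆ N) (hMN : M ⊆ N) (hM : #M ≤ μ) :
    ∃ K, M ⊆ K ∧ K ⊆ N ∧ #K ≤ μ ∧ ∀ g ∈ K, ∀ h ∈ K, c g h ⊆ K := by
  let next : Set E → Set E := fun L => L ∪ ⋃ p : L × L, c p.1 p.2
  have hnext : ∀ L, L ⊆ N ∧ #L ≤ μ → next L ⊆ N ∧ #(next L) ≤ μ := fun L ⟨hLN, hL⟩ => by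
    refine ⟨Set.union_subset hLN (Set.iUnion_subset fun p => hcN _ _), (mk_union_le _ _).trans
      (add_le_of_le hμ hL (mk_iUnion_le_of_le hμ ?_ fun p => hc _ _))⟩
    rw [mk_prod, Cardinal.lift_id, Cardinal.lift_id, Cardinal.lift_id]
    exact mul_le_of_le hμ hL hL
  have hstage : ∀ n, next^[n] M ⊆ N ∧ #(next^[n] M) ≤ μ :=
    Function.Iterate.rec (fun L => L ⊆ N ∧ #L ≤ μ) ⟨hMN, hM⟩ hnext
  have hmono : Monotone fun n => next^[n] M := monotone_nat_of_le_succ fun n => by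
    rw [Function.iterate_succ_apply']
    exact Set.subset_union_left
  refine ⟨⋃ n, next^[n] M, Set.subset_iUnion (fun n => next^[n] M) 0,
    Set.iUnion_subset fun n => (hstage n).1,
    mk_iUnion_le_of_le hμ (by simpa using hμ) fun n => (hstage n).2, fun g hg h hh => ?_⟩
  obtain ⟨m, hm⟩ := Set.mem_iUnion.1 hg
  obtain ⟨n, hn⟩ := Set.mem_iUnion.1 hh
  refine Set.Subset.trans ?_ (Set.subset_iUnion _ (max m n + 1))
  rw [Function.iterate_succ_apply']
  exact fun e he => Or.inr (Set.mem_iUnion.2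
    ⟨(⟨g, hmono (le_max_left m n) hm⟩, ⟨h, hmono (le_max_right m n) hn⟩), he⟩)

theorem exists_superset_closed_on_ends (inc : E → Sym2 V) (hμ : ℵ₀ ≤ μ) {c : V → V → Set E}
    (hc : ∀ x y, #(c x y) ≤ μ) (hcN : ∀ x y, c x y ⊆ N) (hMN : M ⊆ N) (hM : #M ≤ μ) :
    ∃ K, M ⊆ K ∧ K ⊆ N ∧ #K ≤ μ ∧ ∀ x ∈ ends inc K, ∀ y ∈ ends inc K, c x y ⊆ K := by
  choose a b hab using fun g => Sym2.exists.1 ⟨inc g, rfl⟩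
  have hend : ∀ {g x}, x ∈ inc g → ∃ i : Bool, x = if i then a g else b g := fun {g x} hx => by
    rw [hab, Sym2.mem_iff] at hx
    exact hx.elim (fun h => ⟨true, h⟩) fun h => ⟨false, h⟩
  obtain ⟨K, hMK, hKN, hK, hcl⟩ := exists_superset_closed hμ (M := M) (N := N)
    (c := fun g h => ⋃ i : Bool × Bool, c (if i.1 then a g else b g) (if i.2 then a h else b h))
    (fun g h => mk_iUnion_le_of_le hμ
      (by simpa using (natCast_le_aleph0 (n := 4)).trans hμ) fun i => hc _ _)
    (fun g h => Set.iUnion_subset fun i => hcN _ _) hMN hM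
  refine ⟨K, hMK, hKN, hK, ?_⟩
  rintro x ⟨g, hg, hx⟩ y ⟨h, hh, hy⟩
  obtain ⟨i, rfl⟩ := hend hx
  obtain ⟨j, rfl⟩ := hend hy
  exact (Set.subset_iUnion_of_subset (i, j) subset_rfl).trans (hcl g hg h hh)

theorem exists_isHull (hf : Set.InjOn f N)
    (hs : ∀ x y, IsSeparatorFiltration inc N x y (s x y)) (hMN : M ⊆ N)
    (hM : #M ≤ (ω + β).card) :
    ∃ K ⊆ N, #K ≤ (ω + β).card ∧ IsHull inc N f s β M K := by
  have hμ := aleph0_le_card_omega0_add β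
  choose A hAN hAc hA using exists_countable_separator_or_infConnIn inc (N \ M)
  have hc : ∀ x y, #(s x y (ω + β + 1) ∪ A x y : Set E) ≤ (ω + β).card := fun x y => by
    refine (mk_union_le _ _).trans (add_le_of_le hμ (((hs x y).card_le _).trans ?_)
      ((hAc x y).le_aleph0.trans hμ))
    rw [card_add, card_one]
    exact add_le_of_le hμ le_rfl (one_le_aleph0.trans hμ)
  have hM' : #(M ∪ {e | e ∈ N ∧ f e = β} : Set E) ≤ (ω + β).card := by
    refine (mk_union_le _ _).trans (add_le_of_le hμ hM (le_trans ?_ (one_le_aleph0.trans hμ)))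
    exact mk_le_one_iff_set_subsingleton.2 fun e he e' he' =>
      hf he.1 he'.1 (he.2.trans he'.2.symm)
  obtain ⟨K, hMK, hKN, hK, hcl⟩ := exists_superset_closed_on_ends inc hμ hc
    (fun x y => Set.union_subset ((hs x y).subset _) ((hAN x y).trans Set.sdiff_subset))
    (Set.union_subset hMN (Set.sep_subset _ _)) hM'
  refine ⟨K, hKN, hK, fun e he => hMK (Or.inl he), fun e he hfe => hMK (Or.inr ⟨he, hfe⟩),
    fun x hx y hy => Set.subset_union_left.trans (hcl x hx y hy), fun x hx y hy h F hF => ?_⟩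
  have hAK : A x y ⊆ K \ M := fun e he => ⟨hcl x hx y hy (Or.inr he), (hAN x y he).2⟩
  refine (hA x y (h.mono fun e he => ?_) F hF).mono (Set.sdiff_subset_sdiff_left hAK)
  exact ⟨⟨he.1, fun heM => he.2 (hMK (Or.inl heM))⟩, fun heA => he.2 (hAK heA).1⟩

theorem exists_transfinite_sequence {R : Ordinal.{v} → Set E → Set E → Prop}
    (h : ∀ β, ∀ M ⊆ N, #M ≤ (ω + β).card → ∃ K ⊆ N, #K ≤ (ω + β).card ∧ R β M K) :
    ∃ Φ : Ordinal.{v} → Set E,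
      ∀ β, Φ β ⊆ N ∧ #(Φ β) ≤ (ω + β).card ∧ R β (⋃ γ < β, Φ γ) (Φ β) := by
  have hstep : ∀ β M, ∃ K : Set E, M ⊆ N ∧ #M ≤ (ω + β).card →
      K ⊆ N ∧ #K ≤ (ω + β).card ∧ R β M K := fun β M => by
    by_cases hM : M ⊆ N ∧ #M ≤ (ω + β).card
    · obtain ⟨K, hK⟩ := h β M hM.1 hM.2
      exact ⟨K, fun _ => hK⟩
    · exact ⟨∅, fun h => absurd h hM⟩
  choose step hstep using hstep
  let Φ : Ordinal.{v} → Set E := lt_wf.fix fun β ih => step β (⋃ γ, ⋃ h : γ < β, ih γ h)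
  have hΦ : ∀ β, Φ β = step β (⋃ γ < β, Φ γ) := fun β => lt_wf.fix_eq _ β
  refine ⟨Φ, fun β => ?_⟩
  induction β using WellFoundedLT.induction with
  | ind β ih =>
    rw [hΦ]
    exact hstep β _ ⟨Set.iUnion₂_subset fun γ hγ => (ih γ hγ).1,
      mk_iUnion_lt_le_card fun γ hγ => (ih γ hγ).2.1⟩

/-- A transfinite sequence of hulls, each a hull of the union of its predecessors. -/
def IsHullSequence (inc : E → Sym2 V) (N : Set E) (f : E → Ordinal.{v})
    (s : V → V → Ordinal.{v} → Set E) (Φ : Ordinal.{v} → Set E) : Prop :=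
  ∀ β, Φ β ⊆ N ∧ #(Φ β) ≤ (ω + β).card ∧ IsHull inc N f s β (⋃ γ < β, Φ γ) (Φ β)

theorem IsHullSequence.monotone (h : IsHullSequence inc N f s Φ) : Monotone Φ := by
  intro α β hαβ
  rcases hαβ.eq_or_lt with rfl | hαβ
  · exact subset_rfl
  · exact (Set.subset_biUnion_of_mem (u := Φ) hαβ).trans (h β).2.2.superset

/-- If a finite set of edges separated two ends of the union outside of the union, then a smallest
separator would be so small that the union contained it. -/
theorem IsHullSequence.evenCuts_sdiff (h : IsHullSequence inc N f s Φ)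
    (hs : ∀ x y, IsSeparatorFiltration inc N x y (s x y)) (hN : EvenCuts inc N) :
    EvenCuts inc (N \ ⋃ γ < α, Φ γ) := by
  refine hN.sdiff fun x hx y hy hxy F hF => ?_
  set M := ⋃ γ < α, Φ γ
  obtain ⟨γ₁, hγ₁, hxγ⟩ : ∃ γ < α, x ∈ ends inc (Φ γ) := by
    obtain ⟨e, he, hx⟩ := hx
    obtain ⟨γ, hγ, he⟩ := Set.mem_iUnion₂.1 he
    exact ⟨γ, hγ, e, he, hx⟩
  obtain ⟨γ₂, hγ₂, hyγ⟩ : ∃ γ < α, y ∈ ends inc (Φ γ) := by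
    obtain ⟨e, he, hy⟩ := hy
    obtain ⟨γ, hγ, he⟩ := Set.mem_iUnion₂.1 he
    exact ⟨γ, hγ, e, he, hy⟩
  have hsub : s x y (ω + α) ⊆ M := fun g hg => by
    obtain ⟨a, ha, hga⟩ := (hs x y).exists_lt _ g hg
    obtain ⟨δ, hδ, haδ⟩ := (lt_add_iff (pos_of_gt hγ₁).ne').1 ha
    have hmax : max δ (max γ₁ γ₂) < α := max_lt hδ (max_lt hγ₁ hγ₂)
    refine Set.mem_iUnion₂.2 ⟨_, hmax, (h _).2.2.separator_subset x ?_ y ?_ (hga _ ?_)⟩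
    · exact ends_mono (h.monotone ((le_max_left _ _).trans (le_max_right _ _))) hxγ
    · exact ends_mono (h.monotone ((le_max_right _ _).trans (le_max_right _ _))) hyγ
    · exact Order.lt_add_one_iff.2 (haδ.trans (by gcongr; exact le_max_left _ _))
  have hMF : #(M ∪ F : Set E) ≤ (ω + α).card := (mk_union_le _ _).trans
    (add_le_of_le (aleph0_le_card_omega0_add α) (mk_iUnion_lt_le_card fun γ _ => (h γ).2.1)
      (hF.countable.le_aleph0.trans (aleph0_le_card_omega0_add α)))
  by_contra hcon
  rw [Set.sdiff_sdiff] at hcon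
  exact (hs x y).not_connIn _ hcon _ (ord_le.2 hMF) (hxy.mono (Set.sdiff_subset_sdiff_right hsub))

theorem IsHullSequence.evenCuts_piece (h : IsHullSequence inc N f s Φ)
    (hs : ∀ x y, IsSeparatorFiltration inc N x y (s x y)) (hN : EvenCuts inc N) :
    EvenCuts inc (Φ α \ ⋃ γ < α, Φ γ) := by
  refine (h.evenCuts_sdiff hs hN).of_subset (Set.sdiff_subset_sdiff_left (h α).1) ?_
  intro x hx y hy hxy
  refine (h α).2.2.infConnIn x (ends_mono Set.sdiff_subset hx) y (ends_mono Set.sdiff_subset hy)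
    (hxy.mono fun e he => ⟨he.1.1, fun heα => he.2 ⟨heα, he.1.2⟩⟩)

theorem IsHullSequence.iUnion_eq (h : IsHullSequence inc N f s Φ) (hf : ∀ e ∈ N, f e < α) :
    N = ⋃ β < α, Φ β \ ⋃ γ < β, Φ γ := by
  refine Set.Subset.antisymm (fun e he => ?_)
    (Set.iUnion₂_subset fun β _ => Set.sdiff_subset.trans (h β).1)
  have hmem : e ∈ Φ (f e) := (h _).2.2.mem_of_eq e he rfl
  obtain ⟨β, hβ, hmin⟩ := exists_minimal_le_of_wellFoundedLT (fun β => e ∈ Φ β) _ hmem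
  refine Set.mem_iUnion₂.2 ⟨β, hβ.trans_lt (hf e he), hmin.prop, fun heU => ?_⟩
  obtain ⟨γ, hγ, heγ⟩ := Set.mem_iUnion₂.1 heU
  exact hmin.not_prop_of_lt hγ heγ

theorem pairwise_disjoint_sdiff_iUnion_lt (Φ : Ordinal.{v} → Set E) :
    Pairwise (Function.onFun Disjoint fun β => Φ β \ ⋃ γ < β, Φ γ) :=
  (pairwise_disjoint_on _).2 fun _ _ hβ => Set.disjoint_left.2 fun _ he he' =>
    he'.2 (Set.mem_iUnion₂.2 ⟨_, hβ, he.1⟩)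

theorem exists_isHullSequence (inc : E → Sym2 V) (N : Set E) (hf : Set.InjOn f N)
    (hs : ∀ x y, IsSeparatorFiltration inc N x y (s x y)) :
    ∃ Φ, IsHullSequence inc N f s Φ :=
  exists_transfinite_sequence fun _ _ => exists_isHull hf hs

/-- `N` is a disjoint union of countable sets without odd cuts. -/
def IsDecomposable (inc : E → Sym2 V) (N : Set E) : Prop :=
  ∃ P : Set (Set E), (∀ C ∈ P, C.Countable ∧ EvenCuts inc C) ∧ P.PairwiseDisjoint id ∧ ⋃₀ P = N

theorem IsDecomposable.biUnion {ι : Type*} {I : Set ι} {A : ι → Set E}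
    (hA : ∀ i ∈ I, IsDecomposable inc (A i)) (hd : I.PairwiseDisjoint A) :
    IsDecomposable inc (⋃ i ∈ I, A i) := by
  choose! P hP hPd hPA using hA
  refine ⟨⋃ i ∈ I, P i, fun C hC => ?_, Set.PairwiseDisjoint.biUnion ?_ hPd, ?_⟩
  · obtain ⟨i, hi, hC⟩ := Set.mem_iUnion₂.1 hC
    exact hP i hi C hC
  · intro i hi j hj hij
    simpa only [Function.onFun, id_eq, ← sSup_eq_iSup, Set.sSup_eq_sUnion, hPA i hi, hPA j hj]
      using hd hi hj hij
  · simp only [Set.sUnion_iUnion]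
    exact Set.iUnion₂_congr hPA

/-- Induction on the cardinality of the edge set: the successive differences of a hull sequence
have even cuts and smaller cardinality. -/
theorem EvenCuts.isDecomposable (hN : EvenCuts inc N) : IsDecomposable inc N := by
  induction h : #N using WellFoundedLT.induction generalizing N with
  | ind κ ih =>
  rcases le_or_gt κ ℵ₀ with hκ | hκ
  · refine ⟨{N}, ?_, Set.pairwiseDisjoint_singleton _ _, Set.sUnion_singleton N⟩
    rintro C rfl
    exact ⟨le_aleph0_iff_set_countable.1 (h ▸ hκ), hN⟩
  · obtain ⟨f, hf, hlt⟩ := exists_injOn_ordinal N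
    choose s hs using exists_isSeparatorFiltration inc N
    obtain ⟨Φ, hΦ⟩ := exists_isHullSequence inc N hf hs
    rw [hΦ.iUnion_eq hlt, h]
    refine IsDecomposable.biUnion (I := Set.Iio κ.ord) (fun β hβ => ?_)
      ((pairwise_disjoint_sdiff_iUnion_lt Φ).set_pairwise _)
    have hcard : (ω + β).card < κ := by
      rw [card_add, card_omega0]
      exact add_lt_of_lt hκ.le hκ (lt_ord.1 hβ)
    exact ih _ (((mk_le_mk_of_subset Set.sdiff_subset).trans (hΦ β).2.1).trans_lt hcard)
      (hΦ.evenCuts_piece hs hN) rfl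

end Decomposition

/-! ### Splitting the edges into countable pieces -/

section Gluing

variable {inc : E → Sym2 V} {t : V} {T : Set V} {X : Set V}

theorem linked_of_subsingleton (ht : t ∈ T) (hodd : HasNoOddCut inc T)
    (hs : (cut inc {t}).Subsingleton) : Linked inc T t := by
  rcases hs.eq_empty_or_singleton with he | ⟨a, he⟩
  · exact ⟨fun _ => [], by simp [he], by simp [he], by simp [he], by simp [he]⟩
  by_cases! hb : ∃ b l, IsWalk inc t l b ∧ b ∈ T \ {t}
  · obtain ⟨b, l, hl, hb⟩ := hb
    obtain ⟨m, hm, -, hn⟩ := hl.exists_path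
    refine ⟨fun _ => m, fun x hx => ?_, fun _ _ => ⟨b, hb, hm⟩, fun _ _ => hm.nodup_edges hn,
      fun x hx y hy _ _ _ => hs hx hy⟩
    cases m with
    | nil => exact (hb.2 hm.symm).elim
    | cons g m => exact ⟨g.2, m, by rw [hs hx (mem_cut_singleton_iff.2 ⟨_, hm.1, hm.2.1.symm⟩)]⟩
  · let X : Set V := {z | (∃ l, IsWalk inc t l z) ∧ z ≠ t}
    have hcut : cut inc X = cut inc {t} := by
      ext e
      constructor
      · rintro ⟨x, y, hxy, ⟨⟨l, hl⟩, hxt⟩, hy⟩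
        have hne : x ≠ y := by rintro rfl; exact hy ⟨⟨l, hl⟩, hxt⟩
        obtain rfl : y = t := by
          by_contra h
          exact hy ⟨⟨l ++ [(e, y)], hl.append ⟨hxy, hne, rfl⟩⟩, h⟩
        exact ⟨y, x, hxy.trans Sym2.eq_swap, rfl, hxt⟩
      · intro h
        obtain ⟨y, hy, hyt⟩ := mem_cut_singleton_iff.1 h
        exact ⟨y, t, hy.trans Sym2.eq_swap, ⟨⟨[(e, y)], hy, hyt.symm, rfl⟩, hyt⟩, fun h => h.2 rfl⟩
    have := hodd X fun b hbT ⟨⟨l, hl⟩, hbt⟩ => hb b l hl ⟨hbT, hbt⟩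
    simp [hcut, he, NotOdd] at this

theorem cut_map {W : Type*} (φ : V → W) (X : Set W) :
    cut (fun e => (inc e).map φ) X = cut inc (φ ⁻¹' X) := by
  ext e
  induction h : inc e with
  | h a b =>
    have hφ : (inc e).map φ = s(φ a, φ b) := by rw [h, Sym2.map_mk]
    rw [mem_cut_iff h, mem_cut_iff (inc := fun e => (inc e).map φ) hφ]
    rfl

theorem cut_compl (X : Set V) : cut inc Xᶜ = cut inc X := by
  ext e
  induction h : inc e with
  | h a b =>
    rw [mem_cut_iff h, mem_cut_iff h]
    simp only [Set.mem_compl_iff]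
    tauto

theorem cut_delete_compl [Nonempty V] (K : Set E) :
    cut (delete inc Kᶜ) X = cut inc X ∩ K := by
  ext g
  simp [mem_cut_delete_iff]

open Classical in
/-- The map contracting `T` to the new vertex `none`. -/
noncomputable def contraction (T : Set V) (x : V) : Option V := if x ∈ T then none else some x

theorem HasNoOddCut.evenCuts_map (hodd : HasNoOddCut inc T) :
    EvenCuts (fun e => (inc e).map (contraction T)) Set.univ := by
  have h : ∀ X, none ∉ X → NotOdd (cut (fun e => (inc e).map (contraction T)) X) := fun X hX => by
    rw [cut_map]
    refine hodd _ fun t ht htX => hX ?_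
    rwa [Set.mem_preimage, contraction, if_pos ht] at htX
  intro X
  rw [Set.inter_univ]
  by_cases hX : none ∈ X
  · rw [← cut_compl]
    exact h _ fun h => h hX
  · exact h X hX

theorem EvenCuts.hasNoOddCut_delete [Nonempty V] {K : Set E}
    (hK : EvenCuts (fun e => (inc e).map (contraction T)) K) :
    HasNoOddCut (delete inc Kᶜ) T := by
  intro X hX
  have hpre : contraction T ⁻¹' (some '' X) = X := by
    ext v
    by_cases hv : v ∈ T
    · simp [contraction, hv, hX v hv]
    · simp [contraction, hv]
  have := hK (some '' X)
  rwa [cut_map, hpre, ← cut_delete_compl] at this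

theorem countable_setOf_reflTransGen {α : Type*} {R : α → α → Prop}
    (h : ∀ a, {b | R a b}.Countable) (a : α) : {b | Relation.ReflTransGen R a b}.Countable := by
  let step : Set α → Set α := fun L => ⋃ b ∈ L, {c | R b c}
  have hc : ∀ n, (step^[n] {a}).Countable :=
    Function.Iterate.rec Set.Countable (Set.countable_singleton a)
      fun L hL => hL.biUnion fun b _ => h b
  refine (Set.countable_iUnion hc).mono fun b (hb : Relation.ReflTransGen R a b) => ?_
  induction hb with
  | refl => exact Set.mem_iUnion.2 ⟨0, rfl⟩
  | tail _ hr ih =>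
    obtain ⟨n, hn⟩ := Set.mem_iUnion.1 ih
    refine Set.mem_iUnion.2 ⟨n + 1, ?_⟩
    rw [Function.iterate_succ_apply']
    exact Set.mem_biUnion hn hr

/-- The pieces are the components of the hypergraph `⋃₀ 𝓢`. -/
theorem exists_countable_partition {α : Type*} {𝓢 : Set (Set (Set α))} (hS : 𝓢.Countable)
    (hd : ∀ 𝓐 ∈ 𝓢, 𝓐.PairwiseDisjoint id) (hc : ∀ 𝓐 ∈ 𝓢, ∀ A ∈ 𝓐, A.Countable) :
    ∃ 𝓚 : Set (Set α), Setoid.IsPartition 𝓚 ∧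
      ∀ K ∈ 𝓚, K.Countable ∧ ∀ 𝓐 ∈ 𝓢, ∀ A ∈ 𝓐, (A ∩ K).Nonempty → A ⊆ K := by
  let R : α → α → Prop := fun a b => ∃ 𝓐 ∈ 𝓢, ∃ A ∈ 𝓐, b ∈ A ∧ a ∈ A
  have hR : ∀ a, {b | R a b}.Countable := fun a => by
    refine (hS.biUnion (t := fun 𝓐 _ => ⋃₀ {A ∈ 𝓐 | a ∈ A}) fun 𝓐 h𝓐 => ?_).mono ?_
    · exact (Set.Subsingleton.countable fun A hA A' hA' =>
        (hd 𝓐 h𝓐).elim_set hA.1 hA'.1 a hA.2 hA'.2).sUnion fun A hA => hc 𝓐 h𝓐 A hA.1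
    · rintro b ⟨𝓐, h𝓐, A, hA, hb, ha⟩
      exact Set.mem_biUnion h𝓐 ⟨A, ⟨hA, ha⟩, hb⟩
  have : Std.Symm R := ⟨fun a b ⟨𝓐, h𝓐, A, hA, hb, ha⟩ => ⟨𝓐, h𝓐, A, hA, ha, hb⟩⟩
  have hsymm : ∀ {a b}, Relation.ReflTransGen R a b → Relation.ReflTransGen R b a :=
    symm_of (Relation.ReflTransGen R)
  let r : Setoid α := ⟨Relation.ReflTransGen R, fun _ => .refl, hsymm, fun h h' => h.trans h'⟩
  refine ⟨r.classes, r.isPartition_classes, ?_⟩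
  rintro _ ⟨a, rfl⟩
  refine ⟨(countable_setOf_reflTransGen hR a).mono fun b hb => hsymm hb, ?_⟩
  rintro 𝓐 h𝓐 A hA ⟨b, hb, hba⟩ c hc
  exact Relation.ReflTransGen.head ⟨𝓐, h𝓐, A, hA, hb, hc⟩ hba

theorem EvenCuts.of_sUnion {P : Set (Set E)} {K : Set E} (hP : ∀ C ∈ P, EvenCuts inc C)
    (hd : P.PairwiseDisjoint id) (hKP : K ⊆ ⋃₀ P) (hK : ∀ C ∈ P, (C ∩ K).Nonempty → C ⊆ K) :
    EvenCuts inc K := by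
  intro X
  have hcut : cut inc X ∩ K = ⋃₀ ((cut inc X ∩ ·) '' {C ∈ P | C ⊆ K}) := by
    ext g
    simp only [Set.sUnion_image, Set.mem_iUnion₂, Set.mem_inter_iff]
    constructor
    · rintro ⟨hg, hgK⟩
      obtain ⟨C, hC, hgC⟩ := hKP hgK
      exact ⟨C, ⟨hC, hK C hC ⟨g, hgC, hgK⟩⟩, hg, hgC⟩
    · rintro ⟨C, ⟨-, hCK⟩, hg, hgC⟩
      exact ⟨hg, hCK hgC⟩
  rw [hcut]
  exact NotOdd.sUnion (Set.forall_mem_image.2 fun C hC => hP C hC.1 X)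
    ((hd.subset (Set.sep_subset _ _)).image_of_le fun C => Set.inter_subset_right)

theorem IsCoverable.of_partition [Nonempty V] {𝓚 : Set (Set E)} (hpart : Setoid.IsPartition 𝓚)
    (h : ∀ K ∈ 𝓚, IsCoverable (delete inc Kᶜ) T) : IsCoverable inc T := by
  choose! Q hQ hcov using h
  have hsub : ∀ K ∈ 𝓚, ⋃₀ Q K ⊆ K := by
    intro K hK
    refine Set.sUnion_subset fun F hF g hg => ?_
    obtain ⟨t, e, v, l, b, hl, rfl⟩ := (hQ K hK).isTTrail F hF
    exact not_not.1 ((isWalk_delete_iff.1 hl.isWalk).2 g hg)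
  refine ⟨⋃ K ∈ 𝓚, Q K, ⟨fun F hF => ?_, ?_⟩, fun t ht e he => ?_⟩
  · obtain ⟨K, hK, hF⟩ := Set.mem_iUnion₂.1 hF
    obtain ⟨t, e, v, l, b, hl, hF⟩ := (hQ K hK).isTTrail F hF
    exact ⟨t, e, v, l, b, hl.of_delete, hF⟩
  · refine Set.PairwiseDisjoint.biUnion (fun K hK L hL hKL => ?_)
      fun K hK => (hQ K hK).pairwiseDisjoint
    simp only [Function.onFun, id_eq, ← sSup_eq_iSup, Set.sSup_eq_sUnion]
    exact (hpart.pairwiseDisjoint hK hL hKL).mono (hsub K hK) (hsub L hL)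
  · obtain ⟨K, ⟨hK, heK⟩, -⟩ := hpart.2 e
    have heQ := hcov K hK t ht (by rw [cut_delete_compl]; exact ⟨he, heK⟩)
    exact Set.sUnion_mono (Set.subset_biUnion_of_mem hK) heQ

/-- The edge sets of the members of the fan `p` at `s`. -/
def members (inc : E → Sym2 V) (s : V) (p : E → List (E × V)) : Set (Set E) :=
  (fun a => {g | g ∈ edges (p a)}) '' cut inc {s}

theorem IsFan.pairwiseDisjoint_members {p : E → List (E × V)} {D : E → Set V}
    (h : IsFan inc t D p) : (members inc t p).PairwiseDisjoint id := by
  rintro _ ⟨a, ha, rfl⟩ _ ⟨a', ha', rfl⟩ hne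
  exact Set.disjoint_left.2 fun g hg hg' => hne (by rw [h.eq_of_mem a ha a' ha' g hg hg'])

theorem IsFan.delete_compl [Nonempty V] {p : E → List (E × V)} {D : E → Set V} {K : Set E}
    (h : IsFan inc t D p) (hK : ∀ A ∈ members inc t p, (A ∩ K).Nonempty → A ⊆ K) :
    IsFan (delete inc Kᶜ) t D p := by
  refine h.to_delete fun a ha haK g hg => not_not.2 ?_
  exact hK _ ⟨a, ha, rfl⟩ ⟨a, h.self_mem ha, Set.notMem_compl_iff.1 haK⟩ hg

theorem isCoverable_of_linked (hodd : HasNoOddCut inc T) (hl : ∀ s ∈ T, Linked inc T s)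
    (hcount : {t ∈ T | ¬ (cut inc {t}).Subsingleton}.Countable) : IsCoverable inc T := by
  rcases isEmpty_or_nonempty V with hV | hV
  · exact ⟨∅, ⟨by simp, by simp⟩, fun t => (hV.false t).elim⟩
  obtain ⟨P, hP, hPd, hPU⟩ := hodd.evenCuts_map.isDecomposable
  choose! p hp using hl
  obtain ⟨𝓚, hpart, h𝓚⟩ := exists_countable_partition
    ((hcount.image fun t => members inc t (p t)).insert P)
    (Set.forall_mem_insert.2 ⟨hPd, Set.forall_mem_image.2 fun t ht =>
      (hp t ht.1).pairwiseDisjoint_members⟩)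
    (Set.forall_mem_insert.2 ⟨fun C hC => (hP C hC).1, Set.forall_mem_image.2 fun t _ =>
      Set.forall_mem_image.2 fun a _ => (finite_edges (p t a)).countable⟩)
  refine .of_partition hpart fun K hK => ?_
  have hoddK : HasNoOddCut (delete inc Kᶜ) T := by
    refine EvenCuts.hasNoOddCut_delete (.of_sUnion (fun C hC => (hP C hC).2) hPd (by simp [hPU]) ?_)
    exact (h𝓚 K hK).2 P (Set.mem_insert _ _)
  refine isCoverable_of_countable hoddK (fun t ht => ?_) ?_
  · by_cases hs : (cut inc {t}).Subsingleton
    · exact linked_of_subsingleton ht hoddK (hs.anti fun a ha => (mem_cut_delete_iff.1 ha).1)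
    · exact ⟨p t, (hp t ht).delete_compl
        ((h𝓚 K hK).2 _ (Set.mem_insert_of_mem _ ⟨t, ⟨ht, hs⟩, rfl⟩))⟩
  · refine (h𝓚 K hK).1.mono ?_
    rintro e ⟨t, -, he⟩
    rw [cut_delete_compl] at he
    exact he.2

end Gluing

/-! ### Paths and trails of a multigraph -/

section Multigraph

variable {inc : E → Sym2 V} {G : Multigraph V E} {T : Set V} {s t v x y b c d : V} {e g : E}
  {l : List (E × V)}

theorem IsWalk.heads_reverse (h : IsWalk inc x l y) :
    y :: heads (LovaszCherkassky.reverse x l) = (x :: heads l).reverse := by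
  induction l generalizing x with
  | nil => cases h; rfl
  | cons a l ih => rw [reverse_cons, heads_append, ← List.cons_append, ih h.2.2]; simp

theorem IsWalk.mem_support_of_mem_cut (h : IsWalk inc x l y) (hg : g ∈ edges l)
    (ht : g ∈ cut inc {t}) : t ∈ x :: heads l := by
  obtain ⟨c, d, hd⟩ := (mem_edges_iff x).1 hg
  rcases (mem_cut_iff (h.inc_of_mem_darts hd).1).1 ht with ⟨rfl, -⟩ | ⟨rfl, -⟩
  · exact List.mem_cons.2 (tail_mem_of_mem_darts hd)
  · exact List.mem_cons_of_mem _ (head_mem_of_mem_darts hd)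

theorem IsWalk.exists_cons_of_mem_cut (h : IsWalk inc x l y) (hn : (x :: heads l).Nodup)
    (hg : g ∈ edges l) (hx : g ∈ cut inc {x}) : ∃ z m, l = (g, z) :: m := by
  cases l with
  | nil => simp at hg
  | cons a l =>
    rcases List.mem_cons.1 hg with rfl | hg
    · exact ⟨a.2, l, rfl⟩
    · exact ((List.nodup_cons.1 hn).1 (h.2.2.mem_support_of_mem_cut hg hx)).elim

theorem ne_of_inc_eq (h : G.inc e = s(x, y)) : x ≠ y := fun hxy =>
  G.not_isDiag e (by rw [h, Sym2.mk_isDiag_iff, hxy])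

theorem inci_eq_cut (t : V) : G.inci t = cut G.inc {t} := by
  ext e
  rw [mem_cut_singleton_iff]
  exact ⟨fun h => (Sym2.mem_iff_exists.1 h).imp fun y hy => ⟨hy, (ne_of_inc_eq hy).symm⟩,
    fun ⟨y, hy, _⟩ => Sym2.mem_iff_exists.2 ⟨y, hy⟩⟩

theorem exists_isWalk (p : G.Walk x y) :
    ∃ l, IsWalk G.inc x l y ∧ p.support = x :: heads l ∧ p.edges = edges l := by
  induction p with
  | nil v => exact ⟨[], rfl, rfl, rfl⟩
  | @cons u v w e he p ih =>
    obtain ⟨l, hl, hs, hg⟩ := ih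
    refine ⟨(e, v) :: l, ⟨he, ne_of_inc_eq he, hl⟩, ?_, ?_⟩
    · rw [Multigraph.Walk.support, hs, heads_cons]
    · rw [Multigraph.Walk.edges, hg, edges_cons]

theorem IsWalk.exists_walk (h : IsWalk G.inc x l y) :
    ∃ p : G.Walk x y, p.support = x :: heads l ∧ p.edges = edges l := by
  induction l generalizing x with
  | nil => cases h; exact ⟨.nil _, rfl, rfl⟩
  | cons a l ih =>
    obtain ⟨p, hs, hg⟩ := ih h.2.2
    refine ⟨.cons a.1 h.1 p, ?_, ?_⟩
    · rw [Multigraph.Walk.support, hs, heads_cons]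
    · rw [Multigraph.Walk.edges, hg, edges_cons]

theorem exists_isWalk_of_tPath (p : G.TPath T) (ht : t ∈ T) (he : e ∈ cut G.inc {t})
    (hp : e ∈ p.walk.edges) :
    ∃ l, (∃ b ∈ T \ {t}, IsWalk G.inc t l b) ∧ (t :: heads l).Nodup ∧
      ∀ g, g ∈ edges l ↔ g ∈ p.walk.edges := by
  obtain ⟨l, hl, hsupp, hedges⟩ := exists_isWalk p.walk
  have hn := p.support_nodup
  have htp : t ∈ p.walk.support := hsupp ▸ hl.mem_support_of_mem_cut (hedges ▸ hp) he
  rw [hsupp] at hn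
  rw [hedges]
  rcases p.internal t htp ht with rfl | rfl
  · exact ⟨l, ⟨p.last, ⟨p.last_mem, p.ne.symm⟩, hl⟩, hn, fun _ => Iff.rfl⟩
  · refine ⟨reverse p.first l, ⟨p.first, ⟨p.first_mem, p.ne⟩, hl.reverse⟩, ?_, fun g => ?_⟩
    · rwa [hl.heads_reverse, List.nodup_reverse]
    · rw [edges_reverse, List.mem_reverse]

theorem linked_of_tPathDisjoint (ht : t ∈ T) {P : Set (G.TPath T)} (hP : G.TPathDisjoint P)
    (hcov : ∀ e ∈ G.inci t, ∃ p ∈ P, e ∈ p.walk.edges) : Linked G.inc T t := by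
  rw [inci_eq_cut] at hcov
  choose! f hend hnodup hedges using
    fun (p : G.TPath T) (h : ∃ e ∈ cut G.inc {t}, e ∈ p.walk.edges) =>
      h.elim fun e he => exists_isWalk_of_tPath p ht he.1 he.2
  have hfan : ∀ e, ∃ m, e ∈ cut G.inc {t} → ∃ p ∈ P, m = f p ∧ e ∈ p.walk.edges := fun e => by
    by_cases he : e ∈ cut G.inc {t}
    · obtain ⟨p, hp, hep⟩ := hcov e he
      exact ⟨f p, fun _ => ⟨p, hp, rfl, hep⟩⟩
    · exact ⟨[], fun h => (he h).elim⟩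
  choose q hq using hfan
  have hcons : ∀ e ∈ cut G.inc {t}, ∃ z l, q e = (e, z) :: l := fun e he => by
    obtain ⟨p, -, hqp, hep⟩ := hq e he
    obtain ⟨b, -, hw⟩ := hend p ⟨e, he, hep⟩
    rw [hqp]
    exact hw.exists_cons_of_mem_cut (hnodup p ⟨e, he, hep⟩) ((hedges p ⟨e, he, hep⟩ e).2 hep) he
  refine ⟨q, hcons, fun e he => ?_, fun e he => ?_, fun e he e' he' g hg hg' => ?_⟩
  · obtain ⟨p, -, hqp, hep⟩ := hq e he
    exact hqp ▸ hend p ⟨e, he, hep⟩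
  · obtain ⟨p, -, hqp, hep⟩ := hq e he
    obtain ⟨b, -, hw⟩ := hend p ⟨e, he, hep⟩
    exact hqp ▸ hw.nodup_edges (hnodup p ⟨e, he, hep⟩)
  · obtain ⟨p, hp, hqp, hep⟩ := hq e he
    obtain ⟨p', hp', hqp', hep'⟩ := hq e' he'
    rw [hqp, hedges p ⟨e, he, hep⟩] at hg
    rw [hqp', hedges p' ⟨e', he', hep'⟩] at hg'
    obtain rfl : p = p' := by_contra fun hne => hP p hp p' hp' hne g hg hg'
    obtain ⟨z, l, hl⟩ := hcons e he
    obtain ⟨z', l', hl'⟩ := hcons e' he'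
    rw [hqp, ← hqp', hl'] at hl
    cases hl
    rfl

theorem IsTTrail.getLast?_of_mem (h : IsTTrail inc T t e v l b) (hd : (c, g, d) ∈ darts v l)
    (hT : d ∈ T) : l.getLast? = some (g, d) := by
  obtain ⟨l₁, l₂, rfl, h₁, h₂⟩ := h.isWalk.2.2.mem_darts_iff.1 hd
  cases l₂ with
  | nil => simp
  | cons a l₂ => exact (h.tail_notMem d a.1 a.2 (by simp [h₁.darts_append]) hT).elim

theorem IsTTrail.exists_path (h : IsTTrail inc T t e v l b) :
    ∃ m, IsTTrail inc T t e v m b ∧ (t :: heads ((e, v) :: m)).Nodup ∧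
      ∀ a ∈ darts v m, a ∈ darts v l := by
  obtain ⟨m, hm, hsub, hn⟩ := h.isWalk.2.2.exists_path
  have hwalk : IsWalk inc t ((e, v) :: m) b := ⟨h.isWalk.1, h.isWalk.2.1, hm⟩
  have htail : ∀ c g d, (c, g, d) ∈ darts v m → c ∉ T := fun c g d hd =>
    h.tail_notMem c g d (hsub _ hd)
  have ht : t ∉ heads m := fun hmem => by
    rcases hm.exists_dart_of_mem_heads hmem with hb | ⟨g, z, hd⟩
    · exact h.ne hb
    · exact htail t g z hd h.left_mem
  have hnodup : (t :: heads ((e, v) :: m)).Nodup :=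
    List.nodup_cons.2 ⟨List.not_mem_cons_of_ne_of_not_mem h.isWalk.2.1 ht, hn⟩
  exact ⟨m, ⟨hwalk, h.left_mem, h.right_mem, h.ne, hwalk.nodup_edges hnodup, htail⟩, hnodup, hsub⟩

theorem IsTTrail.mem_edges_of_darts_subset {m : List (E × V)} (h : IsTTrail inc T t e v l b)
    (hm : IsWalk inc v m b) (hsub : ∀ a ∈ darts v m, a ∈ darts v l) (hs : s ∈ T)
    (hg : g ∈ cut inc {s}) (hgl : g ∈ edges l) : g ∈ edges m := by
  obtain ⟨c, d, hd⟩ := (mem_edges_iff v).1 hgl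
  have hdT : d ∈ T := by
    rcases (mem_cut_iff (h.isWalk.2.2.inc_of_mem_darts hd).1).1 hg with ⟨rfl, -⟩ | ⟨rfl, -⟩
    exacts [(h.tail_notMem _ _ _ hd hs).elim, hs]
  have hv : v ∉ T := by
    cases l with
    | nil => simp at hd
    | cons a l => exact h.tail_notMem v a.1 a.2 (by simp)
  have hb : b ∈ heads m := hm.end_mem.resolve_left fun hbv => hv (hbv ▸ h.right_mem)
  obtain ⟨c', g', hd'⟩ := (mem_heads_iff v).1 hb
  have hlast := (h.getLast?_of_mem hd hdT).symm.trans (h.getLast?_of_mem (hsub _ hd') h.right_mem)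
  cases hlast
  exact edge_mem_of_mem_darts hd'

theorem IsTTrail.exists_tPath (h : IsTTrail G.inc T t e v l b) :
    ∃ p : G.TPath T, (∀ g ∈ p.walk.edges, g ∈ edges ((e, v) :: l)) ∧
      ∀ s ∈ T, ∀ g ∈ cut G.inc {s}, g ∈ edges ((e, v) :: l) → g ∈ p.walk.edges := by
  obtain ⟨m, hm, hn, hsub⟩ := h.exists_path
  obtain ⟨w, hsupp, hedges⟩ := hm.isWalk.exists_walk
  refine ⟨⟨t, b, w, h.left_mem, h.right_mem, h.ne, hsupp ▸ hn, fun z hz hzT => ?_⟩,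
    fun g hg => ?_, fun s hs g hg hgl => ?_⟩
  · rw [hsupp, List.mem_cons] at hz
    refine hz.imp_right fun hz => ?_
    rcases hm.isWalk.exists_dart_of_mem_heads hz with hb | ⟨g, y, hd⟩
    · exact hb
    · rcases List.mem_cons.1 hd with hd | hd
      · cases hd
        exact ((List.nodup_cons.1 hn).1 hz).elim
      · exact (hm.tail_notMem z g y hd hzT).elim
  · rw [hedges, edges_cons, List.mem_cons] at hg
    refine List.mem_cons.2 (hg.imp_right fun hg => ?_)
    obtain ⟨c, d, hd⟩ := (mem_edges_iff v).1 hg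
    exact edge_mem_of_mem_darts (hsub _ hd)
  · rw [hedges]
    refine List.mem_cons.2 ((List.mem_cons.1 hgl).imp_right fun hgl => ?_)
    exact h.mem_edges_of_darts_subset hm.isWalk.2.2 hsub hs hg hgl

theorem IsCoverable.exists_tPathDisjoint (h : IsCoverable G.inc T) :
    ∃ P : Set (G.TPath T), G.TPathDisjoint P ∧
      ∀ t ∈ T, ∀ e ∈ G.inci t, ∃ p ∈ P, e ∈ p.walk.edges := by
  obtain ⟨Q, hQ, hcov⟩ := h
  have hpath : ∀ F : Q, ∃ p : G.TPath T, (∀ g ∈ p.walk.edges, g ∈ F.1) ∧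
      ∀ s ∈ T, ∀ g ∈ cut G.inc {s}, g ∈ F.1 → g ∈ p.walk.edges := by
    rintro ⟨F, hF⟩
    obtain ⟨t, e, v, l, b, hl, rfl⟩ := hQ.isTTrail F hF
    exact hl.exists_tPath
  choose f hsub hend using hpath
  refine ⟨Set.range f, ?_, fun t ht e he => ?_⟩
  · rintro _ ⟨F, rfl⟩ _ ⟨F', rfl⟩ hne e he he'
    refine hne (congrArg f (Subtype.ext ?_))
    exact hQ.pairwiseDisjoint.elim_set F.2 F'.2 e (hsub F e he) (hsub F' e he')
  · rw [inci_eq_cut] at he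
    obtain ⟨F, hF, heF⟩ := hcov t ht he
    exact ⟨f ⟨F, hF⟩, ⟨_, rfl⟩, hend ⟨F, hF⟩ t ht e he heF⟩

end Multigraph

end LovaszCherkassky

/-- If `d(t) ≤ 1` for all but countably many `t ∈ T`, no `X ⊆ V ∖ T` has odd
finite cut, and for each `t ∈ T` some system of pairwise edge-disjoint
`T`-paths covers `δ(t)`, then a single system of pairwise edge-disjoint
`T`-paths covers `⋃_{t ∈ T} δ(t)`. -/
theorem lovasz_cherkassky_linked' {V : Type u} {E : Type v}
    (G : Multigraph V E) (T : Set V)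
    (hcount : {t ∈ T | ¬ (G.inci t).Subsingleton}.Countable)
    (hEul : ∀ X : Set V, X ⊆ Tᶜ → ¬ ((G.cut X).Finite ∧ Odd (G.cut X).ncard))
    (hlink : ∀ t ∈ T, ∃ Pt : Set (G.TPath T), G.TPathDisjoint Pt ∧
      ∀ e ∈ G.inci t, ∃ p ∈ Pt, e ∈ p.walk.edges) :
    ∃ P : Set (G.TPath T), G.TPathDisjoint P ∧
      ∀ t ∈ T, ∀ e ∈ G.inci t, ∃ p ∈ P, e ∈ p.walk.edges := by
  have hodd : LovaszCherkassky.HasNoOddCut G.inc T := fun X hXT hfin =>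
    Nat.not_odd_iff_even.1 fun hX => hEul X (fun x hx hxT => hXT x hxT hx) ⟨hfin, hX⟩
  have hl : ∀ t ∈ T, LovaszCherkassky.Linked G.inc T t := fun t ht =>
    let ⟨_, hdisj, hcov⟩ := hlink t ht
    LovaszCherkassky.linked_of_tPathDisjoint ht hdisj hcov
  simp only [LovaszCherkassky.inci_eq_cut] at hcount
  exact (LovaszCherkassky.isCoverable_of_linked hodd hl hcount).exists_tPathDisjoint
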